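/- arXiv:2512.23668 — 5 statements merged into one kernel-verified Lean document; each statement's English description precedes it below -/
import Mathlib

section
/- For positive integers a, b, c, the multiple zeta value identity ζ({2}^{a-1},3,{2}^{c-1},1,{2}^b) = ζ({2}^{a+b+c}) + ζ({2}^{a-1},3,{2}^{b-1},3,{2}^{c-1}) + ζ({2}^{b-1},3,{2}^{a-1},3,{2}^{c-1}) holds. -/
/-- The multiple zeta value `ζ(k₁,…,k_r) = ∑_{0<n₁<⋯<n_r} 1/(n₁^{k₁}⋯n_r^{k_r})`,
expressed as a `tsum` over tuples of positive, strictly increasing integers. -/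
noncomputable def mzv (ks : List ℕ) : ℝ :=
  ∑' n : Fin ks.length → ℕ,
    if (∀ i j : Fin ks.length, i < j → n i < n j) ∧ (∀ i, 0 < n i) then
      ∏ i, (1 : ℝ) / (n i : ℝ) ^ ks.get i
    else 0

/-! The argument runs on a connected sum. Write `T z m = ∑_{n > m} n⁻² z n`, and for `p` and `q`
join the two indices through
`K p z q = ∑_n n⁻² · p q C(n, p + q) / (C(n - 1, p) C(n - 1, q)) · z n`.
The weight has closed-form antidifferences both in `n` and in `q`, and these give the transport
relation `T (K p z) q = K p (T z) q` for `q > 0`, together with the boundary value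
`T (K p z) 0 = T z p`. Hence a block `{2}^b` summed from `0` against `K p z` is the same block
summed from `p`, and the inner sum `{2}^(c-1), 1, {2}^b` above an index `p` becomes
`∑ q⁻¹ K p ({2}^(c-1)) q`, with `q` the last index of a block `{2}^b` starting at `0`. The left-hand
side is therefore a double sum of `p⁻¹ q⁻¹ K p z q`, symmetric in its two blocks, and a partial
fraction identity for `p⁻¹ q⁻¹` times the weight splits it into the three values on the right. -/

open scoped ENNReal NNReal Topology
open Filter

/-! ### The connector -/

/-- The connector `p! q! (N - p)! (N - q)! / ((p + q)! N! (N - p - q)!)` in terms of binomial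
coefficients; it is `0` for `N < p + q`, where the numerator vanishes. -/
noncomputable def connector (p q N : ℕ) : ℝ≥0 :=
  N.choose (p + q) / (N.choose p * N.choose q)

/-- The numerator of the differences of `connector`: divided by `n ^ 2` it is the difference of
`connector p q` between `n - 1` and `n`, and divided by `q ^ 2` it is the difference of
`connector p · (n - 1)` between `q - 1` and `q`. Used for `0 < n` only, so that `n - 1` is not
truncated; it is `0` for `n < p + q`. -/
noncomputable def connectorDiff (p q n : ℕ) : ℝ≥0 :=
  p * q * n.choose (p + q) / ((n - 1).choose p * (n - 1).choose q)

/-- The limit `p! q! / (p + q)!` of `connector p q N` as `N → ∞`. -/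
noncomputable def connectorLimit (p q : ℕ) : ℝ≥0 :=
  ((p + q).choose p : ℝ≥0)⁻¹

variable {p q N : ℕ}

lemma connector_eq_zero_of_lt (h : N < p + q) : connector p q N = 0 := by
  simp [connector, Nat.choose_eq_zero_of_lt h]

lemma connectorDiff_eq_zero_of_lt (h : N < p + q) : connectorDiff p q N = 0 := by
  simp [connectorDiff, Nat.choose_eq_zero_of_lt h]

lemma connector_zero_right (p N : ℕ) : connector p 0 N = if p ≤ N then 1 else 0 := by
  split_ifs with h
  · have := (Nat.choose_pos h).ne'
    simp [connector, this]
  · exact connector_eq_zero_of_lt (by omega)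

lemma connectorDiff_comm (p q n : ℕ) : connectorDiff p q n = connectorDiff q p n := by
  simp only [connectorDiff, add_comm q p]
  ring

lemma cast_choose_mul_add_one {k : ℕ} (h : N + 1 = p + k) :
    (N.choose p : ℝ≥0) * (N + 1) = (N + 1).choose p * k := by
  have := Nat.choose_mul_succ_eq N p
  rw [show N + 1 - p = k by omega] at this
  exact_mod_cast this

lemma mul_connector_eq_mul_connectorDiff_add_one {k : ℕ} (hp : 0 < p) (hq : 0 < q)
    (hN : N + 1 = p + q + k) :
    p * q * (N + 1) * connector p q N = k * connectorDiff p q (N + 1) := by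
  have hpN : (N.choose p : ℝ≥0) ≠ 0 := mod_cast (Nat.choose_pos (by omega)).ne'
  have hqN : (N.choose q : ℝ≥0) ≠ 0 := mod_cast (Nat.choose_pos (by omega)).ne'
  have h := cast_choose_mul_add_one hN
  rw [connector, connectorDiff, Nat.add_sub_cancel]
  field_simp
  linear_combination h

lemma mul_connector_add_one_eq_mul_connectorDiff_add_one {k : ℕ} (hp : 0 < p) (hq : 0 < q)
    (hN : N + 1 = p + q + k) :
    p * q * (N + 1) ^ 2 * connector p q (N + 1) =
      (p + k) * (q + k) * connectorDiff p q (N + 1) := by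
  have hpN : (N.choose p : ℝ≥0) ≠ 0 := mod_cast (Nat.choose_pos (by omega)).ne'
  have hqN : (N.choose q : ℝ≥0) ≠ 0 := mod_cast (Nat.choose_pos (by omega)).ne'
  have hpN' : ((N + 1).choose p : ℝ≥0) ≠ 0 := mod_cast (Nat.choose_pos (by omega)).ne'
  have hqN' : ((N + 1).choose q : ℝ≥0) ≠ 0 := mod_cast (Nat.choose_pos (by omega)).ne'
  have h₁ := cast_choose_mul_add_one (p := p) (k := q + k) (N := N) (by omega)
  have h₂ := cast_choose_mul_add_one (p := q) (k := p + k) (N := N) (by omega)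
  rw [connector, connectorDiff, Nat.add_sub_cancel]
  push_cast at h₁ h₂
  field_simp
  calc _ = (N + 1).choose (p + q) *
          ((N.choose p * (N + 1) : ℝ≥0) * (N.choose q * (N + 1))) := by ring
    _ = _ := by rw [h₁, h₂]; ring

lemma mul_connector_eq_mul_connectorDiff_add_one_add_one {k : ℕ} (hp : 0 < p) (hN : N = p + q + k) :
    p * (q + 1) ^ 2 * (N + 1) * connector p q N =
      (p + q + 1) * (p + k) * connectorDiff p (q + 1) (N + 1) := by
  have hpN : (N.choose p : ℝ≥0) ≠ 0 := mod_cast (Nat.choose_pos (by omega)).ne'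
  have hqN : (N.choose q : ℝ≥0) ≠ 0 := mod_cast (Nat.choose_pos (by omega)).ne'
  have hqN' : (N.choose (q + 1) : ℝ≥0) ≠ 0 := mod_cast (Nat.choose_pos (by omega)).ne'
  have h₁ : (N.choose (q + 1) : ℝ≥0) * (q + 1) = N.choose q * (p + k) := by
    have h := Nat.choose_succ_right_eq N q
    rw [show N - q = p + k by omega] at h
    exact_mod_cast h
  have h₂ : (N + 1 : ℝ≥0) * N.choose (p + q) = (N + 1).choose (p + q + 1) * (p + q + 1) :=
    mod_cast Nat.add_one_mul_choose_eq N (p + q)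
  rw [connector, connectorDiff, Nat.add_sub_cancel, ← add_assoc p q 1]
  push_cast
  field_simp
  calc _ = ((N + 1) * N.choose (p + q) : ℝ≥0) * (N.choose (q + 1) * (q + 1)) := by ring
    _ = _ := by rw [h₁, h₂]; ring

lemma connector_add_connectorDiff (hp : 0 < p) (hq : 0 < q) (N : ℕ) :
    connector p q N + (N + 1 : ℝ≥0)⁻¹ ^ 2 * connectorDiff p q (N + 1) =
      connector p q (N + 1) := by
  rcases lt_or_ge (N + 1) (p + q) with h | h
  · simp [connector_eq_zero_of_lt h, connector_eq_zero_of_lt (N.lt_succ_self.trans h),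
      connectorDiff_eq_zero_of_lt h]
  obtain ⟨k, hk⟩ := Nat.exists_eq_add_of_le h
  have h₁ := mul_connector_eq_mul_connectorDiff_add_one hp hq hk
  have h₂ := mul_connector_add_one_eq_mul_connectorDiff_add_one hp hq hk
  have hN : (N + 1 : ℝ≥0) = p + q + k := mod_cast hk
  refine mul_left_cancel₀ (show p * q * (N + 1 : ℝ≥0) ^ 2 ≠ 0 by positivity) ?_
  rw [h₂]
  calc _ = (N + 1) * (p * q * (N + 1) * connector p q N) + p * q * connectorDiff p q (N + 1) := by
        field_simp
    _ = _ := by rw [h₁, hN]; ring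

lemma connectorDiff_add_connector_add_one (hp : 0 < p) (q N : ℕ) :
    (q + 1 : ℝ≥0)⁻¹ ^ 2 * connectorDiff p (q + 1) (N + 1) + connector p (q + 1) N =
      connector p q N := by
  rcases lt_or_ge N (p + q) with h | h
  · rw [connector_eq_zero_of_lt h, connector_eq_zero_of_lt (by omega),
      connectorDiff_eq_zero_of_lt (by omega), mul_zero, add_zero]
  obtain ⟨k, hk⟩ := Nat.exists_eq_add_of_le h
  have h₁ := mul_connector_eq_mul_connectorDiff_add_one hp q.succ_pos
    (show N + 1 = p + (q + 1) + k by omega)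
  have h₂ := mul_connector_eq_mul_connectorDiff_add_one_add_one hp hk
  have hN : (N : ℝ≥0) = p + q + k := mod_cast hk
  push_cast at h₁
  refine mul_left_cancel₀ (show p * (q + 1) ^ 2 * (N + 1 : ℝ≥0) ≠ 0 by positivity) ?_
  rw [h₂]
  calc _ = (q + 1) * (p * (q + 1) * (N + 1) * connector p (q + 1) N) +
          p * (N + 1) * connectorDiff p (q + 1) (N + 1) := by
        field_simp; ring
    _ = _ := by rw [h₁, hN]; ring

open Asymptotics in
lemma tendsto_connector (p q : ℕ) :
    Tendsto (connector p q) atTop (𝓝 (connectorLimit p q)) := by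
  rw [← NNReal.tendsto_coe]
  have h : (fun N ↦ (connector p q N : ℝ)) ~[atTop] fun N : ℕ ↦
      ((N : ℝ) ^ (p + q) / (p + q).factorial) /
        ((N : ℝ) ^ p / p.factorial * ((N : ℝ) ^ q / q.factorial)) := by
    simp only [connector]
    push_cast
    exact (isEquivalent_choose _).div ((isEquivalent_choose p).mul (isEquivalent_choose q))
  refine h.symm.tendsto_nhds (tendsto_const_nhds.congr' ?_)
  filter_upwards [eventually_gt_atTop 0] with N hN
  rw [connectorLimit, NNReal.coe_inv, NNReal.coe_natCast, Nat.cast_add_choose, pow_add]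
  field_simp

lemma inv_mul_inv_mul_connectorDiff (hp : 0 < p) (hq : 0 < q) (N : ℕ) :
    (p : ℝ≥0)⁻¹ * (q : ℝ≥0)⁻¹ * connectorDiff p q (N + 1) =
      ((p : ℝ≥0)⁻¹ + (q : ℝ≥0)⁻¹) * (N + 1 : ℝ≥0)⁻¹ * connectorDiff p q (N + 1) +
        connector p q N := by
  rcases lt_or_ge (N + 1) (p + q) with h | h
  · simp [connector_eq_zero_of_lt (N.lt_succ_self.trans h), connectorDiff_eq_zero_of_lt h]
  obtain ⟨k, hk⟩ := Nat.exists_eq_add_of_le h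
  have hN : (N + 1 : ℝ≥0) = p + q + k := mod_cast hk
  refine mul_left_cancel₀ (show p * q * (N + 1 : ℝ≥0) ≠ 0 by positivity) ?_
  rw [mul_add _ _ (connector p q N), mul_connector_eq_mul_connectorDiff_add_one hp hq hk]
  field_simp
  rw [hN]
  ring

lemma connectorLimit_add (p q : ℕ) (hq : 0 < q) :
    (p + 1 : ℝ≥0)⁻¹ * connectorLimit (p + 1) q + (q : ℝ≥0)⁻¹ * connectorLimit (p + 1) q =
      (q : ℝ≥0)⁻¹ * connectorLimit p q := by
  have h₀ : ((p + q).choose p : ℝ≥0) ≠ 0 := mod_cast (Nat.choose_pos (by omega)).ne'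
  have h : (p + q + 1 : ℝ≥0) * (p + q).choose p = (p + 1 + q).choose (p + 1) * (p + 1) := by
    rw [Nat.add_right_comm p 1 q]
    exact_mod_cast Nat.add_one_mul_choose_eq (p + q) p
  have h₁ : ((p + 1 + q).choose (p + 1) : ℝ≥0) ≠ 0 := mod_cast (Nat.choose_pos (by omega)).ne'
  unfold connectorLimit
  field_simp
  linear_combination h

lemma tendsto_connectorLimit_zero (hq : 0 < q) :
    Tendsto (fun p ↦ connectorLimit p q) atTop (𝓝 0) := by
  refine (tendsto_natCast_atTop_atTop.comp ?_).inv_tendsto_atTop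
  refine tendsto_atTop_mono (fun p ↦ ?_) tendsto_id
  calc p ≤ (p + 1).choose p := by simp
    _ ≤ (p + q).choose p := Nat.choose_le_choose p (by omega)

/-! ### Nested sums -/

/-- The operator `z ↦ (m ↦ ∑_{n > m} n⁻ᵏ z n)`, which prepends one exponent to a nested sum.
Values in `ℝ≥0∞` make every rearrangement unconditional. -/
noncomputable def tailSum (k : ℕ) (z : ℕ → ℝ≥0∞) (m : ℕ) : ℝ≥0∞ :=
  ∑' n : Set.Ioi m, (n : ℝ≥0∞)⁻¹ ^ k * z n

/-- The nested sum over `m < n₁ < ⋯ < n_r` of `n₁^(-k₁) ⋯ n_r^(-k_r) z n_r`, where `ks` lists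
`k₁, …, k_r`. With `z = 1` and `m = 0` it is the multiple zeta value of `ks`. -/
noncomputable def iteratedTailSum (ks : List ℕ) (z : ℕ → ℝ≥0∞) : ℕ → ℝ≥0∞ :=
  ks.foldr tailSum z

lemma tailSum_congr {z z' : ℕ → ℝ≥0∞} {m : ℕ} (k : ℕ) (h : ∀ n, m < n → z n = z' n) :
    tailSum k z m = tailSum k z' m :=
  tsum_congr fun n ↦ by rw [h n n.2]

lemma tailSum_add (k : ℕ) (z z' : ℕ → ℝ≥0∞) (m : ℕ) :
    tailSum k (fun n ↦ z n + z' n) m = tailSum k z m + tailSum k z' m := by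
  simp only [tailSum, mul_add, ENNReal.tsum_add]

lemma tailSum_antitone (k : ℕ) (z : ℕ → ℝ≥0∞) : Antitone (tailSum k z) := fun _ _ h ↦
  ENNReal.tsum_mono_subtype (fun n : ℕ ↦ (n : ℝ≥0∞)⁻¹ ^ k * z n) (Set.Ioi_subset_Ioi h)

lemma tailSum_const_mul (k : ℕ) (c : ℝ≥0∞) (z : ℕ → ℝ≥0∞) (m : ℕ) :
    tailSum k (fun n ↦ c * z n) m = c * tailSum k z m := by
  simp only [tailSum, mul_left_comm _ c, ENNReal.tsum_mul_left]

lemma tailSum_mul_const (k : ℕ) (c : ℝ≥0∞) (z : ℕ → ℝ≥0∞) (m : ℕ) :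
    tailSum k (fun n ↦ z n * c) m = tailSum k z m * c := by
  simp only [mul_comm _ c, tailSum_const_mul]

lemma tailSum_succ (k : ℕ) (z : ℕ → ℝ≥0∞) :
    tailSum (k + 1) z = tailSum k fun n ↦ (n : ℝ≥0∞)⁻¹ * z n := by
  ext m
  simp only [tailSum, pow_succ, mul_assoc]

lemma tailSum_comm (k l : ℕ) (h : ℕ → ℕ → ℝ≥0∞) (m m' : ℕ) :
    tailSum k (fun p ↦ tailSum l (h p) m') m = tailSum l (fun q ↦ tailSum k (h · q) m) m' := by
  simp only [tailSum, ← ENNReal.tsum_mul_left]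
  rw [ENNReal.tsum_comm]
  simp only [mul_left_comm]

lemma tailSum_eq_tsum_ite (k : ℕ) (z : ℕ → ℝ≥0∞) (m : ℕ) :
    tailSum k z m = ∑' n : ℕ, if m < n then (n : ℝ≥0∞)⁻¹ ^ k * z n else 0 := by
  rw [tailSum, tsum_subtype (Set.Ioi m) fun n ↦ (n : ℝ≥0∞)⁻¹ ^ k * z n]
  simp only [Set.indicator_apply, Set.mem_Ioi]

lemma tailSum_eq_tsum_nat_add (k : ℕ) (z : ℕ → ℝ≥0∞) (m : ℕ) :
    tailSum k z m = ∑' i : ℕ, ((m + 1 + i : ℕ) : ℝ≥0∞)⁻¹ ^ k * z (m + 1 + i) := by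
  rw [tailSum_eq_tsum_ite, ← ENNReal.summable.sum_add_tsum_nat_add' (k := m + 1),
    Finset.sum_eq_zero fun n hn ↦ if_neg (by simpa [Nat.lt_succ_iff] using hn), zero_add]
  exact tsum_congr fun i ↦ by rw [if_pos (by omega), add_comm i]

lemma tailSum_mul_tailSum (k l m : ℕ) (f z : ℕ → ℝ≥0∞) :
    tailSum k (fun i ↦ f i * tailSum l z i) m =
      tailSum l (fun n ↦ (∑ i ∈ Finset.Ico (m + 1) n, (i : ℝ≥0∞)⁻¹ ^ k * f i) * z n) m := by
  have ite_mem (i n : ℕ) :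
      (if m < i then if i < n then (i : ℝ≥0∞)⁻¹ ^ k * (f i * ((n : ℝ≥0∞)⁻¹ ^ l * z n)) else 0
        else 0) =
      if m < n then if i ∈ Finset.Ico (m + 1) n then
        (n : ℝ≥0∞)⁻¹ ^ l * ((i : ℝ≥0∞)⁻¹ ^ k * f i * z n) else 0 else 0 := by
    simp only [Finset.mem_Ico]
    split_ifs <;> first | omega | ring
  calc tailSum k (fun i ↦ f i * tailSum l z i) m
      = ∑' i, ∑' n, if m < i then if i < n then
          (i : ℝ≥0∞)⁻¹ ^ k * (f i * ((n : ℝ≥0∞)⁻¹ ^ l * z n)) else 0 else 0 := by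
        simp only [tailSum_eq_tsum_ite, ← ENNReal.tsum_mul_left, mul_ite, mul_zero]
        exact tsum_congr fun i ↦ by split_ifs <;> simp
    _ = ∑' n, ∑' i, if m < n then if i ∈ Finset.Ico (m + 1) n then
          (n : ℝ≥0∞)⁻¹ ^ l * ((i : ℝ≥0∞)⁻¹ ^ k * f i * z n) else 0 else 0 := by
        simp only [ite_mem]
        exact ENNReal.tsum_comm
    _ = _ := by
        rw [tailSum_eq_tsum_ite]
        refine tsum_congr fun n ↦ ?_
        split_ifs
        · rw [Finset.sum_mul, Finset.mul_sum, tsum_eq_sum fun i hi ↦ if_neg hi]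
          exact Finset.sum_congr rfl fun i hi ↦ if_pos hi
        · exact tsum_zero

lemma tailSum_eq_of_tendsto {k m : ℕ} {f : ℕ → ℝ≥0∞} {L : ℝ≥0∞}
    (h : Tendsto (fun N ↦ ∑ i ∈ Finset.Ico (m + 1) (m + 1 + N), (i : ℝ≥0∞)⁻¹ ^ k * f i)
      atTop (𝓝 L)) : tailSum k f m = L := by
  rw [tailSum_eq_tsum_nat_add]
  refine tendsto_nhds_unique (ENNReal.tendsto_nat_tsum _) (h.congr fun N ↦ ?_)
  rw [Finset.sum_Ico_eq_sum_range, Nat.add_sub_cancel_left]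

lemma tailSum_eq_of_telescoping {k : ℕ} {f g : ℕ → ℝ≥0∞}
    (h : ∀ n : ℕ, (n + 1 : ℝ≥0∞)⁻¹ ^ k * f (n + 1) + g (n + 1) = g n)
    (hg : Tendsto g atTop (𝓝 0)) (m : ℕ) : tailSum k f m = g m := by
  have partial_sum (N : ℕ) :
      (∑ i ∈ Finset.range N, ((m + 1 + i : ℕ) : ℝ≥0∞)⁻¹ ^ k * f (m + 1 + i)) + g (N + m) = g m := by
    induction N with
    | zero => simp
    | succ N ih =>
      rw [Finset.sum_range_succ, add_assoc, ← ih, ← h (N + m),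
        show m + 1 + N = N + m + 1 by omega, show N + 1 + m = N + m + 1 by omega]
      push_cast
      rfl
  have tendsto_partial_sum := (ENNReal.tendsto_nat_tsum fun i ↦
    ((m + 1 + i : ℕ) : ℝ≥0∞)⁻¹ ^ k * f (m + 1 + i)).add ((tendsto_add_atTop_iff_nat m).2 hg)
  simp only [partial_sum, add_zero] at tendsto_partial_sum
  rw [tailSum_eq_tsum_nat_add]
  exact tendsto_nhds_unique tendsto_partial_sum tendsto_const_nhds

lemma iteratedTailSum_nil (z : ℕ → ℝ≥0∞) : iteratedTailSum [] z = z := rfl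

lemma iteratedTailSum_cons (k : ℕ) (ks : List ℕ) (z : ℕ → ℝ≥0∞) :
    iteratedTailSum (k :: ks) z = tailSum k (iteratedTailSum ks z) := rfl

lemma iteratedTailSum_append (ks ls : List ℕ) (z : ℕ → ℝ≥0∞) :
    iteratedTailSum (ks ++ ls) z = iteratedTailSum ks (iteratedTailSum ls z) :=
  List.foldr_append

lemma iteratedTailSum_congr {z z' : ℕ → ℝ≥0∞} {m : ℕ} {ks : List ℕ} (hks : ks ≠ [])
    (h : ∀ n, m < n → z n = z' n) : iteratedTailSum ks z m = iteratedTailSum ks z' m := by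
  induction ks generalizing m with
  | nil => contradiction
  | cons k ks ih =>
    refine tailSum_congr k fun n hn ↦ ?_
    rcases eq_or_ne ks [] with rfl | hks
    · exact h n hn
    · exact ih hks fun i hi ↦ h i (hn.trans hi)

lemma iteratedTailSum_add (ks : List ℕ) (z z' : ℕ → ℝ≥0∞) (m : ℕ) :
    iteratedTailSum ks (fun n ↦ z n + z' n) m =
      iteratedTailSum ks z m + iteratedTailSum ks z' m := by
  induction ks generalizing m with
  | nil => rfl
  | cons k ks ih => simp only [iteratedTailSum_cons, ← tailSum_add, funext ih]

lemma iteratedTailSum_const_mul (ks : List ℕ) (c : ℝ≥0∞) (z : ℕ → ℝ≥0∞) (m : ℕ) :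
    iteratedTailSum ks (fun n ↦ c * z n) m = c * iteratedTailSum ks z m := by
  induction ks generalizing m with
  | nil => rfl
  | cons k ks ih => simp only [iteratedTailSum_cons, ← tailSum_const_mul, funext ih]

lemma tailSum_iteratedTailSum_comm (k : ℕ) (ls : List ℕ) (h : ℕ → ℕ → ℝ≥0∞) (m m' : ℕ) :
    tailSum k (fun p ↦ iteratedTailSum ls (h p) m') m =
      iteratedTailSum ls (fun q ↦ tailSum k (h · q) m) m' := by
  induction ls generalizing m' with
  | nil => rfl
  | cons l ls ih => simp only [iteratedTailSum_cons, tailSum_comm k l, ih]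

lemma iteratedTailSum_comm (ks ls : List ℕ) (h : ℕ → ℕ → ℝ≥0∞) (m m' : ℕ) :
    iteratedTailSum ks (fun p ↦ iteratedTailSum ls (h p) m') m =
      iteratedTailSum ls (fun q ↦ iteratedTailSum ks (h · q) m) m' := by
  induction ks generalizing m with
  | nil => rfl
  | cons k ks ih => simp only [iteratedTailSum_cons, ← tailSum_iteratedTailSum_comm, funext ih]

lemma tailSum_one_ne_top {k : ℕ} (hk : 2 ≤ k) (m : ℕ) : tailSum k 1 m ≠ ⊤ := by
  have summable_inv_pow : Summable fun i : ℕ ↦ ((m + 1 + i : ℕ) : ℝ≥0)⁻¹ ^ k := by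
    have h := (Real.summable_nat_pow_inv.2 hk).comp_injective (add_right_injective (m + 1))
    rw [← NNReal.summable_coe]
    simpa [Function.comp_def] using h
  convert ENNReal.tsum_coe_ne_top_iff_summable.2 summable_inv_pow
  rw [tailSum_eq_tsum_nat_add]
  refine tsum_congr fun i ↦ ?_
  rw [ENNReal.coe_pow, ENNReal.coe_inv (by positivity)]
  simp

lemma iteratedTailSum_one_antitone (ks : List ℕ) : Antitone (iteratedTailSum ks 1) := by
  cases ks with
  | nil => exact antitone_const
  | cons k ks => exact tailSum_antitone k _

lemma iteratedTailSum_one_ne_top {ks : List ℕ} (hks : ∀ k ∈ ks, 2 ≤ k) (m : ℕ) :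
    iteratedTailSum ks 1 m ≠ ⊤ := by
  induction ks generalizing m with
  | nil => exact ENNReal.one_ne_top
  | cons k ks ih =>
    rw [List.forall_mem_cons] at hks
    refine ne_top_of_le_ne_top (ENNReal.mul_ne_top (ih hks.2 0) (tailSum_one_ne_top hks.1 m)) ?_
    rw [← tailSum_const_mul]
    refine ENNReal.tsum_le_tsum fun n ↦ ?_
    simp only [Pi.one_apply, mul_one]
    gcongr
    exact iteratedTailSum_one_antitone ks (Nat.zero_le _)

/-! ### Multiple zeta values as nested sums -/

lemma cons_increasing_iff {α : Type*} [Preorder α] {r : ℕ} (m a : α) (n : Fin r → α) :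
    ((∀ i j : Fin (r + 1), i < j →
        (Fin.cons a n : Fin (r + 1) → α) i < (Fin.cons a n : Fin (r + 1) → α) j) ∧
        ∀ i, m < (Fin.cons a n : Fin (r + 1) → α) i) ↔
      m < a ∧ (∀ i j, i < j → n i < n j) ∧ ∀ i, a < n i := by
  simp only [Fin.forall_fin_succ, Fin.cons_zero, Fin.cons_succ, Fin.succ_lt_succ_iff, Fin.succ_pos,
    Fin.not_lt_zero, false_implies, true_implies, true_and]
  exact ⟨fun ⟨⟨h₁, h₂⟩, h₃, _⟩ ↦ ⟨h₃, h₂, h₁⟩,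
    fun ⟨h₃, h₂, h₁⟩ ↦ ⟨⟨h₁, h₂⟩, h₃, fun i ↦ h₃.trans (h₁ i)⟩⟩

lemma tsum_increasing_eq_iteratedTailSum (ks : List ℕ) (m : ℕ) :
    (∑' n : Fin ks.length → ℕ,
      if (∀ i j : Fin ks.length, i < j → n i < n j) ∧ ∀ i, m < n i then
        ∏ i, (n i : ℝ≥0∞)⁻¹ ^ ks.get i else 0) = iteratedTailSum ks 1 m := by
  induction ks generalizing m with
  | nil => simp [iteratedTailSum_nil]
  | cons k ks ih =>
    rw [iteratedTailSum_cons, tailSum_eq_tsum_ite]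
    refine ((Fin.consEquiv fun _ : Fin (ks.length + 1) ↦ ℕ).tsum_eq _).symm.trans ?_
    rw [ENNReal.tsum_prod']
    refine tsum_congr fun a ↦ ?_
    simp only [Fin.consEquiv_apply, List.length_cons, cons_increasing_iff, ite_and (m < a)]
    split_ifs
    · rw [← ih a, ← ENNReal.tsum_mul_left]
      refine tsum_congr fun n ↦ ?_
      rw [mul_ite, mul_zero, Fin.prod_univ_succ]
      rfl
    · exact tsum_zero

lemma mzv_eq_toReal_iteratedTailSum (ks : List ℕ) :
    mzv ks = (iteratedTailSum ks 1 0).toReal := by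
  rw [← tsum_increasing_eq_iteratedTailSum, ENNReal.tsum_toReal_eq, mzv]
  · refine tsum_congr fun n ↦ ?_
    split_ifs <;> simp
  · intro n
    split_ifs with h
    · exact ENNReal.prod_ne_top fun i _ ↦
        ENNReal.pow_ne_top (ENNReal.inv_ne_top.2 (mod_cast (h.2 i).ne'))
    · exact ENNReal.zero_ne_top

/-! ### Connected sums -/

/-- The sum of `z` over `n`, joined to the indices `p` and `q` through `connectorDiff p q`. -/
noncomputable def connectedSum (p : ℕ) (z : ℕ → ℝ≥0∞) (q : ℕ) : ℝ≥0∞ :=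
  tailSum 2 (fun n ↦ connectorDiff p q n * z n) 0

lemma connectedSum_comm (p q : ℕ) (z : ℕ → ℝ≥0∞) :
    connectedSum p z q = connectedSum q z p := by
  simp only [connectedSum, connectorDiff_comm p q]

lemma tailSum_connectorDiff_eq_connector (hp : 0 < p) (q N : ℕ) :
    tailSum 2 (fun i ↦ (connectorDiff p i (N + 1) : ℝ≥0∞)) q = connector p q N := by
  refine tailSum_eq_of_telescoping (g := fun q ↦ (connector p q N : ℝ≥0∞)) (fun i ↦ ?_) ?_ q
  · rw [← connectorDiff_add_connector_add_one hp i N]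
    simp [ENNReal.inv_pow]
  · refine tendsto_const_nhds.congr' ?_
    filter_upwards [eventually_gt_atTop N] with i hi
    rw [connector_eq_zero_of_lt (by omega), ENNReal.coe_zero]

lemma sum_connectorDiff_eq_connector (hp : 0 < p) (hq : 0 < q) (N : ℕ) :
    ∑ i ∈ Finset.Ico 1 (N + 1), (i : ℝ≥0∞)⁻¹ ^ 2 * (connectorDiff p q i : ℝ≥0∞) =
      connector p q N := by
  induction N with
  | zero => simp [connector_eq_zero_of_lt (Nat.add_pos_left hp q)]
  | succ N ih =>
    rw [Finset.sum_Ico_succ_top (by omega), ih, ← connector_add_connectorDiff hp hq N]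
    simp [ENNReal.inv_pow]

lemma tailSum_connectorDiff_eq_connectorLimit (hp : 0 < p) (hq : 0 < q) :
    tailSum 2 (fun n ↦ (connectorDiff p q n : ℝ≥0∞)) 0 = connectorLimit p q := by
  refine tailSum_eq_of_tendsto ((ENNReal.tendsto_coe.2 (tendsto_connector p q)).congr fun N ↦ ?_)
  rw [← sum_connectorDiff_eq_connector hp hq, zero_add, add_comm N]

lemma tailSum_connectedSum (hp : 0 < p) (z : ℕ → ℝ≥0∞) (q : ℕ) :
    tailSum 2 (connectedSum p z) q = tailSum 2 (fun n ↦ connector p q (n - 1) * z n) 0 := by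
  unfold connectedSum
  rw [tailSum_comm]
  refine tailSum_congr 2 fun n hn ↦ ?_
  obtain ⟨N, rfl⟩ := Nat.exists_eq_add_one.2 hn
  rw [tailSum_mul_const, tailSum_connectorDiff_eq_connector hp, Nat.add_sub_cancel]

lemma connectedSum_tailSum (hp : 0 < p) (hq : 0 < q) (z : ℕ → ℝ≥0∞) :
    connectedSum p (tailSum 2 z) q = tailSum 2 (fun n ↦ connector p q (n - 1) * z n) 0 := by
  rw [connectedSum, tailSum_mul_tailSum]
  refine tailSum_congr 2 fun n hn ↦ ?_
  obtain ⟨N, rfl⟩ := Nat.exists_eq_add_one.2 hn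
  rw [sum_connectorDiff_eq_connector hp hq, Nat.add_sub_cancel]

lemma tailSum_connectedSum_eq_connectedSum_tailSum (hp : 0 < p) (hq : 0 < q) (z : ℕ → ℝ≥0∞) :
    tailSum 2 (connectedSum p z) q = connectedSum p (tailSum 2 z) q := by
  rw [tailSum_connectedSum hp, connectedSum_tailSum hp hq]

lemma tailSum_connectedSum_zero (hp : 0 < p) (z : ℕ → ℝ≥0∞) :
    tailSum 2 (connectedSum p z) 0 = tailSum 2 z p := by
  rw [tailSum_connectedSum hp, tailSum_eq_tsum_ite, tailSum_eq_tsum_ite]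
  refine tsum_congr fun n ↦ ?_
  rw [connector_zero_right]
  split_ifs <;> first | omega | simp

lemma connectedSum_one (hp : 0 < p) (hq : 0 < q) :
    connectedSum p 1 q = connectorLimit p q := by
  simp only [connectedSum, Pi.one_apply, mul_one, tailSum_connectorDiff_eq_connectorLimit hp hq]

lemma tailSum_one_connectedSum_one (hp : 0 < p) (hq : 0 < q) :
    tailSum 1 (fun r ↦ connectedSum r 1 q) p = (q : ℝ≥0∞)⁻¹ * connectedSum p 1 q := by
  rw [connectedSum_one hp hq,
    tailSum_congr (z' := fun r ↦ (connectorLimit r q : ℝ≥0∞)) 1 fun r hr ↦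
      connectedSum_one (hp.trans hr) hq]
  refine tailSum_eq_of_telescoping (g := fun p ↦ (q : ℝ≥0∞)⁻¹ * connectorLimit p q)
    (fun r ↦ ?_) ?_ p
  · rw [← ENNReal.coe_natCast q, ← ENNReal.coe_inv (by positivity)]
    norm_cast
    rw [← connectorLimit_add r q hq]
    simp
  · simpa using ENNReal.Tendsto.const_mul
      (ENNReal.tendsto_coe.2 (tendsto_connectorLimit_zero hq)) (.inr (by simp [hq.ne']))

lemma inv_mul_inv_mul_connectedSum (hp : 0 < p) (hq : 0 < q) (z : ℕ → ℝ≥0∞) :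
    (p : ℝ≥0∞)⁻¹ * ((q : ℝ≥0∞)⁻¹ * connectedSum p z q) =
      connectedSum p (tailSum 2 z) q +
      (p : ℝ≥0∞)⁻¹ * connectedSum p (fun n ↦ (n : ℝ≥0∞)⁻¹ * z n) q +
      (q : ℝ≥0∞)⁻¹ * connectedSum q (fun n ↦ (n : ℝ≥0∞)⁻¹ * z n) p := by
  rw [connectedSum_tailSum hp hq, connectedSum_comm q]
  simp only [connectedSum, ← tailSum_const_mul, ← tailSum_add]
  refine tailSum_congr 2 fun n hn ↦ ?_
  obtain ⟨N, rfl⟩ := Nat.exists_eq_add_one.2 hn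
  have h : (p : ℝ≥0∞)⁻¹ * (q : ℝ≥0∞)⁻¹ * connectorDiff p q (N + 1) =
      ((p : ℝ≥0∞)⁻¹ + (q : ℝ≥0∞)⁻¹) * ((N + 1 : ℕ) : ℝ≥0∞)⁻¹ * connectorDiff p q (N + 1) +
        connector p q N := by
    simp only [← ENNReal.coe_natCast, ← ENNReal.coe_inv (Nat.cast_ne_zero.2 hp.ne'),
      ← ENNReal.coe_inv (Nat.cast_ne_zero.2 hq.ne'),
      ← ENNReal.coe_inv (Nat.cast_ne_zero.2 N.succ_ne_zero)]
    exact_mod_cast inv_mul_inv_mul_connectorDiff hp hq N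
  rw [Nat.add_sub_cancel]
  calc _ = (p : ℝ≥0∞)⁻¹ * (q : ℝ≥0∞)⁻¹ * connectorDiff p q (N + 1) * z (N + 1) := by ring
    _ = _ := by rw [h]; ring

lemma iteratedTailSum_connectedSum (hp : 0 < p) (b : ℕ) (z : ℕ → ℝ≥0∞) :
    iteratedTailSum (.replicate (b + 1) 2) (connectedSum p z) 0 =
      iteratedTailSum (.replicate (b + 1) 2) z p := by
  induction b generalizing z with
  | zero => exact tailSum_connectedSum_zero hp z
  | succ b ih =>
    rw [List.replicate_succ', iteratedTailSum_append, iteratedTailSum_append, ← ih]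
    exact iteratedTailSum_congr (by simp) fun q hq ↦
      tailSum_connectedSum_eq_connectedSum_tailSum hp hq z

lemma iteratedTailSum_replicate_append_one_append_replicate (hp : 0 < p) (b c : ℕ) :
    iteratedTailSum (.replicate c 2 ++ [1] ++ .replicate (b + 1) 2) 1 p =
      iteratedTailSum (.replicate (b + 1) 2)
        (fun q ↦ (q : ℝ≥0∞)⁻¹ * connectedSum p (iteratedTailSum (.replicate c 2) 1) q) 0 := by
  induction c generalizing p with
  | zero =>
    calc _ = tailSum 1 (fun r ↦ iteratedTailSum (.replicate (b + 1) 2) (connectedSum r 1) 0) p :=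
          tailSum_congr 1 fun r hr ↦ (iteratedTailSum_connectedSum (hp.trans hr) b 1).symm
      _ = _ := by
          rw [tailSum_iteratedTailSum_comm]
          exact iteratedTailSum_congr (by simp) fun q hq ↦ tailSum_one_connectedSum_one hp hq
  | succ c ih =>
    set z := iteratedTailSum (.replicate c 2) 1
    calc _ = tailSum 2 (fun r ↦ iteratedTailSum (.replicate (b + 1) 2)
              (fun q ↦ (q : ℝ≥0∞)⁻¹ * connectedSum r z q) 0) p :=
          tailSum_congr 2 fun r hr ↦ ih (hp.trans hr)
      _ = _ := by
          rw [tailSum_iteratedTailSum_comm]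
          refine iteratedTailSum_congr (by simp) fun q hq ↦ ?_
          rw [tailSum_const_mul]
          simp only [connectedSum_comm _ q]
          rw [tailSum_connectedSum_eq_connectedSum_tailSum hq hp]
          rfl

lemma iteratedTailSum_replicate_two_append_three (a : ℕ) (z : ℕ → ℝ≥0∞) :
    iteratedTailSum (.replicate a 2 ++ [3]) z =
      iteratedTailSum (.replicate (a + 1) 2) fun n ↦ (n : ℝ≥0∞)⁻¹ * z n := by
  rw [List.replicate_succ', iteratedTailSum_append, iteratedTailSum_append]
  exact congrArg _ (tailSum_succ 2 z)

lemma iteratedTailSum_iteratedTailSum_connectedSum (a b : ℕ) (z : ℕ → ℝ≥0∞) :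
    iteratedTailSum (.replicate (a + 1) 2) (fun p ↦ (p : ℝ≥0∞)⁻¹ *
        iteratedTailSum (.replicate (b + 1) 2) (fun q ↦ (q : ℝ≥0∞)⁻¹ * connectedSum p z q) 0) 0 =
      iteratedTailSum (.replicate (a + 1) 2 ++ .replicate (b + 1) 2 ++ [2]) z 0 +
      iteratedTailSum (.replicate a 2 ++ [3] ++ (.replicate b 2 ++ [3])) z 0 +
      iteratedTailSum (.replicate b 2 ++ [3] ++ (.replicate a 2 ++ [3])) z 0 := by
  let A : (ℕ → ℝ≥0∞) → ℕ → ℝ≥0∞ := iteratedTailSum (.replicate (a + 1) 2)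
  let B : (ℕ → ℝ≥0∞) → ℕ → ℝ≥0∞ := iteratedTailSum (.replicate (b + 1) 2)
  let z' : ℕ → ℝ≥0∞ := fun n ↦ (n : ℝ≥0∞)⁻¹ * z n
  have A_congr {f g : ℕ → ℝ≥0∞} (h : ∀ p, 0 < p → f p = g p) : A f 0 = A g 0 :=
    iteratedTailSum_congr (by simp) h
  have B_congr {f g : ℕ → ℝ≥0∞} (h : ∀ q, 0 < q → f q = g q) : B f 0 = B g 0 :=
    iteratedTailSum_congr (by simp) h
  have swap : A (fun p ↦ B (fun q ↦ (q : ℝ≥0∞)⁻¹ * connectedSum q z' p) 0) 0 =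
      B (fun q ↦ (q : ℝ≥0∞)⁻¹ * A (connectedSum q z') 0) 0 := by
    simp only [A, B, iteratedTailSum_comm, iteratedTailSum_const_mul]
  calc A (fun p ↦ (p : ℝ≥0∞)⁻¹ * B (fun q ↦ (q : ℝ≥0∞)⁻¹ * connectedSum p z q) 0) 0
      = A (fun p ↦ B (connectedSum p (tailSum 2 z)) 0 + (p : ℝ≥0∞)⁻¹ * B (connectedSum p z') 0 +
          B (fun q ↦ (q : ℝ≥0∞)⁻¹ * connectedSum q z' p) 0) 0 := A_congr fun p hp ↦ by
        simp only [B, ← iteratedTailSum_const_mul, ← iteratedTailSum_add]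
        exact B_congr fun q hq ↦ inv_mul_inv_mul_connectedSum hp hq z
    _ = A (fun p ↦ B (connectedSum p (tailSum 2 z)) 0) 0 +
          A (fun p ↦ (p : ℝ≥0∞)⁻¹ * B (connectedSum p z') 0) 0 +
          B (fun q ↦ (q : ℝ≥0∞)⁻¹ * A (connectedSum q z') 0) 0 := by
        rw [← swap]
        simp only [A, iteratedTailSum_add]
    _ = A (B (tailSum 2 z)) 0 + A (fun p ↦ (p : ℝ≥0∞)⁻¹ * B z' p) 0 +
          B (fun q ↦ (q : ℝ≥0∞)⁻¹ * A z' q) 0 := by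
        rw [A_congr fun p hp ↦ iteratedTailSum_connectedSum hp b (tailSum 2 z),
          A_congr fun p hp ↦ congrArg _ (iteratedTailSum_connectedSum hp b z'),
          B_congr fun q hq ↦ congrArg _ (iteratedTailSum_connectedSum hq a z')]
    _ = _ := by
        simp only [iteratedTailSum_append _ (_ ++ [3]), iteratedTailSum_append _ [2],
          iteratedTailSum_append (.replicate (a + 1) 2) (.replicate (b + 1) 2),
          iteratedTailSum_replicate_two_append_three, iteratedTailSum_cons, iteratedTailSum_nil,
          A, B, z']

lemma iteratedTailSum_hirose_sato (a b c : ℕ) :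
    iteratedTailSum (.replicate a 2 ++ [3] ++ .replicate c 2 ++ [1] ++ .replicate (b + 1) 2) 1 0 =
      iteratedTailSum (.replicate (a + 1 + (b + 1) + (c + 1)) 2) 1 0 +
      iteratedTailSum (.replicate a 2 ++ [3] ++ .replicate b 2 ++ [3] ++ .replicate c 2) 1 0 +
      iteratedTailSum (.replicate b 2 ++ [3] ++ .replicate a 2 ++ [3] ++ .replicate c 2) 1 0 := by
  set z := iteratedTailSum (.replicate c 2) 1
  calc _ = iteratedTailSum (.replicate (a + 1) 2) (fun p ↦ (p : ℝ≥0∞)⁻¹ *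
          iteratedTailSum (.replicate c 2 ++ [1] ++ .replicate (b + 1) 2) 1 p) 0 := by
        rw [← iteratedTailSum_replicate_two_append_three, ← iteratedTailSum_append]
        simp only [List.append_assoc]
    _ = iteratedTailSum (.replicate (a + 1) 2) (fun p ↦ (p : ℝ≥0∞)⁻¹ *
          iteratedTailSum (.replicate (b + 1) 2)
            (fun q ↦ (q : ℝ≥0∞)⁻¹ * connectedSum p z q) 0) 0 :=
        iteratedTailSum_congr (by simp) fun p hp ↦
          congrArg _ (iteratedTailSum_replicate_append_one_append_replicate hp b c)
    _ = _ := by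
        have replicate_eq : List.replicate (a + 1 + (b + 1) + (c + 1)) 2 =
            .replicate (a + 1) 2 ++ .replicate (b + 1) 2 ++ [2] ++ .replicate c 2 := by
          rw [List.replicate_append_replicate, ← List.append_cons, ← List.replicate_succ,
            List.replicate_append_replicate]
        rw [iteratedTailSum_iteratedTailSum_connectedSum, replicate_eq]
        simp only [z, ← iteratedTailSum_append, ← List.append_assoc]

theorem mzv_hirose_sato_one (a b c : ℕ) (ha : 0 < a) (hb : 0 < b) (hc : 0 < c) :
    mzv (List.replicate (a - 1) 2 ++ [3] ++ List.replicate (c - 1) 2 ++ [1] ++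
        List.replicate b 2)
      = mzv (List.replicate (a + b + c) 2)
        + mzv (List.replicate (a - 1) 2 ++ [3] ++ List.replicate (b - 1) 2 ++ [3] ++
            List.replicate (c - 1) 2)
        + mzv (List.replicate (b - 1) 2 ++ [3] ++ List.replicate (a - 1) 2 ++ [3] ++
            List.replicate (c - 1) 2) := by
  obtain ⟨a, rfl⟩ := Nat.exists_eq_add_one.2 ha
  obtain ⟨b, rfl⟩ := Nat.exists_eq_add_one.2 hb
  obtain ⟨c, rfl⟩ := Nat.exists_eq_add_one.2 hc
  simp only [Nat.add_sub_cancel, mzv_eq_toReal_iteratedTailSum]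
  have ne_top {ks : List ℕ} (h : ∀ k ∈ ks, k = 2 ∨ k = 3) : iteratedTailSum ks 1 0 ≠ ⊤ :=
    iteratedTailSum_one_ne_top (fun k hk ↦ by have := h k hk; omega) 0
  rw [iteratedTailSum_hirose_sato,
    ENNReal.toReal_add (ENNReal.add_ne_top.2 ⟨ne_top ?_, ne_top ?_⟩) (ne_top ?_),
    ENNReal.toReal_add (ne_top ?_) (ne_top ?_)]
  all_goals grind
end

section
/- For every positive integer c, ζ(3,{2}^{c-1},1,2) = ζ({2}^{c+2}) + 2ζ(3,3,{2}^{c-1}) (Hoffman's conjectural identity). -/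
/-!
Put the truncations at `N` of `ζ(ks, {2}ʲ, ls)`, over all `j`, into a polynomial. Its values at
`ν²` satisfy exact first-order recurrences in `N`, and these force relations between the values at
`ν` and `ν + 1`. For `p` the difference of the polynomials of the two sides of the identity, the
relations bound `vₙ + vₙ₊₁`, where `vₙ = n p(n²)`, by `O(log² N / (N (n + 1)))` for `n < N`. Since
`v₀ = 0`, it follows that `vₙ = O(log³ N / N)` for `n ≤ N`. As `deg p < N`, the values at
`1², …, N²` determine `p`, and the weights `∏ k² / |k² - n²|` of Lagrange interpolation at these
nodes are at most `2`. Hence every coefficient of `p` is `O(log⁴ N / N)`. The factor `log² N` in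
the bound for `vₙ + vₙ₊₁` comes from applying the same argument to `ζ({2}ʲ,1,2)` and `ζ(3,{2}ʲ)`.
-/

namespace HoffmanIdentity

open Filter Finset Polynomial Topology

/-! ### Truncated multiple zeta values -/

/-- The finite multiple harmonic sum `∑_{m < n₁ < ⋯ < n_r ≤ N} 1/(n₁^{k₁}⋯n_r^{k_r})`. -/
noncomputable def mhsFrom : List ℕ → ℕ → ℕ → ℝ
  | [], _, _ => 1
  | a :: ks, m, N => ∑ n ∈ Ioc m N, 1 / (n : ℝ) ^ a * mhsFrom ks n N

/-- The truncation `∑_{0 < n₁ < ⋯ < n_r ≤ N} 1/(n₁^{k₁}⋯n_r^{k_r})` of `mzv ks`. -/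
noncomputable def mhs (ks : List ℕ) (N : ℕ) : ℝ := mhsFrom ks 0 N

/-- The summand of `mzv ks` restricted to indices with `m < n₁`, so that `mzv ks` is the sum of
`mzvTerm ks 0`. -/
noncomputable def mzvTerm (ks : List ℕ) (m : ℕ) (n : Fin ks.length → ℕ) : ℝ :=
  if (∀ i j : Fin ks.length, i < j → n i < n j) ∧ (∀ i, m < n i) then
    ∏ i, (1 : ℝ) / (n i : ℝ) ^ ks.get i
  else 0

lemma mzvTerm_nonneg (ks : List ℕ) (m : ℕ) (n : Fin ks.length → ℕ) : 0 ≤ mzvTerm ks m n := by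
  unfold mzvTerm
  split_ifs <;> positivity

lemma strictMono_cons_and_lt_iff {r : ℕ} (m x : ℕ) (n : Fin r → ℕ) :
    ((∀ i j, i < j → (Fin.cons x n : Fin (r + 1) → ℕ) i < (Fin.cons x n : Fin (r + 1) → ℕ) j) ∧
        ∀ i, m < (Fin.cons x n : Fin (r + 1) → ℕ) i) ↔
      m < x ∧ (∀ i j, i < j → n i < n j) ∧ ∀ i, x < n i := by
  simp only [Fin.forall_fin_succ, Fin.cons_zero, Fin.cons_succ, Fin.succ_lt_succ_iff,
    Fin.succ_pos, Fin.not_lt_zero, false_imp_iff, true_imp_iff, true_and]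
  exact ⟨fun h => ⟨h.2.1, h.1.2, h.1.1⟩,
    fun h => ⟨⟨h.2.2, h.2.1⟩, h.1, fun i => h.1.trans (h.2.2 i)⟩⟩

lemma mzvTerm_cons (a : ℕ) (ks : List ℕ) (m x : ℕ) (n : Fin ks.length → ℕ) :
    mzvTerm (a :: ks) m (Fin.cons x n : Fin (ks.length + 1) → ℕ) =
      if m < x then 1 / (x : ℝ) ^ a * mzvTerm ks x n else 0 := by
  have hprod : ∏ i : Fin (ks.length + 1),
      (1 : ℝ) / ((Fin.cons x n : Fin (ks.length + 1) → ℕ) i : ℝ) ^ (a :: ks).get i =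
        1 / (x : ℝ) ^ a * ∏ i, (1 : ℝ) / (n i : ℝ) ^ ks.get i := by
    rw [Fin.prod_univ_succ]; rfl
  have h : mzvTerm (a :: ks) m (Fin.cons x n : Fin (ks.length + 1) → ℕ) =
      if m < x ∧ (∀ i j, i < j → n i < n j) ∧ ∀ i, x < n i then
        1 / (x : ℝ) ^ a * ∏ i, (1 : ℝ) / (n i : ℝ) ^ ks.get i else 0 := by
    rw [← hprod]
    exact if_congr (strictMono_cons_and_lt_iff m x n) rfl rfl
  rw [h, ite_and, mzvTerm, mul_ite, mul_zero]

/-- The box `{0, …, N}^r` of indices. -/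
abbrev indexBox (r N : ℕ) : Finset (Fin r → ℕ) := Fintype.piFinset fun _ => range (N + 1)

lemma sum_indexBox_succ (r N : ℕ) (f : (Fin (r + 1) → ℕ) → ℝ) :
    ∑ n ∈ indexBox (r + 1) N, f n =
      ∑ x ∈ range (N + 1), ∑ n ∈ indexBox r N, f (Fin.cons x n : Fin (r + 1) → ℕ) := by
  rw [← sum_product']
  refine sum_nbij' (fun n => (n 0, Fin.tail n)) (fun p => Fin.cons p.1 p.2) ?_ ?_ ?_ ?_ ?_
  · exact fun n hn => mem_product.2 ⟨Fintype.mem_piFinset.1 hn 0,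
      Fintype.mem_piFinset.2 fun i => Fintype.mem_piFinset.1 hn i.succ⟩
  · refine fun p hp => Fintype.mem_piFinset.2 (Fin.cases ?_ fun i => ?_)
    · exact (mem_product.1 hp).1
    · exact Fintype.mem_piFinset.1 (mem_product.1 hp).2 i
  · exact fun n _ => Fin.cons_self_tail n
  · exact fun p _ => rfl
  · exact fun n _ => by rw [Fin.cons_self_tail]

lemma sum_mzvTerm_indexBox (ks : List ℕ) (m N : ℕ) :
    ∑ n ∈ indexBox ks.length N, mzvTerm ks m n = mhsFrom ks m N := by
  induction ks generalizing m with
  | nil => simp [mhsFrom, mzvTerm]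
  | cons a ks ih =>
    have hIoc : Ioc m N = {x ∈ range (N + 1) | m < x} := by
      ext x
      simp only [mem_Ioc, mem_filter, mem_range]
      omega
    refine (sum_indexBox_succ ks.length N (mzvTerm (a :: ks) m)).trans ?_
    rw [mhsFrom, hIoc, sum_filter]
    refine sum_congr rfl fun x _ => ?_
    simp only [mzvTerm_cons]
    split_ifs
    · rw [← mul_sum, ih]
    · exact sum_const_zero

lemma monotone_indexBox (r : ℕ) : Monotone (indexBox r) := fun _ _ h =>
  Fintype.piFinset_subset _ _ fun _ => range_mono (Nat.succ_le_succ h)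

lemma tendsto_indexBox_atTop (r : ℕ) : Tendsto (indexBox r) atTop atTop := by
  refine tendsto_atTop_finset_of_monotone (monotone_indexBox r) fun n => ⟨∑ i, n i, ?_⟩
  simp only [Fintype.mem_piFinset, mem_range, Nat.lt_succ_iff]
  exact fun i => single_le_sum (fun _ _ => Nat.zero_le _) (mem_univ i)

lemma monotone_mhs (ks : List ℕ) : Monotone (mhs ks) := fun M N h => by
  simp only [mhs, ← sum_mzvTerm_indexBox]
  exact sum_le_sum_of_subset_of_nonneg (monotone_indexBox _ h) fun n _ _ => mzvTerm_nonneg _ _ n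

lemma mzv_eq_of_tendsto_mhs {ks : List ℕ} {L : ℝ} (h : Tendsto (mhs ks) atTop (𝓝 L)) :
    mzv ks = L := by
  have hsum : Summable (mzvTerm ks 0) := by
    refine summable_of_sum_le (c := L) (mzvTerm_nonneg ks 0) fun u => ?_
    obtain ⟨N, hN⟩ := ((tendsto_indexBox_atTop _).eventually_ge_atTop u).exists
    calc ∑ n ∈ u, mzvTerm ks 0 n
        ≤ ∑ n ∈ indexBox ks.length N, mzvTerm ks 0 n :=
          sum_le_sum_of_subset_of_nonneg hN fun n _ _ => mzvTerm_nonneg _ _ n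
      _ = mhs ks N := sum_mzvTerm_indexBox ks 0 N
      _ ≤ L := (monotone_mhs ks).ge_of_tendsto h N
  refine tendsto_nhds_unique (hsum.hasSum.comp (tendsto_indexBox_atTop _)) (h.congr fun N => ?_)
  exact (sum_mzvTerm_indexBox ks 0 N).symm

lemma mhsFrom_nonneg (ks : List ℕ) (m N : ℕ) : 0 ≤ mhsFrom ks m N := by
  rw [← sum_mzvTerm_indexBox]
  exact sum_nonneg fun n _ => mzvTerm_nonneg ks m n

lemma mhs_nonneg (ks : List ℕ) (N : ℕ) : 0 ≤ mhs ks N := mhsFrom_nonneg ks 0 N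

lemma mhsFrom_append_singleton_succ (ks : List ℕ) (a : ℕ) {m N : ℕ} (h : m ≤ N) :
    mhsFrom (ks ++ [a]) m (N + 1) =
      mhsFrom (ks ++ [a]) m N + mhsFrom ks m N / ((N : ℝ) + 1) ^ a := by
  induction ks generalizing m with
  | nil => simp [mhsFrom, sum_Ioc_succ_top h]
  | cons b ks ih =>
    have hlast : mhsFrom (ks ++ [a]) (N + 1) (N + 1) = 0 := by cases ks <;> simp [mhsFrom]
    simp only [List.cons_append, mhsFrom]
    rw [sum_Ioc_succ_top h, hlast, mul_zero, add_zero, sum_div, ← sum_add_distrib]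
    refine sum_congr rfl fun n hn => ?_
    rw [ih (mem_Ioc.1 hn).2]
    ring

lemma mhs_append_singleton_succ (ks : List ℕ) (a N : ℕ) :
    mhs (ks ++ [a]) (N + 1) = mhs (ks ++ [a]) N + mhs ks N / ((N : ℝ) + 1) ^ a :=
  mhsFrom_append_singleton_succ ks a (Nat.zero_le N)

lemma mhs_eq_zero_of_lt_length {ks : List ℕ} {N : ℕ} (h : N < ks.length) : mhs ks N = 0 := by
  induction ks using List.reverseRecOn generalizing N with
  | nil => simp at h
  | append_singleton ks a ih =>
    induction N with
    | zero => cases ks <;> simp [mhs, mhsFrom]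
    | succ N ihN =>
      rw [List.length_append, List.length_singleton, Nat.add_lt_add_iff_right] at h
      rw [mhs_append_singleton_succ, ihN (by simp; omega), ih h, zero_div, add_zero]

lemma sum_Ioc_one_div_sq_le_two (m N : ℕ) : ∑ n ∈ Ioc m N, 1 / (n : ℝ) ^ 2 ≤ 2 := by
  calc ∑ n ∈ Ioc m N, 1 / (n : ℝ) ^ 2
      ≤ ∑ n ∈ Ioo 0 (N + 1), ((n : ℝ) ^ 2)⁻¹ := by
        simp only [one_div]
        refine sum_le_sum_of_subset_of_nonneg (fun n => ?_) fun n _ _ => by positivity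
        simp only [mem_Ioc, mem_Ioo]
        omega
    _ ≤ 2 / ((0 : ℕ) + 1) := sum_Ioo_inv_sq_le 0 (N + 1)
    _ = 2 := by norm_num

lemma mhsFrom_le_two_pow {ks : List ℕ} (h : ∀ a ∈ ks, 2 ≤ a) (m N : ℕ) :
    mhsFrom ks m N ≤ 2 ^ ks.length := by
  induction ks generalizing m with
  | nil => simp [mhsFrom]
  | cons a ks ih =>
    have ⟨ha, hks⟩ := List.forall_mem_cons.1 h
    calc ∑ n ∈ Ioc m N, 1 / (n : ℝ) ^ a * mhsFrom ks n N
        ≤ ∑ n ∈ Ioc m N, 1 / (n : ℝ) ^ 2 * 2 ^ ks.length := by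
          refine sum_le_sum fun n hn => mul_le_mul ?_ (ih hks n) (mhsFrom_nonneg ks n N)
            (by positivity)
          have hn1 : 1 ≤ (n : ℝ) := by exact_mod_cast (Nat.zero_le m).trans_lt (mem_Ioc.1 hn).1
          exact one_div_le_one_div_of_le (by positivity) (pow_le_pow_right₀ hn1 ha)
      _ = (∑ n ∈ Ioc m N, 1 / (n : ℝ) ^ 2) * 2 ^ ks.length := (sum_mul ..).symm
      _ ≤ 2 * 2 ^ ks.length := by gcongr; exact sum_Ioc_one_div_sq_le_two m N
      _ = 2 ^ (a :: ks).length := by rw [List.length_cons, pow_succ']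

lemma mhs_le_two_pow {ks : List ℕ} (h : ∀ a ∈ ks, 2 ≤ a) (N : ℕ) : mhs ks N ≤ 2 ^ ks.length :=
  mhsFrom_le_two_pow h 0 N

lemma tendsto_mhs_mzv {ks : List ℕ} (h : ∀ a ∈ ks, 2 ≤ a) :
    Tendsto (mhs ks) atTop (𝓝 (mzv ks)) := by
  have hbdd : BddAbove (Set.range (mhs ks)) :=
    ⟨2 ^ ks.length, Set.forall_mem_range.2 (mhs_le_two_pow h)⟩
  have hlim := tendsto_atTop_ciSup (monotone_mhs ks) hbdd
  rwa [mzv_eq_of_tendsto_mhs hlim]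

/-! ### Contiguity relations -/

/-- The polynomial `∑ⱼ mhs (ks, {2}ʲ, ls) N · (-X)ʲ`, generating function of a family of multiple
harmonic sums with a growing string of twos; the terms with `j > N` vanish. -/
noncomputable def twosPoly (ks ls : List ℕ) (N : ℕ) : ℝ[X] :=
  ∑ j ∈ range (N + 1), monomial j ((-1) ^ j * mhs (ks ++ List.replicate j 2 ++ ls) N)

lemma coeff_twosPoly (ks ls : List ℕ) (N j : ℕ) :
    (twosPoly ks ls N).coeff j = (-1) ^ j * mhs (ks ++ List.replicate j 2 ++ ls) N := by
  rw [twosPoly, finsetSum_coeff]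
  simp only [coeff_monomial]
  rw [sum_ite_eq', ite_eq_left_iff]
  intro hj
  rw [mhs_eq_zero_of_lt_length, mul_zero]
  simp only [List.length_append, List.length_replicate]
  rw [mem_range] at hj
  omega

lemma degree_twosPoly_lt {ks ls : List ℕ} (h : 0 < ks.length + ls.length) (N : ℕ) :
    (twosPoly ks ls N).degree < N := by
  refine degree_lt_iff_coeff_zero _ _ |>.2 fun j hj => ?_
  rw [coeff_twosPoly, mhs_eq_zero_of_lt_length, mul_zero]
  simp only [List.length_append, List.length_replicate]
  omega

lemma twosPoly_append_singleton_succ (ks ls : List ℕ) (a N : ℕ) :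
    twosPoly ks (ls ++ [a]) (N + 1) =
      twosPoly ks (ls ++ [a]) N + C (((N : ℝ) + 1) ^ a)⁻¹ * twosPoly ks ls N := by
  ext j
  simp only [coeff_add, coeff_C_mul, coeff_twosPoly, ← List.append_assoc,
    mhs_append_singleton_succ]
  ring

lemma twosPoly_nil_succ (ks : List ℕ) (N : ℕ) :
    twosPoly ks [] (N + 1) = (1 - C (((N : ℝ) + 1) ^ 2)⁻¹ * X) * twosPoly ks [] N +
      C (mhs ks (N + 1) - mhs ks N) := by
  ext j
  cases j with
  | zero => simp [coeff_twosPoly, sub_mul, mul_assoc]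
  | succ j =>
    simp only [coeff_add, sub_mul, one_mul, mul_assoc, coeff_sub, coeff_C_mul, coeff_X_mul,
      coeff_C_succ, coeff_twosPoly, List.append_nil, List.replicate_succ', ← List.append_assoc,
      mhs_append_singleton_succ]
    ring

lemma twosPoly_eq_sub_X_mul (ks ls : List ℕ) (N : ℕ) :
    twosPoly ks ls N = C (mhs (ks ++ ls) N) - X * twosPoly (ks ++ [2]) ls N := by
  ext j
  cases j with
  | zero => simp [coeff_twosPoly]
  | succ j =>
    simp only [coeff_sub, coeff_C_succ, coeff_X_mul, coeff_twosPoly, List.replicate_succ,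
      List.append_assoc, List.cons_append, List.nil_append]
    ring

lemma twosPoly_cons_two (ks ls : List ℕ) (N : ℕ) :
    twosPoly ks (2 :: ls) N = twosPoly (ks ++ [2]) ls N := by
  ext j
  have hcomm : List.replicate j 2 ++ 2 :: ls = [2] ++ List.replicate j 2 ++ ls := by
    rw [List.append_cons, ← List.replicate_succ', List.replicate_succ, List.singleton_append]
  simp only [coeff_twosPoly, List.append_assoc, hcomm]

/-- The value of `twosPoly ks ls N` at `ν²`, written as a function of `ν` because the recurrences
relate the values at `ν` and `ν + 1`. -/
noncomputable def twosSum (ks ls : List ℕ) (N : ℕ) (ν : ℝ) : ℝ := (twosPoly ks ls N).eval (ν ^ 2)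

lemma twosSum_zero_right (ks ls : List ℕ) (N : ℕ) : twosSum ks ls N 0 = mhs (ks ++ ls) N := by
  rw [twosSum, twosPoly_eq_sub_X_mul]
  simp

lemma twosSum_append_singleton_nil_zero (ks : List ℕ) (a : ℕ) (ν : ℝ) :
    twosSum (ks ++ [a]) [] 0 ν = 0 := by
  simp [twosSum, twosPoly, mhs_eq_zero_of_lt_length]

lemma twosSum_append_singleton_succ (ks ls : List ℕ) (a N : ℕ) (ν : ℝ) :
    twosSum ks (ls ++ [a]) (N + 1) ν =
      twosSum ks (ls ++ [a]) N ν + twosSum ks ls N ν / ((N : ℝ) + 1) ^ a := by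
  simp only [twosSum, twosPoly_append_singleton_succ, eval_add, eval_mul, eval_C]
  ring

lemma twosSum_append_singleton_nil_succ (ks : List ℕ) (a N : ℕ) (ν : ℝ) :
    twosSum (ks ++ [a]) [] (N + 1) ν =
      (1 - ν ^ 2 / ((N : ℝ) + 1) ^ 2) * twosSum (ks ++ [a]) [] N ν +
        mhs ks N / ((N : ℝ) + 1) ^ a := by
  simp only [twosSum, twosPoly_nil_succ, mhs_append_singleton_succ, eval_add, eval_sub, eval_mul,
    eval_C, eval_X, eval_one]
  ring

lemma twosSum_nil_nil_succ (N : ℕ) (ν : ℝ) :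
    twosSum [] [] (N + 1) ν = (1 - ν ^ 2 / ((N : ℝ) + 1) ^ 2) * twosSum [] [] N ν := by
  simp only [twosSum, twosPoly_nil_succ, mhs, mhsFrom, eval_add, eval_sub, eval_mul,
    eval_C, eval_X, eval_one]
  ring

lemma twosSum_cons_two (ks ls : List ℕ) (N : ℕ) (ν : ℝ) :
    twosSum ks (2 :: ls) N ν = twosSum (ks ++ [2]) ls N ν := by
  rw [twosSum, twosPoly_cons_two, twosSum]

lemma twosSum_nil_nil_contiguity (N : ℕ) (ν : ℝ) :
    (ν + 1) * (ν - N) * twosSum [] [] N (ν + 1) = ν * (ν + N + 1) * twosSum [] [] N ν := by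
  induction N with
  | zero =>
    have hone (μ : ℝ) : twosSum [] [] 0 μ = 1 := by simp [twosSum, twosPoly, mhs, mhsFrom]
    rw [hone, hone, Nat.cast_zero]
    ring
  | succ N ih =>
    have hN : (N : ℝ) + 1 ≠ 0 := by positivity
    rw [twosSum_nil_nil_succ, twosSum_nil_nil_succ]
    push_cast
    field_simp
    linear_combination (N + ν + 2) * (N + 1 - ν) * ih

-- Induction on `N`: the left-hand side `d N` satisfies
-- `(N + 1)² d (N + 1) = (N + ν + 2) (N + 1 - ν) d N`.
lemma twosSum_contiguity (ks : List ℕ) (N : ℕ) (ν : ℝ) :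
    (N + ν + 1) * (ν * twosSum (ks ++ [3]) [] N ν - twosSum (ks ++ [2]) [] N ν) +
      (N - ν) * ((ν + 1) * twosSum (ks ++ [3]) [] N (ν + 1) +
        twosSum (ks ++ [2]) [] N (ν + 1)) = 0 := by
  induction N with
  | zero => simp [twosSum_append_singleton_nil_zero]
  | succ N ih =>
    have hN : (N : ℝ) + 1 ≠ 0 := by positivity
    simp only [twosSum_append_singleton_nil_succ]
    push_cast
    field_simp
    linear_combination (N + ν + 2) * (N + 1 - ν) * (N + 1) * ih

lemma twosSum_nil_one_add (N : ℕ) (ν : ℝ) :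
    ν * twosSum [] [1] N ν + (ν + 1) * twosSum [] [1] N (ν + 1) =
      twosSum [] [] N ν - twosSum [] [] N (ν + 1) := by
  induction N with
  | zero => simp [twosSum, twosPoly, mhs, mhsFrom]
  | succ N ih =>
    have hN : (N : ℝ) + 1 ≠ 0 := by positivity
    have hsucc := twosSum_append_singleton_succ [] [] 1 N
    rw [List.nil_append] at hsucc
    rw [hsucc, hsucc, twosSum_nil_nil_succ, twosSum_nil_nil_succ]
    have hc := twosSum_nil_nil_contiguity N ν
    field_simp
    linear_combination (N + 1) ^ 2 * ih - hc

lemma twosSum_nil_one_two_add (N : ℕ) (ν : ℝ) :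
    ν * twosSum [] [1, 2] N ν + (ν + 1) * twosSum [] [1, 2] N (ν + 1) =
      twosSum [2] [] N ν - twosSum [2] [] N (ν + 1) := by
  have htwo := twosSum_cons_two [] []
  rw [List.nil_append] at htwo
  simp only [← htwo]
  induction N with
  | zero => simp [twosSum, twosPoly, mhs, mhsFrom]
  | succ N ih =>
    have hN : (N : ℝ) + 1 ≠ 0 := by positivity
    have hsucc := twosSum_append_singleton_succ [] [1] 2 N
    have hsucc' := twosSum_append_singleton_succ [] [] 2 N
    rw [List.nil_append] at hsucc'
    rw [List.singleton_append] at hsucc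
    rw [hsucc, hsucc, hsucc', hsucc']
    have hJ := twosSum_nil_one_add N ν
    field_simp
    linear_combination (N + 1) ^ 2 * ih + hJ

lemma twosSum_one_add (ks : List ℕ) (N : ℕ) (ν : ℝ) :
    ν * twosSum (ks ++ [3]) [1] N ν + (ν + 1) * twosSum (ks ++ [3]) [1] N (ν + 1) =
      twosSum (ks ++ [3]) [] N ν - twosSum (ks ++ [3]) [] N (ν + 1) +
      (twosSum (ks ++ [2]) [1] N ν - twosSum (ks ++ [2]) [1] N (ν + 1)) +
      (ν * twosSum (ks ++ [2]) [2] N ν + (ν + 1) * twosSum (ks ++ [2]) [2] N (ν + 1)) := by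
  induction N with
  | zero => simp [twosSum, twosPoly, mhs_eq_zero_of_lt_length]
  | succ N ih =>
    have hN : (N : ℝ) + 1 ≠ 0 := by positivity
    have hsucc (l a : ℕ) := twosSum_append_singleton_succ (ks ++ [l]) [] a N
    simp only [List.nil_append] at hsucc
    simp only [hsucc, twosSum_append_singleton_nil_succ ks 3]
    have hc := twosSum_contiguity ks N ν
    field_simp
    linear_combination (N + 1) ^ 3 * ih + (N + 1) * hc

lemma twosSum_one_two_add (ks : List ℕ) (N : ℕ) (ν : ℝ) :
    ν * twosSum (ks ++ [3]) [1, 2] N ν + (ν + 1) * twosSum (ks ++ [3]) [1, 2] N (ν + 1) =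
      twosSum (ks ++ [3]) [2] N ν - twosSum (ks ++ [3]) [2] N (ν + 1) +
      (twosSum (ks ++ [2]) [1, 2] N ν - twosSum (ks ++ [2]) [1, 2] N (ν + 1)) +
      (ν * twosSum (ks ++ [2]) [2, 2] N ν + (ν + 1) * twosSum (ks ++ [2]) [2, 2] N (ν + 1)) := by
  induction N with
  | zero => simp [twosSum, twosPoly, mhs_eq_zero_of_lt_length]
  | succ N ih =>
    have hN : (N : ℝ) + 1 ≠ 0 := by positivity
    have hsucc (l a : ℕ) := twosSum_append_singleton_succ (ks ++ [l]) [a] 2 N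
    have hsucc' (l : ℕ) := twosSum_append_singleton_succ (ks ++ [l]) [] 2 N
    simp only [List.nil_append, List.singleton_append] at hsucc hsucc'
    simp only [hsucc, hsucc']
    have hJ := twosSum_one_add ks N ν
    field_simp
    linear_combination (N + 1) ^ 2 * ih + hJ

lemma twosSum_natCast_mem_Icc {ks : List ℕ} {K : ℝ} (hK : ∀ N, mhs ks N ≤ K) {a : ℕ} (ha : 2 ≤ a)
    {n N : ℕ} (hn : 0 < n) (hnN : n ≤ N) :
    twosSum (ks ++ [a]) [] N n ∈ Set.Icc 0 (K / (n : ℝ) ^ a) := by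
  have hn' : (0 : ℝ) < n := by exact_mod_cast hn
  induction N, hnN using Nat.le_induction with
  | base =>
    obtain ⟨m, rfl⟩ := Nat.exists_eq_add_one.2 hn
    have hm : ((m + 1 : ℕ) : ℝ) ^ 2 / ((m : ℝ) + 1) ^ 2 = 1 := by
      push_cast
      exact div_self (by positivity)
    rw [twosSum_append_singleton_nil_succ, hm, sub_self, zero_mul, zero_add]
    push_cast
    exact ⟨div_nonneg (mhs_nonneg ks m) (by positivity), by gcongr; exact hK m⟩
  | succ N hnN ih =>
    have hK0 : 0 ≤ K := (mhs_nonneg ks 0).trans (hK 0)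
    set r : ℝ := n / ((N : ℝ) + 1) with hr
    have hr0 : 0 ≤ r := by positivity
    have hr1 : r ≤ 1 := by
      rw [hr, div_le_one (by positivity)]
      exact_mod_cast hnN.trans N.le_succ
    have hsq : 0 ≤ 1 - r ^ 2 := by nlinarith
    rw [twosSum_append_singleton_nil_succ, ← div_pow, ← hr]
    refine ⟨add_nonneg (mul_nonneg hsq ih.1) (div_nonneg (mhs_nonneg ks N) (by positivity)), ?_⟩
    calc (1 - r ^ 2) * twosSum (ks ++ [a]) [] N n + mhs ks N / ((N : ℝ) + 1) ^ a
        ≤ (1 - r ^ 2) * (K / (n : ℝ) ^ a) + K / ((N : ℝ) + 1) ^ a := by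
          gcongr
          exacts [ih.2, hK N]
      _ = (1 - r ^ 2) * (K / (n : ℝ) ^ a) + r ^ a * (K / (n : ℝ) ^ a) := by
          rw [hr, div_pow _ _ a]
          field_simp
      _ ≤ (1 - r ^ 2) * (K / (n : ℝ) ^ a) + r ^ 2 * (K / (n : ℝ) ^ a) := by
          gcongr _ + ?_ * _
          exact pow_le_pow_of_le_one hr0 hr1 ha
      _ = K / (n : ℝ) ^ a := by ring

lemma mul_twosSum_three_le {ks : List ℕ} {K : ℝ} (hK : ∀ N, mhs ks N ≤ K) {n N : ℕ} (hn : 0 < n)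
    (hnN : n ≤ N) : n * twosSum (ks ++ [3]) [] N n ≤ K / (n : ℝ) ^ 2 := by
  calc n * twosSum (ks ++ [3]) [] N n ≤ n * (K / (n : ℝ) ^ 3) := by
        gcongr
        exact (twosSum_natCast_mem_Icc hK (by norm_num) hn hnN).2
    _ = K / (n : ℝ) ^ 2 := by field_simp

lemma abs_twosSum_two_sub_mul_three_le {ks : List ℕ} (hks : ∀ a ∈ ks, 2 ≤ a) {n N : ℕ}
    (hnN : n ≤ N) : |twosSum (ks ++ [2]) [] N n - n * twosSum (ks ++ [3]) [] N n| ≤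
      4 * 2 ^ ks.length / ((n : ℝ) + 1) ^ 2 := by
  have hK := mhs_le_two_pow hks
  rcases n.eq_zero_or_pos with rfl | hn
  · rw [Nat.cast_zero, zero_mul, sub_zero, twosSum_zero_right, List.append_nil,
      abs_of_nonneg (mhs_nonneg _ _)]
    calc mhs (ks ++ [2]) N ≤ 2 ^ (ks ++ [2]).length :=
          mhs_le_two_pow (by simpa [or_imp, forall_and] using hks) N
      _ = 2 * 2 ^ ks.length := by rw [List.length_append, List.length_singleton, pow_succ']
      _ ≤ 4 * 2 ^ ks.length := by gcongr; norm_num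
      _ = 4 * 2 ^ ks.length / ((0 : ℝ) + 1) ^ 2 := by norm_num
  · have hn1 : (1 : ℝ) ≤ n := by exact_mod_cast hn
    have h2 := twosSum_natCast_mem_Icc hK (a := 2) le_rfl hn hnN
    have h3 := mul_nonneg n.cast_nonneg
      (twosSum_natCast_mem_Icc hK (a := 3) (by norm_num) hn hnN).1
    calc |twosSum (ks ++ [2]) [] N n - n * twosSum (ks ++ [3]) [] N n|
        ≤ 2 ^ ks.length / (n : ℝ) ^ 2 :=
          abs_le.2 ⟨by linarith [h2.1, mul_twosSum_three_le hK hn hnN], by linarith [h2.2]⟩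
      _ = 4 * 2 ^ ks.length / (n + n : ℝ) ^ 2 := by field_simp; ring
      _ ≤ 4 * 2 ^ ks.length / ((n : ℝ) + 1) ^ 2 := by gcongr

-- For `ν = n < N` the contiguity relation expresses the left-hand side as
-- `(n (n + 1) b₃ + n b₂ + (n + 1) (a₂ - n a₃)) / N`, with all three terms of order `1 / (n + 1)`.
lemma abs_twosSum_three_add_sub_two_le {ks : List ℕ} (hks : ∀ a ∈ ks, 2 ≤ a) {n N : ℕ}
    (hnN : n < N) :
    |n * twosSum (ks ++ [3]) [] N n + (n + 1) * twosSum (ks ++ [3]) [] N (n + 1) -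
      (twosSum (ks ++ [2]) [] N n - twosSum (ks ++ [2]) [] N (n + 1))| ≤
      6 * 2 ^ ks.length / N / (n + 1) := by
  have hN : (0 : ℝ) < N := by exact_mod_cast (Nat.zero_le n).trans_lt hnN
  have hK := mhs_le_two_pow hks
  have hd := abs_twosSum_two_sub_mul_three_le hks hnN.le
  have hb₃ := mul_twosSum_three_le hK n.succ_pos hnN
  have hb₃_nonneg := (twosSum_natCast_mem_Icc hK (a := 3) (by norm_num) n.succ_pos hnN).1
  have hb₂ := twosSum_natCast_mem_Icc hK (a := 2) le_rfl n.succ_pos hnN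
  have hc := twosSum_contiguity ks N n
  push_cast at hb₃ hb₃_nonneg hb₂
  set K : ℝ := 2 ^ ks.length
  set a₃ := twosSum (ks ++ [3]) [] N n
  set a₂ := twosSum (ks ++ [2]) [] N n
  set b₃ := twosSum (ks ++ [3]) [] N (n + 1)
  set b₂ := twosSum (ks ++ [2]) [] N (n + 1)
  have hb_nonneg : 0 ≤ n * ((n + 1) * b₃ + b₂) := by
    have := hb₂.1
    positivity
  have heq : n * a₃ + (n + 1) * b₃ - (a₂ - b₂) =
      (n * ((n + 1) * b₃ + b₂) + (n + 1) * (a₂ - n * a₃)) / N := by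
    field_simp
    linear_combination hc
  rw [heq, abs_div, abs_of_pos hN, div_right_comm]
  gcongr
  calc |n * ((n + 1) * b₃ + b₂) + (n + 1) * (a₂ - n * a₃)|
      ≤ n * ((n + 1) * b₃ + b₂) + (n + 1) * |a₂ - n * a₃| := by
        refine (abs_add_le _ _).trans_eq ?_
        rw [abs_of_nonneg hb_nonneg, abs_mul, abs_of_pos (by positivity : (0 : ℝ) < n + 1)]
    _ ≤ (n + 1) * (K / ((n : ℝ) + 1) ^ 2 + K / ((n : ℝ) + 1) ^ 2) +
          (n + 1) * (4 * K / ((n : ℝ) + 1) ^ 2) := by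
        gcongr
        exacts [add_nonneg (by positivity) hb₂.1, by linarith, hb₂.2]
    _ = 6 * K / ((n : ℝ) + 1) := by field_simp; ring

/-! ### Interpolation at the squares -/

lemma abs_le_sum_abs_add_succ {G : Type*} [AddCommGroup G] [LinearOrder G] [IsOrderedAddMonoid G]
    {v : ℕ → G} (h0 : v 0 = 0) (n : ℕ) :
    |v n| ≤ ∑ m ∈ range n, |v m + v (m + 1)| := by
  induction n with
  | zero => simp [h0]
  | succ n ih =>
    rw [sum_range_succ]
    calc |v (n + 1)| = |(v n + v (n + 1)) - v n| := by rw [add_sub_cancel_left]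
      _ ≤ |v n + v (n + 1)| + |v n| := abs_sub _ _
      _ ≤ |v n + v (n + 1)| + ∑ m ∈ range n, |v m + v (m + 1)| := by gcongr
      _ = _ := add_comm _ _

lemma abs_le_mul_harmonic {v : ℕ → ℝ} (h0 : v 0 = 0) {N : ℕ} {δ : ℝ}
    (h : ∀ n < N, |v n + v (n + 1)| ≤ δ / (n + 1)) {n : ℕ} (hn : n ≤ N) :
    |v n| ≤ δ * harmonic N := by
  calc |v n| ≤ ∑ m ∈ range n, |v m + v (m + 1)| := abs_le_sum_abs_add_succ h0 n
    _ ≤ ∑ m ∈ range N, |v m + v (m + 1)| :=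
      sum_le_sum_of_subset_of_nonneg (range_mono hn) fun m _ _ => abs_nonneg _
    _ ≤ ∑ m ∈ range N, δ / (m + 1) := sum_le_sum fun m hm => h m (mem_range.1 hm)
    _ = δ * harmonic N := by simp [harmonic, mul_sum, div_eq_mul_inv]

lemma abs_coeff_prod_one_sub_C_mul_X_le {R ι : Type*} [CommRing R] [LinearOrder R]
    [IsStrictOrderedRing R] {s : Finset ι} {a : ι → R} (ha : ∀ k ∈ s, 0 ≤ a k) (j : ℕ) :
    |(∏ k ∈ s, (1 - C (a k) * X)).coeff j| ≤ (∑ k ∈ s, a k) ^ j := by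
  classical
  induction s using Finset.induction_on generalizing j with
  | empty => cases j <;> simp [coeff_one]
  | insert i s hi ih =>
    rw [prod_insert hi, sum_insert hi, sub_mul, one_mul, mul_assoc, coeff_sub, coeff_C_mul]
    set S := ∑ k ∈ s, a k
    have ⟨hi0, hs⟩ := (forall_mem_insert _ _ _).1 ha
    have hS : 0 ≤ S := sum_nonneg hs
    cases j with
    | zero => simpa using ih hs 0
    | succ j =>
      rw [coeff_X_mul]
      calc _ ≤ S ^ (j + 1) + a i * S ^ j := by
            refine (abs_sub _ _).trans (add_le_add (ih hs _) ?_)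
            rw [abs_mul, abs_of_nonneg hi0]
            exact mul_le_mul_of_nonneg_left (ih hs j) hi0
        _ = (a i + S) * S ^ j := by ring
        _ ≤ (a i + S) * (a i + S) ^ j := by gcongr; linarith
        _ = (a i + S) ^ (j + 1) := (pow_succ' _ _).symm

lemma prod_range_sq_div_sq_sub_one (m l : ℕ) :
    ∏ k ∈ range m, (((m : ℝ) + l + 1) ^ 2 / ((k : ℝ) + 1) ^ 2 - 1) =
      (2 * m + l + 1).factorial / ((m + l + 1) * l.factorial * (m.factorial : ℝ) ^ 2) := by
  induction m generalizing l with
  | zero =>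
    have := Nat.factorial_ne_zero l
    simp only [range_zero, prod_empty, mul_zero, zero_add, Nat.factorial_succ, Nat.factorial_zero,
      Nat.cast_zero]
    push_cast
    field_simp
  | succ m ih =>
    have := Nat.factorial_ne_zero l
    have := Nat.factorial_ne_zero m
    have hl : ((m + 1 : ℕ) : ℝ) + l = m + (l + 1 : ℕ) := by push_cast; ring
    rw [prod_range_succ, hl, ih (l + 1), show 2 * (m + 1) + l + 1 = 2 * m + (l + 1) + 1 + 1 by ring,
      (2 * m + (l + 1) + 1).factorial_succ, l.factorial_succ, m.factorial_succ]
    push_cast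
    field_simp
    ring

lemma abs_prod_erase_one_sub_sq_div_sq (m l : ℕ) :
    |∏ k ∈ (range (m + 1 + l)).erase m, (1 - ((m : ℝ) + 1) ^ 2 / ((k : ℝ) + 1) ^ 2)| =
      l.factorial * (2 * (m + 1) + l).factorial / (2 * ((m + 1 + l).factorial : ℝ) ^ 2) := by
  induction l with
  | zero =>
    have := Nat.factorial_ne_zero m
    have hprod := prod_range_sq_div_sq_sub_one m 0
    rw [Nat.cast_zero, add_zero] at hprod
    have herase : (range (m + 1 + 0)).erase m = range m := by
      rw [add_zero, range_add_one, erase_insert notMem_range_self]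
    rw [herase, abs_prod]
    simp only [abs_sub_comm (1 : ℝ)]
    rw [← abs_prod, hprod, abs_of_nonneg (by positivity), add_zero,
      show 2 * (m + 1) + 0 = 2 * m + 0 + 1 + 1 by ring, (2 * m + 0 + 1).factorial_succ,
      m.factorial_succ]
    push_cast
    field_simp
    ring
  | succ l ih =>
    have := Nat.factorial_ne_zero (m + 1 + l)
    have herase : (range (m + 1 + (l + 1))).erase m =
        insert (m + 1 + l) ((range (m + 1 + l)).erase m) := by
      rw [← add_assoc, range_add_one, erase_insert_of_ne (by omega)]
    have hfac : 0 ≤ 1 - ((m : ℝ) + 1) ^ 2 / (((m + 1 + l : ℕ) : ℝ) + 1) ^ 2 := by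
      rw [sub_nonneg, div_le_one (by positivity)]
      push_cast
      gcongr
      linarith [(l.cast_nonneg : (0 : ℝ) ≤ l)]
    rw [herase, prod_insert (by simp), abs_mul, ih, abs_of_nonneg hfac, l.factorial_succ,
      ← add_assoc, ← add_assoc, (2 * (m + 1) + l).factorial_succ, (m + 1 + l).factorial_succ]
    push_cast
    field_simp
    ring

lemma factorial_add_sq_le (a b : ℕ) :
    (a + b).factorial ^ 2 ≤ b.factorial * (2 * a + b).factorial := by
  induction a with
  | zero => rw [mul_zero, zero_add, sq]
  | succ a ih =>
    calc (a + 1 + b).factorial ^ 2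
        = (a + b + 1) * (a + b + 1) * (a + b).factorial ^ 2 := by
          rw [show a + 1 + b = a + b + 1 by ring, Nat.factorial_succ]
          ring
      _ ≤ (2 * a + b + 2) * (2 * a + b + 1) * (b.factorial * (2 * a + b).factorial) := by
          gcongr <;> omega
      _ = b.factorial * (2 * (a + 1) + b).factorial := by
          rw [show 2 * (a + 1) + b = 2 * a + b + 1 + 1 by ring, Nat.factorial_succ,
            Nat.factorial_succ]
          ring

lemma inv_two_le_abs_prod_erase_one_sub_sq_div_sq {m N : ℕ} (h : m < N) :
    (2 : ℝ)⁻¹ ≤ |∏ k ∈ (range N).erase m, (1 - ((m : ℝ) + 1) ^ 2 / ((k : ℝ) + 1) ^ 2)| := by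
  obtain ⟨l, rfl⟩ := Nat.exists_eq_add_of_le (Nat.succ_le_of_lt h)
  have hle : ((m + 1 + l).factorial : ℝ) ^ 2 ≤ l.factorial * (2 * (m + 1) + l).factorial := by
    exact_mod_cast factorial_add_sq_le (m + 1) l
  rw [abs_prod_erase_one_sub_sq_div_sq, ← one_div, div_le_div_iff₀ two_pos (by positivity)]
  linarith

lemma basisDivisor_eq_C_mul {K : Type*} [Field K] {x y : K} (hy : y ≠ 0) (hxy : x ≠ y) :
    Lagrange.basisDivisor x y = C (1 - x / y)⁻¹ * (1 - C y⁻¹ * X) := by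
  have hC : (C y⁻¹ * C y : K[X]) = 1 := by rw [← C_mul, inv_mul_cancel₀ hy, C_1]
  have hxy' : x - y ≠ 0 := sub_ne_zero.2 hxy
  have hinv : (1 - x / y)⁻¹ = -(x - y)⁻¹ * y := by
    have : y - x ≠ 0 := sub_ne_zero.2 hxy.symm
    field_simp
    ring
  rw [Lagrange.basisDivisor, hinv, C_mul, C_neg]
  linear_combination (-C (x - y)⁻¹ * X) * hC

/-- The interpolation nodes `1², 2², 3², …`. -/
def sqNode (k : ℕ) : ℝ := ((k : ℝ) + 1) ^ 2

lemma sqNode_injective : Function.Injective sqNode := fun k l h => by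
  have := (pow_left_inj₀ (by positivity) (by positivity) two_ne_zero).1 h
  exact_mod_cast add_right_cancel this

lemma sqNode_pos (k : ℕ) : 0 < sqNode k := by
  unfold sqNode
  positivity

lemma sum_inv_sqNode_le_two (N : ℕ) : ∑ k ∈ range N, (sqNode k)⁻¹ ≤ 2 := by
  calc ∑ k ∈ range N, (sqNode k)⁻¹ = ∑ n ∈ Ico (0 + 1) (N + 1), 1 / (n : ℝ) ^ 2 := by
        rw [← sum_Ico_add', range_eq_Ico]
        simp [sqNode]
    _ = ∑ n ∈ Ioc 0 N, 1 / (n : ℝ) ^ 2 := rfl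
    _ ≤ 2 := sum_Ioc_one_div_sq_le_two 0 N

lemma abs_coeff_basis_sqNode_le {m N : ℕ} (h : m < N) (j : ℕ) :
    |(Lagrange.basis (range N) sqNode m).coeff j| ≤ 2 ^ (j + 1) := by
  have hbasis : Lagrange.basis (range N) sqNode m =
      C (∏ k ∈ (range N).erase m, (1 - sqNode m / sqNode k))⁻¹ *
        ∏ k ∈ (range N).erase m, (1 - C (sqNode k)⁻¹ * X) := by
    rw [Lagrange.basis, ← prod_inv_distrib, map_prod, ← prod_mul_distrib]
    refine prod_congr rfl fun k hk => basisDivisor_eq_C_mul (sqNode_pos k).ne' ?_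
    exact sqNode_injective.ne (ne_of_mem_erase hk).symm
  have hinv (k : ℕ) : 0 ≤ (sqNode k)⁻¹ := (inv_pos.2 (sqNode_pos k)).le
  rw [hbasis, coeff_C_mul, abs_mul, abs_inv, pow_succ']
  gcongr
  · exact inv_le_of_inv_le₀ two_pos (inv_two_le_abs_prod_erase_one_sub_sq_div_sq h)
  · calc |(∏ k ∈ (range N).erase m, (1 - C (sqNode k)⁻¹ * X)).coeff j|
        ≤ (∑ k ∈ (range N).erase m, (sqNode k)⁻¹) ^ j :=
          abs_coeff_prod_one_sub_C_mul_X_le (fun k _ => hinv k) j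
      _ ≤ (∑ k ∈ range N, (sqNode k)⁻¹) ^ j := by
          refine pow_le_pow_left₀ (sum_nonneg fun k _ => hinv k) ?_ j
          exact sum_le_sum_of_subset_of_nonneg (erase_subset _ _) fun k _ _ => hinv k
      _ ≤ 2 ^ j := by
          refine pow_le_pow_left₀ (sum_nonneg fun k _ => hinv k) (sum_inv_sqNode_le_two N) j

lemma abs_coeff_le_of_abs_eval_sqNode_le {p : ℝ[X]} {N : ℕ} (hp : p.degree < N) {δ : ℝ}
    (h : ∀ n < N, |(n + 1) * p.eval (sqNode n)| ≤ δ) (j : ℕ) :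
    |p.coeff j| ≤ 2 ^ (j + 1) * (δ * harmonic N) := by
  have hinterp := Lagrange.eq_interpolate (s := range N) sqNode_injective.injOn
    (by rwa [card_range] : p.degree < #(range N))
  rw [Lagrange.interpolate_apply] at hinterp
  calc |p.coeff j|
      = |∑ n ∈ range N, p.eval (sqNode n) * (Lagrange.basis (range N) sqNode n).coeff j| := by
        conv_lhs => rw [hinterp]
        simp only [finsetSum_coeff, coeff_C_mul]
    _ ≤ ∑ n ∈ range N, δ / (n + 1) * 2 ^ (j + 1) := by
        refine (abs_sum_le_sum_abs _ _).trans (sum_le_sum fun n hn => ?_)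
        rw [abs_mul]
        have hn := mem_range.1 hn
        have hδ := h n hn
        rw [abs_mul, abs_of_pos (by positivity : (0 : ℝ) < n + 1)] at hδ
        refine mul_le_mul ?_ (abs_coeff_basis_sqNode_le hn j) (abs_nonneg _) ?_
        · rwa [le_div_iff₀' (by positivity)]
        · exact div_nonneg ((by positivity : (0 : ℝ) ≤ _).trans hδ) (by positivity)
    _ = 2 ^ (j + 1) * (δ * harmonic N) := by
        rw [← sum_mul, mul_comm]
        simp [harmonic, mul_sum, div_eq_mul_inv]

lemma abs_mul_eval_sq_le_of_abs_add_le {p : ℝ[X]} {N : ℕ} {δ : ℝ}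
    (h : ∀ n : ℕ, n < N →
      |n * p.eval ((n : ℝ) ^ 2) + (n + 1) * p.eval (((n : ℝ) + 1) ^ 2)| ≤ δ / (n + 1))
    {n : ℕ} (hn : n ≤ N) : |n * p.eval ((n : ℝ) ^ 2)| ≤ δ * harmonic N :=
  abs_le_mul_harmonic (v := fun n => n * p.eval ((n : ℝ) ^ 2)) (by simp) (by simpa using h) hn

lemma abs_coeff_le_of_abs_add_le {p : ℝ[X]} {N : ℕ} (hp : p.degree < N) {δ : ℝ}
    (h : ∀ n : ℕ, n < N →
      |n * p.eval ((n : ℝ) ^ 2) + (n + 1) * p.eval (((n : ℝ) + 1) ^ 2)| ≤ δ / (n + 1)) (j : ℕ) :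
    |p.coeff j| ≤ 2 ^ (j + 1) * (δ * harmonic N * harmonic N) := by
  refine abs_coeff_le_of_abs_eval_sqNode_le hp (fun n hn => ?_) j
  have := abs_mul_eval_sq_le_of_abs_add_le h (Nat.succ_le_of_lt hn)
  rwa [Nat.cast_succ] at this

lemma abs_eval_divX_sq_le {p : ℝ[X]} {B : ℝ} (h0 : |p.coeff 0| ≤ B) (h1 : |p.coeff 1| ≤ B) {n : ℕ}
    (h : |n * p.eval ((n : ℝ) ^ 2)| ≤ B) :
    |p.divX.eval ((n : ℝ) ^ 2)| ≤ 4 * B / (n + 1) := by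
  have hB : 0 ≤ B := (abs_nonneg _).trans h0
  rcases n.eq_zero_or_pos with rfl | hn
  · have heval : p.divX.eval (((0 : ℕ) : ℝ) ^ 2) = p.coeff 1 := by
      rw [Nat.cast_zero, zero_pow two_ne_zero, ← coeff_zero_eq_eval_zero, coeff_divX]
    rw [heval, Nat.cast_zero, zero_add, div_one]
    linarith
  · have hn1 : (1 : ℝ) ≤ n := by exact_mod_cast hn
    have heval : (n : ℝ) * (n * p.divX.eval ((n : ℝ) ^ 2)) = p.eval ((n : ℝ) ^ 2) - p.coeff 0 := by
      have hdivX := congrArg (eval ((n : ℝ) ^ 2)) (divX_mul_X_add p)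
      rw [eval_add, eval_mul, eval_X, eval_C] at hdivX
      linear_combination hdivX
    have hp : |p.eval ((n : ℝ) ^ 2)| ≤ B := by
      rw [abs_mul, Nat.abs_cast] at h
      exact (le_mul_of_one_le_left (abs_nonneg _) hn1).trans h
    have hdiv : n * |p.divX.eval ((n : ℝ) ^ 2)| ≤ 2 * B := by
      calc n * |p.divX.eval ((n : ℝ) ^ 2)| ≤ n * (n * |p.divX.eval ((n : ℝ) ^ 2)|) :=
            le_mul_of_one_le_left (by positivity) hn1
        _ = |p.eval ((n : ℝ) ^ 2) - p.coeff 0| := by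
            rw [← heval, abs_mul, abs_mul, Nat.abs_cast]
        _ ≤ 2 * B := (abs_sub _ _).trans (by linarith)
    rw [le_div_iff₀ (by positivity)]
    linarith [mul_le_mul_of_nonneg_right hn1 (abs_nonneg (p.divX.eval ((n : ℝ) ^ 2)))]

/-! ### Passage to the limit -/

/-- The difference of the truncated generating functions of `ζ({2}ʲ,1,2)` and `ζ(3,{2}ʲ)`. Its
coefficients tend to `0`; the case `j = 0` is Euler's `ζ(1,2) = ζ(3)`. -/
noncomputable def eulerPoly (N : ℕ) : ℝ[X] := twosPoly [] [1, 2] N - twosPoly [3] [] N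

lemma degree_eulerPoly_lt (N : ℕ) : (eulerPoly N).degree < N :=
  (degree_sub_le _ _).trans_lt
    (max_lt (degree_twosPoly_lt (by simp) N) (degree_twosPoly_lt (by simp) N))

lemma abs_eulerPoly_add_le {n N : ℕ} (h : n < N) :
    |n * (eulerPoly N).eval ((n : ℝ) ^ 2) + (n + 1) * (eulerPoly N).eval (((n : ℝ) + 1) ^ 2)| ≤
      6 / N / (n + 1) := by
  have hC := twosSum_nil_one_two_add N n
  have hB := abs_twosSum_three_add_sub_two_le (ks := []) (by simp) h
  simp only [List.nil_append, List.length_nil, pow_zero, mul_one] at hB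
  refine le_of_eq_of_le ?_ hB
  rw [abs_sub_comm, ← hC]
  simp only [eulerPoly, eval_sub, twosSum]
  ring_nf

lemma divX_eulerPoly (N : ℕ) :
    (eulerPoly N).divX = twosPoly [3, 2] [] N - twosPoly [2] [1, 2] N := by
  ext j
  simp only [eulerPoly, coeff_divX, coeff_sub, coeff_twosPoly, List.replicate_succ,
    List.nil_append, List.cons_append]
  ring

lemma one_le_harmonic {N : ℕ} (h : 0 < N) : 1 ≤ harmonic N := by
  simpa [harmonic] using single_le_sum (f := fun i : ℕ => ((i + 1 : ℕ) : ℚ)⁻¹)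
    (fun i _ => by positivity) (mem_range.2 h)

lemma abs_eval_divX_eulerPoly_le {n N : ℕ} (hN : 0 < N) (h : n ≤ N) :
    |(eulerPoly N).divX.eval ((n : ℝ) ^ 2)| ≤ 96 / N * (harmonic N : ℝ) ^ 2 / (n + 1) := by
  have hH : (1 : ℝ) ≤ harmonic N := by exact_mod_cast one_le_harmonic hN
  have hcoeff := abs_coeff_le_of_abs_add_le (degree_eulerPoly_lt N) fun n => abs_eulerPoly_add_le
  have heval := abs_mul_eval_sq_le_of_abs_add_le (fun n => abs_eulerPoly_add_le) h
  set δ : ℝ := 6 / N * harmonic N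
  have hδ : 0 ≤ δ := by positivity
  have hle : δ ≤ δ * harmonic N := le_mul_of_one_le_right hδ hH
  calc |(eulerPoly N).divX.eval ((n : ℝ) ^ 2)| ≤ 4 * (4 * (δ * harmonic N)) / (n + 1) :=
        abs_eval_divX_sq_le ((hcoeff 0).trans (by norm_num; linarith))
          ((hcoeff 1).trans_eq (by norm_num)) (heval.trans (by linarith))
    _ = 96 / N * (harmonic N : ℝ) ^ 2 / (n + 1) := by ring

/-- The difference of the truncated generating functions of the two sides of Hoffman's identity. -/
noncomputable def hoffmanPoly (N : ℕ) : ℝ[X] :=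
  twosPoly [3] [1, 2] N - twosPoly [2, 2, 2] [] N - C 2 * twosPoly [3, 3] [] N

lemma degree_hoffmanPoly_lt (N : ℕ) : (hoffmanPoly N).degree < N := by
  refine (degree_sub_le _ _).trans_lt (max_lt ((degree_sub_le _ _).trans_lt (max_lt ?_ ?_)) ?_)
  · exact degree_twosPoly_lt (by simp) N
  · exact degree_twosPoly_lt (by simp) N
  · rw [degree_C_mul two_ne_zero]
    exact degree_twosPoly_lt (by simp) N

lemma abs_hoffmanPoly_add_le {n N : ℕ} (h : n < N) :
    |n * (hoffmanPoly N).eval ((n : ℝ) ^ 2) + (n + 1) * (hoffmanPoly N).eval (((n : ℝ) + 1) ^ 2)| ≤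
      216 / N * (harmonic N : ℝ) ^ 2 / (n + 1) := by
  have hN : 0 < N := (Nat.zero_le n).trans_lt h
  have hH : (1 : ℝ) ≤ harmonic N := by exact_mod_cast one_le_harmonic hN
  have hψ := abs_eval_divX_eulerPoly_le hN h.le
  have hψ' := abs_eval_divX_eulerPoly_le hN (Nat.succ_le_of_lt h)
  have herr := abs_twosSum_three_add_sub_two_le (ks := [3]) (by simp) h
  have hF := twosSum_one_two_add [] N n
  rw [Nat.cast_succ] at hψ'
  simp only [List.nil_append, List.cons_append, List.length_singleton, pow_one, twosSum_cons_two]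
    at herr hF
  set d := n * twosSum [3, 3] [] N n + (n + 1) * twosSum [3, 3] [] N (n + 1) -
    (twosSum [3, 2] [] N n - twosSum [3, 2] [] N (n + 1))
  have heq : n * (hoffmanPoly N).eval ((n : ℝ) ^ 2) +
      (n + 1) * (hoffmanPoly N).eval (((n : ℝ) + 1) ^ 2) =
      (eulerPoly N).divX.eval (((n : ℝ) + 1) ^ 2) - (eulerPoly N).divX.eval ((n : ℝ) ^ 2) -
        2 * d := by
    simp only [d, hoffmanPoly, divX_eulerPoly, eval_sub, eval_mul, eval_C]
    simp only [twosSum] at hF ⊢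
    linear_combination hF
  have hle : 12 / (N : ℝ) / (n + 1) ≤ 12 / N * (harmonic N : ℝ) ^ 2 / (n + 1) := by
    gcongr
    exact le_mul_of_one_le_right (by positivity) (one_le_pow₀ hH)
  calc _ ≤ 96 / N * (harmonic N : ℝ) ^ 2 / (n + 1 + 1) + 96 / N * (harmonic N : ℝ) ^ 2 / (n + 1) +
        2 * (12 / N * (harmonic N : ℝ) ^ 2 / (n + 1)) := by
        rw [heq]
        refine (abs_sub _ _).trans (add_le_add ((abs_sub _ _).trans (add_le_add hψ' hψ)) ?_)
        rw [abs_mul, abs_two]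
        gcongr
        exact (herr.trans_eq (by norm_num)).trans hle
    _ ≤ 96 / N * (harmonic N : ℝ) ^ 2 / (n + 1) + 96 / N * (harmonic N : ℝ) ^ 2 / (n + 1) +
        2 * (12 / N * (harmonic N : ℝ) ^ 2 / (n + 1)) := by
        gcongr
        linarith
    _ = 216 / N * (harmonic N : ℝ) ^ 2 / (n + 1) := by ring

lemma tendsto_harmonic_pow_div (k : ℕ) :
    Tendsto (fun N : ℕ => (harmonic N : ℝ) ^ k / N) atTop (𝓝 0) := by
  have hlog := Real.tendsto_pow_log_div_mul_add_atTop (Real.exp 1)⁻¹ 0 k (by positivity)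
  have hexp : Tendsto (fun N : ℕ => Real.exp 1 * N) atTop atTop :=
    tendsto_natCast_atTop_atTop.const_mul_atTop (Real.exp_pos 1)
  have hH (N : ℕ) : 0 ≤ (harmonic N : ℝ) :=
    Rat.cast_nonneg.2 (sum_nonneg fun _ _ => by positivity)
  refine squeeze_zero (fun N => div_nonneg (pow_nonneg (hH N) k) N.cast_nonneg) (fun N => ?_)
    (hlog.comp hexp)
  rcases N.eq_zero_or_pos with rfl | hN
  · simp
  · have hN' : (N : ℝ) ≠ 0 := by positivity
    have := hH N
    simp only [Function.comp_apply, add_zero]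
    rw [inv_mul_cancel_left₀ (Real.exp_pos 1).ne', Real.log_mul (Real.exp_pos 1).ne' hN',
      Real.log_exp]
    gcongr
    exact harmonic_le_one_add_log N

lemma tendsto_coeff_hoffmanPoly (j : ℕ) :
    Tendsto (fun N => (hoffmanPoly N).coeff j) atTop (𝓝 0) := by
  have hlim := (tendsto_harmonic_pow_div 4).const_mul (2 ^ (j + 1) * 216)
  rw [mul_zero] at hlim
  refine squeeze_zero_norm (fun N => ?_) hlim
  refine (abs_coeff_le_of_abs_add_le (degree_hoffmanPoly_lt N)
    (fun n => abs_hoffmanPoly_add_le) j).trans_eq ?_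
  ring

lemma coeff_hoffmanPoly (N j : ℕ) :
    (hoffmanPoly N).coeff j = (-1) ^ j * (mhs ([3] ++ List.replicate j 2 ++ [1, 2]) N -
      (mhs (List.replicate (j + 3) 2) N + 2 * mhs ([3, 3] ++ List.replicate j 2) N)) := by
  have hrep : [2, 2, 2] ++ List.replicate j 2 = List.replicate (j + 3) 2 := by
    simp [List.replicate_succ]
  simp only [hoffmanPoly, coeff_sub, coeff_C_mul, coeff_twosPoly, List.append_nil, hrep]
  ring

lemma tendsto_mhs_three_twos_one_two (j : ℕ) :
    Tendsto (mhs ([3] ++ List.replicate j 2 ++ [1, 2])) atTop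
      (𝓝 (mzv (List.replicate (j + 3) 2) + 2 * mzv ([3, 3] ++ List.replicate j 2))) := by
  have htwos := tendsto_mhs_mzv (ks := List.replicate (j + 3) 2) (by simp)
  have hthrees := tendsto_mhs_mzv (ks := [3, 3] ++ List.replicate j 2) (by grind)
  have hsub := (tendsto_coeff_hoffmanPoly j).const_mul ((-1) ^ j)
  have hlim := hsub.add (htwos.add (hthrees.const_mul 2))
  rw [mul_zero, zero_add] at hlim
  refine hlim.congr fun N => ?_
  rw [coeff_hoffmanPoly, ← mul_assoc, ← mul_pow, neg_one_mul, neg_neg, one_pow, one_mul,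
    sub_add_cancel]

end HoffmanIdentity

/-- Hoffman's conjectural identity:
`ζ(3,{2}^{c-1},1,2) = ζ({2}^{c+2}) + 2ζ(3,3,{2}^{c-1})` for every positive integer `c`. -/
theorem hoffman_identity (c : ℕ) (hc : 0 < c) :
    mzv ([3] ++ List.replicate (c - 1) 2 ++ [1, 2])
      = mzv (List.replicate (c + 2) 2) + 2 * mzv ([3, 3] ++ List.replicate (c - 1) 2) := by
  obtain ⟨j, rfl⟩ := Nat.exists_eq_add_one.2 hc
  exact HoffmanIdentity.mzv_eq_of_tendsto_mhs (HoffmanIdentity.tendsto_mhs_three_twos_one_two j)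
end

section
/- Let p be a prime, s a positive integer, and a_1,...,a_s, b_1,...,b_s positive integers. With l = a_1+···+a_s − s, one has the congruence Σ over 0<n_{i,1}≤···≤n_{i,a_i}≤m_{i,1}≤···≤m_{i,b_i}<p (for i∈[s]) with m_{i,b_i}<n_{i+1,1}, of Π_i 1/((p−n_{i,1})···(p−n_{i,a_i}) m_{i,1}···m_{i,b_i}) ≡ (−1)^l · Σ_{0<n_1<···<n_s<p} 1/(n_1^{a_1+b_1}···n_s^{a_s+b_s}) (mod p), as an identity of elements of ℤ/pℤ obtained from rationals whose denominators are prime to p. -/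
/-!
In `ℤ/p` the factor `1 / (p - n)` is `-1 / n`, so both sides should depend, up to sign, only on the
weights `w i = a i + b i`. On sequences supported in `[0, p)` consider the tail-sum operator
`S u x = ∑_{x ≤ n} u n`, the signed binomial transform `T u k = (-1) ^ k * ∑_n (n.choose k) * u n`
and the operator `J u k = k⁻¹ * S u k`.

* Summation over one block of the left side is `S ∘ k⁻¹` iterated `w` times, and
  `(S ∘ k⁻¹) ^ w ∘ S = S ∘ J ^ w`.
* The weight `k ^ (-w)` on the right side is also produced by `J ^ w`, since `T ∘ J = k⁻¹ ∘ T`.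
* Passing from one index `i` to the next evaluates at `L + 1` on the left and sums strictly to the
  right of `L` on the right. Replacing `u` by `n ↦ u (n + 1)` has the first effect on `S u` and, up
  to sign, the second on `T u`.

Starting from `u = δ_{p-1}`, for which `S u = T u = 1` because `(-1) ^ L * (p - 1).choose L = 1` in
`ℤ/p`, one sequence therefore represents the left side as `S u` and the right side as `T u`, and
`S u 0 = T u 0`.
-/

namespace DiamondCongruence

open Finset

section OrderedSum

variable {α R : Type*} [Preorder α] [DecidableLT α] [CommSemiring R]

/-- The sum of `∏ i, f i (x i)` over the families `x` of blocks that occupy successive intervals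
`[lo i (x i), hi i (x i)]`, all to the right of `L`. -/
def orderedSum {s : ℕ} {X : Fin s → Type*} [∀ i, Fintype (X i)] (lo hi : ∀ i, X i → α)
    (f : ∀ i, X i → R) (L : α) : R :=
  ∑ x : ∀ i, X i,
    if (∀ i j, i < j → hi i (x i) < lo j (x j)) ∧ ∀ i, L < lo i (x i) then ∏ i, f i (x i) else 0

lemma orderedSum_zero {X : Fin 0 → Type*} [∀ i, Fintype (X i)] (lo hi : ∀ i, X i → α)
    (f : ∀ i, X i → R) (L : α) : orderedSum lo hi f L = 1 := by
  simp [orderedSum]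

lemma orderedSum_succ {s : ℕ} {X : Fin (s + 1) → Type*} [∀ i, Fintype (X i)]
    (lo hi : ∀ i, X i → α) (f : ∀ i, X i → R) (hf : ∀ x, f 0 x ≠ 0 → lo 0 x ≤ hi 0 x) (L : α) :
    orderedSum lo hi f L = ∑ x, if L < lo 0 x then
      f 0 x * orderedSum (fun i ↦ lo i.succ) (fun i ↦ hi i.succ) (fun i ↦ f i.succ) (hi 0 x)
      else 0 := by
  rw [orderedSum, ← (Fin.consEquiv X).sum_comp, Fintype.sum_prod_type]
  refine sum_congr rfl fun x _ ↦ ?_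
  by_cases hx : f 0 x = 0
  · simp [Fin.consEquiv, Fin.prod_univ_succ, hx]
  have cond_iff (y : ∀ i : Fin s, X i.succ) :
      ((∀ i j, i < j → hi i (Fin.cons x y i : X i) < lo j (Fin.cons x y j : X j)) ∧
        ∀ i, L < lo i (Fin.cons x y i : X i)) ↔
      L < lo 0 x ∧ (∀ i j : Fin s, i < j → hi i.succ (y i) < lo j.succ (y j)) ∧
        ∀ i, hi 0 x < lo i.succ (y i) := by
    simp only [Fin.forall_fin_succ (n := s), Fin.cons_zero, Fin.cons_succ, false_imp_iff,
      true_and, Fin.succ_pos, true_imp_iff, Fin.not_lt_zero, Fin.succ_lt_succ_iff]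
    exact ⟨fun ⟨⟨hxy, hy⟩, hL, _⟩ ↦ ⟨hL, hy, hxy⟩, fun ⟨hL, hy, hxy⟩ ↦
      ⟨⟨hxy, hy⟩, hL, fun i ↦ hL.trans ((hf x hx).trans_lt (hxy i))⟩⟩
  simp only [Fin.consEquiv, Equiv.coe_fn_mk, cond_iff, Fin.prod_univ_succ, Fin.cons_zero,
    Fin.cons_succ, orderedSum, mul_sum, mul_ite, mul_zero]
  split_ifs with hL <;> simp [hL]

end OrderedSum

lemma forall_lt_iff_forall_succ {α : Type*} [Preorder α] {s : ℕ} {lo hi : Fin s → α}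
    (h : ∀ i, lo i ≤ hi i) :
    (∀ i j, i < j → hi i < lo j) ↔ ∀ (i : Fin s) (hs : (i : ℕ) + 1 < s), hi i < lo ⟨i + 1, hs⟩ := by
  refine ⟨fun H i hs ↦ H _ _ (Fin.lt_def.2 i.val.lt_succ_self), fun H i j hij ↦ ?_⟩
  suffices ∀ k, (i : ℕ) + 1 ≤ k → ∀ hk : k < s, hi i < lo ⟨k, hk⟩ from this j hij j.2
  intro k hik
  induction k, hik using Nat.le_induction with
  | base => exact H i
  | succ k _ ih => exact fun hk ↦ (ih _).trans ((h ⟨k, by omega⟩).trans_lt (H ⟨k, _⟩ hk))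

section TailSums

variable {R : Type*} [CommSemiring R]

lemma sum_fin_ite_le {M : Type*} [AddCommMonoid M] (p x : ℕ) (f : ℕ → M) :
    (∑ k : Fin p, if x ≤ (k : ℕ) then f k else 0) = ∑ k ∈ Ico x p, f k := by
  rw [Fin.sum_univ_eq_sum_range (fun k ↦ if x ≤ k then f k else 0), ← sum_filter]
  exact sum_congr (by ext; simp [and_comm]) fun _ _ ↦ rfl

/-- The operator taking `u` to its tail sums `x ↦ ∑_{x ≤ k < p} u k`. -/
def tailSum (p : ℕ) : Module.End R (ℕ → R) where
  toFun u x := ∑ k ∈ Ico x p, u k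
  map_add' u v := by ext; simp [sum_add_distrib]
  map_smul' c u := by ext; simp [mul_sum]

lemma tailSum_apply (p : ℕ) (u : ℕ → R) (x : ℕ) : tailSum p u x = ∑ k ∈ Ico x p, u k := rfl

lemma tailSum_succ_eq_tailSum_shift {p L : ℕ} {v : ℕ → R}
    (hv : v p = 0) (hL : L < p) :
    tailSum p v (L + 1) = tailSum p (fun n ↦ v (n + 1)) L := by
  rw [tailSum_apply, tailSum_apply, sum_Ico_add' v L p 1, sum_Ico_succ_top hL, hv, add_zero]

/-- The operator `F ↦ (x ↦ ∑_{x ≤ k < p} g k * F k)`, whose iterates sum over monotone sequences. -/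
def weightedTailSum (p : ℕ) (g : ℕ → R) : Module.End R (ℕ → R) :=
  tailSum p * LinearMap.mulLeft R g

lemma weightedTailSum_apply (p : ℕ) (g F : ℕ → R) (x : ℕ) :
    weightedTailSum p g F x = ∑ k ∈ Ico x p, g k * F k := rfl

lemma weightedTailSum_neg_pow {S : Type*} [CommRing S] (p w : ℕ) (g F : ℕ → S) :
    (weightedTailSum p (-g) ^ w) F = (-1 : S) ^ w • (weightedTailSum p g ^ w) F := by
  have weightedTailSum_neg : weightedTailSum p (-g) = (-1 : S) • weightedTailSum p g :=
    LinearMap.ext fun F ↦ funext fun x ↦ by simp [weightedTailSum_apply]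
  rw [weightedTailSum_neg, smul_pow, LinearMap.smul_apply]

lemma weightedTailSum_pow_congr {p w : ℕ} (hw : 0 < w) (g : ℕ → R)
    {F G : ℕ → R} (h : Set.EqOn F G (Set.Iio p)) :
    (weightedTailSum p g ^ w) F = (weightedTailSum p g ^ w) G := by
  have base : weightedTailSum p g F = weightedTailSum p g G :=
    funext fun x ↦ sum_congr rfl fun k hk ↦ congrArg (g k * ·) (h (mem_Ico.1 hk).2)
  obtain ⟨w, rfl⟩ := Nat.exists_eq_add_one.2 hw
  simp only [pow_succ, Module.End.mul_apply, base]

open scoped Classical in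
lemma sum_monotone_mul_last (p : ℕ) (g F : ℕ → R) (k x : ℕ) :
    (∑ c : Fin (k + 1) → Fin p, if x ≤ (c 0 : ℕ) ∧ Monotone c
      then (∏ j, g (c j)) * F (c (Fin.last k)) else 0) = (weightedTailSum p g ^ (k + 1)) F x := by
  induction k generalizing x with
  | zero =>
    rw [← (Equiv.funUnique (Fin 1) (Fin p)).symm.sum_comp]
    simp only [zero_add, pow_one, weightedTailSum_apply, ← sum_fin_ite_le]
    simp [Subsingleton.monotone]
  | succ k ih =>
    have monotone_cons (c : Fin p) (d : Fin (k + 1) → Fin p) :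
        Monotone (Fin.cons c d : Fin (k + 2) → Fin p) ↔ (c : ℕ) ≤ d 0 ∧ Monotone d :=
      monotone_vecCons
    rw [pow_succ', Module.End.mul_apply, weightedTailSum_apply, ← sum_fin_ite_le,
      ← (Fin.consEquiv fun _ : Fin (k + 2) ↦ Fin p).sum_comp, Fintype.sum_prod_type]
    simp only [Fin.consEquiv, Equiv.coe_fn_mk, monotone_cons, ← ih, Fin.prod_univ_succ,
      Fin.cons_zero, Fin.cons_succ, ← Fin.succ_last, mul_sum, mul_ite, mul_zero, mul_assoc]
    refine sum_congr rfl fun c _ ↦ ?_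
    split_ifs with hc <;> simp [hc]

open scoped Classical in
lemma sum_monotone_mul_last_of_pos (p : ℕ) (g F : ℕ → R) {w : ℕ} (hw : 0 < w) (x : ℕ) :
    (∑ c : Fin w → Fin p, if x ≤ (c ⟨0, hw⟩ : ℕ) ∧ Monotone c
      then (∏ j, g (c j)) * F (c ⟨w - 1, Nat.sub_lt hw Nat.one_pos⟩) else 0) =
    (weightedTailSum p g ^ w) F x := by
  obtain ⟨k, rfl⟩ := Nat.exists_eq_add_one.2 hw
  exact sum_monotone_mul_last p g F k x

end TailSums

section Blocks

variable {p a b : ℕ}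

/-- A pair `(n, m)` of sequences with `n₁ ≤ ⋯ ≤ n_a ≤ m₁ ≤ ⋯ ≤ m_b`, i.e. one index `i` of the
diamond sum. -/
def IsBlock (ha : 0 < a) (hb : 0 < b) (x : (Fin a → Fin p) × (Fin b → Fin p)) : Prop :=
  Monotone x.1 ∧ Monotone x.2 ∧ x.1 ⟨a - 1, Nat.sub_lt ha Nat.one_pos⟩ ≤ x.2 ⟨0, hb⟩

/-- The first entry of `n` in a block `(n, m)`. -/
def blockMin (ha : 0 < a) (x : (Fin a → Fin p) × (Fin b → Fin p)) : ℕ :=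
  x.1 ⟨0, ha⟩

/-- The last entry of `m` in a block `(n, m)`. -/
def blockMax (hb : 0 < b) (x : (Fin a → Fin p) × (Fin b → Fin p)) : ℕ :=
  x.2 ⟨b - 1, Nat.sub_lt hb Nat.one_pos⟩

lemma IsBlock.blockMin_le_blockMax {ha : 0 < a} {hb : 0 < b}
    {x : (Fin a → Fin p) × (Fin b → Fin p)} (hx : IsBlock ha hb x) :
    blockMin ha x ≤ blockMax hb x :=
  calc x.1 ⟨0, ha⟩
      ≤ x.1 ⟨a - 1, Nat.sub_lt ha Nat.one_pos⟩ := hx.1 (Nat.zero_le _)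
    _ ≤ x.2 ⟨0, hb⟩ := hx.2.2
    _ ≤ x.2 ⟨b - 1, Nat.sub_lt hb Nat.one_pos⟩ := hx.2.1 (Nat.zero_le _)

variable {R : Type*} [CommSemiring R]

open scoped Classical in
/-- The weight `∏ g(n_j) ∏ h(m_j)` of a pair `(n, m)`, extended by zero to pairs that do not form
a block. -/
noncomputable def blockWeight (g h : ℕ → R) (ha : 0 < a) (hb : 0 < b)
    (x : (Fin a → Fin p) × (Fin b → Fin p)) : R :=
  if IsBlock ha hb x then (∏ j, g (x.1 j)) * ∏ j, h (x.2 j) else 0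

lemma sum_blockWeight_mul (g h F : ℕ → R) (ha : 0 < a) (hb : 0 < b) (L : ℕ) :
    (∑ x : (Fin a → Fin p) × (Fin b → Fin p),
      if L < blockMin ha x then blockWeight g h ha hb x * F (blockMax hb x) else 0) =
    (weightedTailSum p g ^ a) ((weightedTailSum p h ^ b) F) (L + 1) := by
  classical
  rw [Fintype.sum_prod_type, ← sum_monotone_mul_last_of_pos p g _ ha]
  simp only [← sum_monotone_mul_last_of_pos p h F hb, mul_sum]
  refine sum_congr rfl fun n _ ↦ ?_
  by_cases hn : L + 1 ≤ (n ⟨0, ha⟩ : ℕ) ∧ Monotone n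
  · rw [if_pos hn]
    refine sum_congr rfl fun m _ ↦ ?_
    simp only [blockMin, blockMax, blockWeight, IsBlock, if_pos (Nat.lt_of_succ_le hn.1), hn.2,
      true_and, and_comm (a := Monotone m), ite_mul, mul_ite, mul_zero, zero_mul, mul_assoc,
      Fin.le_def]
  · rw [if_neg hn]
    refine sum_eq_zero fun m _ ↦ ?_
    simp only [blockWeight, blockMin, IsBlock]
    grind

/-- The sum of `∏ g(n_{i,j}) ∏ h(m_{i,j})` over all `n`, `m` with
`L < n_{i,1} ≤ ⋯ ≤ n_{i,a_i} ≤ m_{i,1} ≤ ⋯ ≤ m_{i,b_i} < p` and `m_{i,b_i} < n_{i+1,1}`. -/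
noncomputable def diamondSum (p : ℕ) (g h : ℕ → R) {s : ℕ} {a b : Fin s → ℕ} (ha : ∀ i, 0 < a i)
    (hb : ∀ i, 0 < b i) (L : ℕ) : R :=
  orderedSum (fun i ↦ blockMin (p := p) (ha i)) (fun i ↦ blockMax (hb i))
    (fun i ↦ blockWeight g h (ha i) (hb i)) L

lemma diamondSum_succ (g h : ℕ → R) {s : ℕ} {a b : Fin (s + 1) → ℕ} (ha : ∀ i, 0 < a i)
    (hb : ∀ i, 0 < b i) (L : ℕ) :
    diamondSum p g h ha hb L = (weightedTailSum p g ^ a 0) ((weightedTailSum p h ^ b 0)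
      (diamondSum p g h (fun i ↦ ha i.succ) fun i ↦ hb i.succ)) (L + 1) := by
  have blockMin_le_blockMax (x : (Fin (a 0) → Fin p) × (Fin (b 0) → Fin p))
      (hx : blockWeight g h (ha 0) (hb 0) x ≠ 0) : blockMin (ha 0) x ≤ blockMax (hb 0) x :=
    IsBlock.blockMin_le_blockMax (of_not_not fun not_isBlock ↦ hx (if_neg not_isBlock))
  rw [diamondSum, orderedSum_succ _ _ _ blockMin_le_blockMax, ← sum_blockWeight_mul g h _ (ha 0)]
  rfl

lemma diamondSum_eq_sum_sum {s : ℕ} {a b : Fin s → ℕ} (ha : ∀ i, 0 < a i)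
    (hb : ∀ i, 0 < b i) (g h : ℕ → R) (L : ℕ) :
    diamondSum p g h ha hb L =
    ∑ n : (i : Fin s) → Fin (a i) → Fin p, ∑ m : (i : Fin s) → Fin (b i) → Fin p,
      if (∀ i, L < (n i ⟨0, ha i⟩ : ℕ))
          ∧ (∀ i, ∀ j k : Fin (a i), j ≤ k → (n i j : ℕ) ≤ (n i k : ℕ))
          ∧ (∀ i, ∀ j k : Fin (b i), j ≤ k → (m i j : ℕ) ≤ (m i k : ℕ))
          ∧ (∀ i, (n i ⟨a i - 1, Nat.sub_lt (ha i) Nat.one_pos⟩ : ℕ) ≤ (m i ⟨0, hb i⟩ : ℕ))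
          ∧ (∀ i : Fin s, ∀ h : (i : ℕ) + 1 < s,
              (m i ⟨b i - 1, Nat.sub_lt (hb i) Nat.one_pos⟩ : ℕ)
                < (n ⟨(i : ℕ) + 1, h⟩ ⟨0, ha _⟩ : ℕ))
      then ∏ i, ((∏ j, g (n i j)) * ∏ j, h (m i j)) else 0 := by
  rw [diamondSum, orderedSum, ← (Equiv.arrowProdEquivProdArrow _ _ _).symm.sum_comp,
    Fintype.sum_prod_type]
  refine sum_congr rfl fun n _ ↦ sum_congr rfl fun m _ ↦ ?_
  simp only [blockWeight, Fintype.prod_ite_zero, ← ite_and]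
  congr 1
  refine propext ⟨?_, ?_⟩
  · rintro ⟨⟨hlt, hL⟩, isBlock⟩
    exact ⟨hL, fun i ↦ (isBlock i).1, fun i ↦ (isBlock i).2.1, fun i ↦ (isBlock i).2.2,
      (forall_lt_iff_forall_succ fun i ↦ (isBlock i).blockMin_le_blockMax).1 hlt⟩
  · rintro ⟨hL, hn, hm, hnm, hsucc⟩
    have isBlock i : IsBlock (ha i) (hb i) (n i, m i) := ⟨hn i, hm i, hnm i⟩
    exact ⟨⟨(forall_lt_iff_forall_succ fun i ↦ (isBlock i).blockMin_le_blockMax).2 hsucc, hL⟩,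
      isBlock⟩

end Blocks

section ZetaSums

variable {R : Type*} [CommSemiring R]

/-- The sum of `∏ h(n_i) ^ w_i` over `L < n_1 < ⋯ < n_s < p`; for `L = 0` and `h n = n⁻¹` this is
`ζ_p(w_1, …, w_s)`. -/
def zetaSum (p : ℕ) (h : ℕ → R) {s : ℕ} (w : Fin s → ℕ) (L : ℕ) : R :=
  orderedSum (fun _ (n : Fin p) ↦ (n : ℕ)) (fun _ n ↦ (n : ℕ)) (fun i n ↦ h n ^ w i) L

lemma zetaSum_succ (p : ℕ) (h : ℕ → R) {s : ℕ} (w : Fin (s + 1) → ℕ) (L : ℕ) :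
    zetaSum p h w L = ∑ k ∈ Ico (L + 1) p, h k ^ w 0 * zetaSum p h (Fin.tail w) k := by
  rw [zetaSum, orderedSum_succ _ _ _ fun _ _ ↦ le_rfl, ← sum_fin_ite_le]
  rfl

end ZetaSums

section BinomialTransform

variable {R : Type*} [CommRing R]

/-- The signed binomial transform `u ↦ (k ↦ (-1) ^ k * ∑_{n < p} (n.choose k) * u n)` of the
restriction of a sequence to `[0, p)`. -/
def binomialTransform (p : ℕ) : Module.End R (ℕ → R) where
  toFun u k := ∑ n ∈ range p, (-1) ^ k * n.choose k * u n
  map_add' u v := by ext; simp [mul_add, sum_add_distrib]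
  map_smul' c u := by ext; simp [mul_sum, mul_left_comm]

lemma binomialTransform_apply (p : ℕ) (u : ℕ → R) (k : ℕ) :
    binomialTransform p u k = ∑ n ∈ range p, (-1) ^ k * n.choose k * u n := rfl

lemma binomialTransform_apply_zero (p : ℕ) (u : ℕ → R) :
    binomialTransform p u 0 = tailSum p u 0 := by
  rw [tailSum_apply, ← range_eq_Ico, binomialTransform_apply]
  simp

lemma sum_Ico_neg_one_pow_mul_choose_succ {L n q : ℕ} (hL : L ≤ q) (hn : n < q) :
    ∑ k ∈ Ico (L + 1) (q + 1), (-1) ^ k * ((n + 1).choose k : R) = -((-1) ^ L * n.choose L) := by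
  have h : ∑ k ∈ Ico (L + 1) (q + 1), (-1) ^ k * ((n + 1).choose k : ℤ) =
      -((-1) ^ L * n.choose L) := by
    rw [sum_Ico_eq_sub _ (by omega), Int.alternating_sum_range_choose_eq_choose,
      Int.alternating_sum_range_choose_eq_choose, Nat.choose_eq_zero_of_lt hn]
    simp
  simpa using congrArg (Int.cast (R := R)) h

lemma tailSum_binomialTransform_succ {p L : ℕ} {v : ℕ → R}
    (hv : v p = 0) (hL : L < p) :
    tailSum p (binomialTransform p v) (L + 1) = -binomialTransform p (fun n ↦ v (n + 1)) L := by
  obtain ⟨q, rfl⟩ := Nat.exists_eq_add_one.2 (Nat.zero_lt_of_lt hL)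
  have sum_choose_zero : ∑ k ∈ Ico (L + 1) (q + 1), (-1) ^ k * ((0).choose k : R) = 0 :=
    sum_eq_zero fun k hk ↦ by
      rw [Nat.choose_eq_zero_of_lt (Nat.zero_lt_of_lt (mem_Ico.1 hk).1), Nat.cast_zero, mul_zero]
  calc tailSum (q + 1) (binomialTransform (q + 1) v) (L + 1)
      = ∑ n ∈ range (q + 1), (∑ k ∈ Ico (L + 1) (q + 1), (-1) ^ k * (n.choose k : R)) * v n := by
        simp only [tailSum_apply, binomialTransform_apply, sum_mul]
        exact sum_comm
    _ = ∑ n ∈ range q, -((-1) ^ L * n.choose L) * v (n + 1) := by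
        rw [sum_range_succ', sum_choose_zero, zero_mul, add_zero]
        exact sum_congr rfl fun n hn ↦ by
          rw [sum_Ico_neg_one_pow_mul_choose_succ (Nat.le_of_lt_succ hL) (mem_range.1 hn)]
    _ = -binomialTransform (q + 1) (fun n ↦ v (n + 1)) L := by
        rw [binomialTransform_apply, sum_range_succ, hv]
        simp

variable {K : Type*} [Field K]

lemma sum_range_inv_mul_choose {k n : ℕ} (hk : 0 < k) (hcast : ∀ m ∈ Ioc 0 n, (m : K) ≠ 0)
    (hk' : (k : K) ≠ 0) :
    ∑ m ∈ range (n + 1), (m : K)⁻¹ * m.choose k = (k : K)⁻¹ * n.choose k := by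
  obtain ⟨j, rfl⟩ := Nat.exists_eq_add_one.2 hk
  induction n with
  | zero => simp
  | succ n ih =>
    have absorb : ((n + 1 : ℕ) : K)⁻¹ * (n + 1).choose (j + 1) =
        ((j + 1 : ℕ) : K)⁻¹ * n.choose j := by
      have hn : ((n + 1 : ℕ) : K) ≠ 0 := hcast _ (by simp)
      rw [inv_mul_eq_iff_eq_mul₀ hn, mul_left_comm, eq_inv_mul_iff_mul_eq₀ hk', mul_comm]
      exact_mod_cast congrArg (Nat.cast (R := K)) (Nat.add_one_mul_choose_eq n j).symm
    rw [sum_range_succ, ih fun m hm ↦ hcast m (Ioc_subset_Ioc_right n.le_succ hm), absorb,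
      Nat.choose_succ_succ', Nat.cast_add (n.choose j), mul_add, add_comm]

/-- The operator `u ↦ (k ↦ k⁻¹ * ∑_{k ≤ n < p} u n)`, which the binomial transform carries to
multiplication by `k⁻¹`. At `k = 0` its value is the junk value `0`. -/
def invMulTailSum (K : Type*) [Field K] (p : ℕ) : Module.End K (ℕ → K) :=
  LinearMap.mulLeft K (fun k : ℕ ↦ (k : K)⁻¹) * tailSum p

lemma invMulTailSum_apply (p : ℕ) (u : ℕ → K) (k : ℕ) :
    invMulTailSum K p u k = (k : K)⁻¹ * ∑ n ∈ Ico k p, u n := rfl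

lemma weightedTailSum_pow_tailSum (p w : ℕ) (u : ℕ → K) :
    (weightedTailSum p (fun k : ℕ ↦ (k : K)⁻¹) ^ w) (tailSum p u) =
      tailSum p ((invMulTailSum K p ^ w) u) :=
  DFunLike.congr_fun
    (mul_pow_mul (tailSum p) (LinearMap.mulLeft K fun k : ℕ ↦ (k : K)⁻¹) w) u

lemma invMulTailSum_pow_apply_self {p w : ℕ} (hw : 0 < w) (u : ℕ → K) :
    (invMulTailSum K p ^ w) u p = 0 := by
  obtain ⟨w, rfl⟩ := Nat.exists_eq_add_one.2 hw
  simp [pow_succ', invMulTailSum_apply]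

variable {p : ℕ} [CharP K p]

lemma natCast_ne_zero_of_pos_of_lt {k : ℕ} (hk : 0 < k) (hkp : k < p) : (k : K) ≠ 0 :=
  fun h ↦ Nat.not_dvd_of_pos_of_lt hk hkp ((CharP.cast_eq_zero_iff K p k).1 h)

lemma binomialTransform_invMulTailSum {k : ℕ} (hk : 0 < k) (hkp : k < p) (u : ℕ → K) :
    binomialTransform p (invMulTailSum K p u) k = (k : K)⁻¹ * binomialTransform p u k :=
  calc binomialTransform p (invMulTailSum K p u) k
      = ∑ m ∈ range p, ∑ n ∈ Ico m p, (-1) ^ k * u n * ((m : K)⁻¹ * m.choose k) := by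
        rw [binomialTransform_apply]
        refine sum_congr rfl fun m _ ↦ ?_
        rw [invMulTailSum_apply, mul_sum, mul_sum]
        exact sum_congr rfl fun _ _ ↦ by ring
    _ = ∑ n ∈ range p, ∑ m ∈ range (n + 1), (-1) ^ k * u n * ((m : K)⁻¹ * m.choose k) := by
        refine sum_comm' fun m n ↦ ?_
        simp only [mem_range, mem_Ico]
        omega
    _ = ∑ n ∈ range p, (k : K)⁻¹ * ((-1) ^ k * n.choose k * u n) := by
        refine sum_congr rfl fun n hn ↦ ?_
        have hcast (m : ℕ) (hm : m ∈ Ioc 0 n) : (m : K) ≠ 0 :=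
          natCast_ne_zero_of_pos_of_lt (mem_Ioc.1 hm).1
            ((mem_Ioc.1 hm).2.trans_lt (mem_range.1 hn))
        rw [← mul_sum,
          sum_range_inv_mul_choose hk hcast (natCast_ne_zero_of_pos_of_lt hk hkp)]
        ring
    _ = (k : K)⁻¹ * binomialTransform p u k := by rw [binomialTransform_apply, mul_sum]

lemma binomialTransform_invMulTailSum_pow {k : ℕ} (hk : 0 < k) (hkp : k < p) (u : ℕ → K)
    (w : ℕ) :
    binomialTransform p ((invMulTailSum K p ^ w) u) k =
      (k : K)⁻¹ ^ w * binomialTransform p u k := by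
  induction w with
  | zero => simp
  | succ w ih =>
    rw [pow_succ', Module.End.mul_apply, binomialTransform_invMulTailSum hk hkp, ih, pow_succ',
      mul_assoc]

end BinomialTransform

section Density

lemma neg_one_pow_mul_choose_pred {R : Type*} [CommRing R] {p : ℕ} [CharP R p] (hp : p.Prime)
    {L : ℕ} (hL : L < p) : (-1) ^ L * ((p - 1).choose L : R) = 1 := by
  have h := congrArg (Int.cast (R := R))
    (Int.alternating_sum_range_choose_eq_choose (n := p - 1) (m := L))
  rw [Nat.sub_add_cancel hp.one_le, sum_range_succ'] at h
  have choose_eq_zero : ∀ k ∈ range L, ((-1) ^ (k + 1) * p.choose (k + 1) : R) = 0 := by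
    intro k hk
    have hkp : k + 1 < p := (Nat.succ_le_of_lt (mem_range.1 hk)).trans_lt hL
    rw [(CharP.cast_eq_zero_iff R p _).2 (hp.dvd_choose_self k.succ_ne_zero hkp), mul_zero]
  push_cast at h
  rw [← h, sum_eq_zero choose_eq_zero]
  simp

/-- The sequence attached to a composition `w` whose tail sums are, up to sign, the diamond sums
with `a i + b i = w i`, and whose binomial transform is, up to sign, the truncated multiple zeta
value of weights `w`. -/
noncomputable def density (K : Type*) [Field K] (p : ℕ) : {s : ℕ} → (Fin s → ℕ) → ℕ → K
  | 0, _ => Pi.single (p - 1) 1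
  | _ + 1, w => fun n ↦ (invMulTailSum K p ^ w 0) (density K p (Fin.tail w)) (n + 1)

variable {K : Type*} [Field K]

theorem diamondSum_eq_tailSum_density {p s : ℕ} {a b : Fin s → ℕ} (ha : ∀ i, 0 < a i)
    (hb : ∀ i, 0 < b i) {L : ℕ} (hL : L < p) :
    diamondSum p (-fun k : ℕ ↦ (k : K)⁻¹) (fun k ↦ (k : K)⁻¹) ha hb L =
      (-1) ^ (∑ i, a i) * tailSum p (density K p fun i ↦ a i + b i) L := by
  induction s generalizing L with
  | zero =>
    have hmem : p - 1 ∈ Ico L p := mem_Ico.2 (by omega)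
    simp [diamondSum, orderedSum_zero, density, tailSum_apply, hmem]
  | succ s ih =>
    set E := weightedTailSum p fun k : ℕ ↦ (k : K)⁻¹
    set u := density K p fun i : Fin s ↦ a i.succ + b i.succ
    set c : K := (-1) ^ ∑ i : Fin s, a i.succ
    have tail_eq : Set.EqOn (diamondSum p (-fun k : ℕ ↦ (k : K)⁻¹) (fun k ↦ (k : K)⁻¹)
        (fun i ↦ ha (Fin.succ i)) fun i ↦ hb (Fin.succ i)) (c • tailSum p u) (Set.Iio p) :=
      fun M hM ↦ ih (fun i ↦ ha i.succ) (fun i ↦ hb i.succ) hM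
    have hv : (invMulTailSum K p ^ (a 0 + b 0)) u p = 0 :=
      invMulTailSum_pow_apply_self (Nat.add_pos_left (ha 0) _) u
    rw [diamondSum_succ, weightedTailSum_pow_congr (hb 0) _ tail_eq]
    calc (weightedTailSum p (-fun k : ℕ ↦ (k : K)⁻¹) ^ a 0) ((E ^ b 0) (c • tailSum p u)) (L + 1)
      _ = (-1) ^ a 0 * c * (E ^ (a 0 + b 0)) (tailSum p u) (L + 1) := by
        rw [weightedTailSum_neg_pow, map_smul, map_smul, pow_add, Module.End.mul_apply, mul_assoc]
        rfl
      _ = (-1) ^ (∑ i, a i) * tailSum p ((invMulTailSum K p ^ (a 0 + b 0)) u) (L + 1) := by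
        rw [weightedTailSum_pow_tailSum, Fin.sum_univ_succ, pow_add (-1 : K)]
      _ = (-1) ^ (∑ i, a i) * tailSum p (density K p fun i ↦ a i + b i) L := by
        rw [tailSum_succ_eq_tailSum_shift hv hL]
        rfl

theorem zetaSum_eq_binomialTransform_density {p : ℕ} [CharP K p] (hp : p.Prime) {s : ℕ}
    {w : Fin s → ℕ} (hw : ∀ i, 0 < w i) {L : ℕ} (hL : L < p) :
    zetaSum p (fun k ↦ (k : K)⁻¹) w L = (-1) ^ s * binomialTransform p (density K p w) L := by
  induction s generalizing L with
  | zero =>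
    simp [zetaSum, orderedSum_zero, density, binomialTransform_apply, Pi.single_apply,
      neg_one_pow_mul_choose_pred hp hL, hp.pos]
  | succ s ih =>
    set v := (invMulTailSum K p ^ w 0) (density K p (Fin.tail w)) with hv_def
    have hv : v p = 0 := invMulTailSum_pow_apply_self (hw 0) _
    calc zetaSum p (fun k ↦ (k : K)⁻¹) w L
      _ = ∑ k ∈ Ico (L + 1) p, (k : K)⁻¹ ^ w 0 * zetaSum p (fun k ↦ (k : K)⁻¹) (Fin.tail w) k :=
        zetaSum_succ ..
      _ = ∑ k ∈ Ico (L + 1) p, (-1) ^ s * binomialTransform p v k := by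
        refine sum_congr rfl fun k hk ↦ ?_
        obtain ⟨hLk, hkp⟩ := mem_Ico.1 hk
        rw [ih (w := Fin.tail w) (fun i ↦ hw i.succ) hkp, hv_def,
          binomialTransform_invMulTailSum_pow (Nat.zero_lt_of_lt hLk) hkp, mul_left_comm]
      _ = (-1) ^ (s + 1) * binomialTransform p (density K p w) L := by
        rw [← mul_sum, ← tailSum_apply, tailSum_binomialTransform_succ hv hL, pow_succ, mul_neg,
          mul_neg_one, neg_mul]
        rfl

end Density

end DiamondCongruence

open DiamondCongruence in
/-- Hirose–Maesaka–Seki–Watanabe-type congruence: for a prime `p`, positive integers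
`a₁,…,a_s, b₁,…,b_s` and `l = a₁+⋯+a_s − s`, the sum over
`0<n_{i,1}≤⋯≤n_{i,a_i}≤m_{i,1}≤⋯≤m_{i,b_i}<p` (`i ∈ [s]`) with `m_{i,b_i} < n_{i+1,1}`
of `∏_i 1/((p−n_{i,1})⋯(p−n_{i,a_i}) m_{i,1}⋯m_{i,b_i})` is congruent mod `p` to
`(−1)^l ∑_{0<n₁<⋯<n_s<p} 1/(n₁^{a₁+b₁}⋯n_s^{a_s+b_s})`, as elements of `ℤ/pℤ`. -/
theorem diamond_congruence (p : ℕ) (hp : p.Prime) (s : ℕ) (hs : 0 < s)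
    (a b : Fin s → ℕ) (ha : ∀ i, 0 < a i) (hb : ∀ i, 0 < b i) :
    (∑ n : (i : Fin s) → Fin (a i) → Fin p, ∑ m : (i : Fin s) → Fin (b i) → Fin p,
      if (∀ i, 0 < (n i ⟨0, ha i⟩ : ℕ))
          ∧ (∀ i, ∀ j k : Fin (a i), j ≤ k → (n i j : ℕ) ≤ (n i k : ℕ))
          ∧ (∀ i, ∀ j k : Fin (b i), j ≤ k → (m i j : ℕ) ≤ (m i k : ℕ))
          ∧ (∀ i, (n i ⟨a i - 1, Nat.sub_lt (ha i) Nat.one_pos⟩ : ℕ) ≤ (m i ⟨0, hb i⟩ : ℕ))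
          ∧ (∀ i : Fin s, ∀ h : (i : ℕ) + 1 < s,
              (m i ⟨b i - 1, Nat.sub_lt (hb i) Nat.one_pos⟩ : ℕ)
                < (n ⟨(i : ℕ) + 1, h⟩ ⟨0, ha _⟩ : ℕ))
      then ∏ i, ((∏ j, ((p : ZMod p) - ((n i j : ℕ) : ZMod p))⁻¹)
            * ∏ j, (((m i j : ℕ) : ZMod p))⁻¹)
      else 0)
    = (-1) ^ ((∑ i, a i) - s)
      * ∑ n : Fin s → Fin p,
          if (∀ i j : Fin s, i < j → (n i : ℕ) < (n j : ℕ)) ∧ (∀ i, 0 < (n i : ℕ))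
          then ∏ i, (((n i : ℕ) : ZMod p) ^ (a i + b i))⁻¹
          else 0 := by
  have : Fact p.Prime := ⟨hp⟩
  have hs_le : s ≤ ∑ i, a i := by
    simpa using Finset.card_nsmul_le_sum Finset.univ a 1 fun i _ ↦ ha i
  simp only [CharP.cast_eq_zero, zero_sub, inv_neg, ← inv_pow]
  calc _
    _ = diamondSum p (-fun k : ℕ ↦ (k : ZMod p)⁻¹) (fun k ↦ (k : ZMod p)⁻¹) ha hb 0 :=
      (diamondSum_eq_sum_sum ..).symm
    _ = (-1) ^ (∑ i, a i - s) *
        ((-1) ^ s * tailSum p (density (ZMod p) p fun i ↦ a i + b i) 0) := by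
      rw [diamondSum_eq_tailSum_density ha hb hp.pos, ← mul_assoc, ← pow_add,
        Nat.sub_add_cancel hs_le]
    _ = (-1) ^ (∑ i, a i - s) * zetaSum p (fun k ↦ (k : ZMod p)⁻¹) (fun i ↦ a i + b i) 0 := by
      rw [zetaSum_eq_binomialTransform_density hp (fun i ↦ Nat.add_pos_left (ha i) _) hp.pos,
        binomialTransform_apply_zero]
end

section
/- For every prime p and positive integer c, the truncated sum congruence Σ_{0<n_1<···<n_c<p} 1/(n_1^3 n_2^2···n_{c-1}^2 n_c^3) + 2 Σ_{0<n_1<···<n_{c}<p} 1/(n_1^3 n_2^3 n_3^2···n_{c}^2) ≡ 0 (mod p) holds (for c=1 read the first sum as Σ 1/n_1^5 with appropriate interpretation: both sums are ζ_p(3,{2}^{c−1},3) and ζ_p(3,3,{2}^{c−1})); i.e. ζ_p(3,{2}^{c−1},3) + 2ζ_p(3,3,{2}^{c−1}) ≡ 0 (mod p). -/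
/-- The truncated multiple zeta value
`ζ_p(k₁,…,k_r) = ∑_{0<n₁<⋯<n_r<p} 1/(n₁^{k₁}⋯n_r^{k_r})`, with inverses computed
in `ℤ/pℤ`. -/
noncomputable def zetaP (p : ℕ) (ks : List ℕ) : ZMod p :=
  ∑ n : Fin ks.length → Fin p,
    if (∀ i j : Fin ks.length, i < j → (n i : ℕ) < (n j : ℕ)) ∧ (∀ i, 0 < (n i : ℕ)) then
      ∏ i, (((n i : ℕ) : ZMod p) ^ ks.get i)⁻¹
    else 0

/-!
Weight the pairs `i < j` by `1/(j - i)`. Sums of differences `F(i+1, j+1) - F(i, j)` then telescope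
along the diagonals `j - i = d`, and for `F(i, j) = ∏_{i ≤ k < j} (1 + y/k²) · ∑_{i ≤ k < j} 1/k³`
the connecting relation `1/(j-i) · (1/i - 1/j) = 1/(ij)` removes the weight from each term. Two
summations by parts and, modulo `p`, the symmetry `i ↦ p - i` leave an identity whose coefficient
at `y^{b+1}` is `ζ_p({2}^{b+3}) + ζ_p(3,{2}^b,3) + 2 ζ_p(3,3,{2}^b) = 0`, valid for every prime `p`.
Finally, `∏_{0<k<p} (1 - X²/k²) = (1 - X^{p-1})²` shows that `ζ_p({2}^n)` vanishes unless
`n ∈ {0, (p-1)/2, p-1}`.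
-/

open Finset

section MultipleHarmonicSum

variable {R : Type*} [CommSemiring R]

/-- The multiple harmonic sum `∑_{m ≤ n₁ < ⋯ < n_r < n} f(n₁)^{k₁} ⋯ f(n_r)^{k_r}` with letters
`f(i)` in place of `1/i`, by recursion on the smallest index. -/
def multipleHarmonicSum (f : ℕ → R) : List ℕ → ℕ → ℕ → R
  | [], _, _ => 1
  | k :: ks, m, n => ∑ i ∈ Ico m n, f i ^ k * multipleHarmonicSum f ks (i + 1) n

theorem multipleHarmonicSum_append_singleton (f : ℕ → R) (ks : List ℕ) (k m n : ℕ) :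
    multipleHarmonicSum f (ks ++ [k]) m n
      = ∑ j ∈ Ico m n, multipleHarmonicSum f ks m j * f j ^ k := by
  induction ks generalizing m with
  | nil => simp [multipleHarmonicSum]
  | cons l ks ih =>
    simp only [List.cons_append, multipleHarmonicSum, ih, mul_sum, sum_mul, mul_assoc]
    exact sum_Ico_Ico_comm' m n _

theorem forall_lt_cons_and_forall_le_iff {r p m : ℕ} (a : Fin p) (n : Fin r → Fin p) :
    ((∀ i j : Fin (r + 1), i < j →
        ((Fin.cons a n : Fin (r + 1) → Fin p) i : ℕ) < (Fin.cons a n : Fin (r + 1) → Fin p) j)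
      ∧ ∀ i, m ≤ ((Fin.cons a n : Fin (r + 1) → Fin p) i : ℕ))
    ↔ m ≤ (a : ℕ) ∧ (∀ i j, i < j → (n i : ℕ) < n j) ∧ ∀ i, (a : ℕ) + 1 ≤ n i := by
  simp only [Fin.forall_fin_succ, Fin.cons_zero, Fin.cons_succ, Fin.succ_lt_succ_iff,
    Fin.succ_pos, Fin.not_lt_zero, false_imp_iff, true_imp_iff, true_and,
    Nat.succ_le_iff]
  exact ⟨fun ⟨⟨ha, hn⟩, hm, _⟩ => ⟨hm, hn, ha⟩,
    fun ⟨hm, hn, ha⟩ => ⟨⟨ha, hn⟩, hm, fun i => hm.trans (ha i).le⟩⟩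

theorem sum_ite_eq_multipleHarmonicSum (f : ℕ → R) (p : ℕ) (ks : List ℕ) (m : ℕ) :
    (∑ n : Fin ks.length → Fin p,
      if (∀ i j, i < j → (n i : ℕ) < n j) ∧ ∀ i, m ≤ (n i : ℕ) then
        ∏ i, f (n i) ^ ks.get i
      else 0) = multipleHarmonicSum f ks m p := by
  induction ks generalizing m with
  | nil => simp [multipleHarmonicSum]
  | cons k ks ih =>
    have sum_tails (a : Fin p) :
        (∑ n : Fin ks.length → Fin p,
          if (∀ i j : Fin (ks.length + 1), i < j →
                ((Fin.cons a n : Fin (ks.length + 1) → Fin p) i : ℕ)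
                  < (Fin.cons a n : Fin (ks.length + 1) → Fin p) j)
              ∧ ∀ i, m ≤ ((Fin.cons a n : Fin (ks.length + 1) → Fin p) i : ℕ) then
            ∏ i, f ((Fin.cons a n : Fin (ks.length + 1) → Fin p) i) ^ (k :: ks).get i
          else 0)
        = if m ≤ (a : ℕ) then f a ^ k * multipleHarmonicSum f ks (a + 1) p else 0 := by
      simp only [forall_lt_cons_and_forall_le_iff, ite_and, ← ih, mul_sum, mul_ite, mul_zero,
        Fin.prod_univ_succ, Fin.cons_zero, Fin.cons_succ, List.get_cons_zero, List.get_cons_succ']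
      split_ifs <;> simp
    have Ico_eq_filter : Ico m p = {a ∈ range p | m ≤ a} := by ext; simp [and_comm]
    rw [multipleHarmonicSum, Ico_eq_filter, sum_filter,
      ← Fin.sum_univ_eq_sum_range (fun a => if m ≤ a then _ else 0)]
    simp only [← sum_tails]
    rw [← Fintype.sum_prod_type']
    exact ((Fin.consEquiv fun _ => Fin p).sum_comp _).symm

end MultipleHarmonicSum

section TwosProd

variable {R : Type*} [CommRing R]

/-- The product `∏_{m ≤ i < n} (1 + f(i)² y)`, the generating function in `y` of the multiple
harmonic sums with all exponents equal to `2`. -/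
def twosProd (f : ℕ → R) (y : R) (m n : ℕ) : R :=
  ∏ i ∈ Ico m n, (1 + f i ^ 2 * y)

/-- The depth-one sum `∑_{m ≤ i < n} f(i)³`. -/
def cubeSum (f : ℕ → R) (m n : ℕ) : R :=
  ∑ i ∈ Ico m n, f i ^ 3

variable (f : ℕ → R) (y : R) {m n : ℕ}

@[simp] theorem twosProd_self (m : ℕ) : twosProd f y m m = 1 := by simp [twosProd]

@[simp] theorem cubeSum_self (m : ℕ) : cubeSum f m m = 0 := by simp [cubeSum]

theorem twosProd_succ_right (h : m ≤ n) :
    twosProd f y m (n + 1) = twosProd f y m n * (1 + f n ^ 2 * y) :=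
  prod_Ico_succ_top h _

theorem twosProd_eq_mul_succ_left (h : m < n) :
    twosProd f y m n = (1 + f m ^ 2 * y) * twosProd f y (m + 1) n :=
  prod_eq_prod_Ico_succ_bot h _

theorem cubeSum_succ_right (h : m ≤ n) : cubeSum f m (n + 1) = cubeSum f m n + f n ^ 3 :=
  sum_Ico_succ_top h _

theorem cubeSum_eq_add_succ_left (h : m < n) :
    cubeSum f m n = f m ^ 3 + cubeSum f (m + 1) n :=
  sum_eq_sum_Ico_succ_bot h _

theorem cubeSum_add_cubeSum {k : ℕ} (hkm : k ≤ m) (hmn : m ≤ n) :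
    cubeSum f k m + cubeSum f m n = cubeSum f k n :=
  sum_Ico_consecutive _ hkm hmn

theorem sum_twosProd_mul_left (h : m ≤ n) :
    ∑ i ∈ Ico m n, twosProd f y (i + 1) n * (f i ^ 2 * y * cubeSum f i (n + 1) + f i ^ 3)
      = twosProd f y m n * cubeSum f m (n + 1) - f n ^ 3 := by
  set F : ℕ → R := fun i => twosProd f y i n * cubeSum f i (n + 1) with hF
  have step : ∀ i ∈ Ico m n,
      twosProd f y (i + 1) n * (f i ^ 2 * y * cubeSum f i (n + 1) + f i ^ 3)
        = -(F (i + 1) - F i) := fun i hi => by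
    have hin := (mem_Ico.1 hi).2
    simp only [hF, twosProd_eq_mul_succ_left f y hin,
      cubeSum_eq_add_succ_left f (Nat.lt_succ_of_lt hin)]
    ring
  rw [sum_congr rfl step, sum_neg_distrib, sum_Ico_sub F h]
  simp [hF, cubeSum_succ_right f le_rfl]

theorem sum_twosProd_mul_right (h : m < n) :
    ∑ j ∈ Ico (m + 1) n, twosProd f y (m + 1) j * (f j ^ 2 * y * cubeSum f m (j + 1) + f j ^ 3)
      = twosProd f y (m + 1) n * cubeSum f m n - f m ^ 3 := by
  set F : ℕ → R := fun j => twosProd f y (m + 1) j * cubeSum f m j with hF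
  have step : ∀ j ∈ Ico (m + 1) n,
      twosProd f y (m + 1) j * (f j ^ 2 * y * cubeSum f m (j + 1) + f j ^ 3)
        = F (j + 1) - F j := fun j hj => by
    have hmj := (mem_Ico.1 hj).1
    simp only [hF, twosProd_succ_right f y hmj, cubeSum_succ_right f (Nat.le_of_succ_le hmj)]
    ring
  rw [sum_congr rfl step, sum_Ico_sub F h]
  simp [hF, cubeSum_succ_right f le_rfl]

theorem sum_Ico_one_reflect {M : Type*} [AddCommMonoid M] (F : ℕ → M) (p : ℕ) :
    ∑ i ∈ Ico 1 p, F (p - i) = ∑ i ∈ Ico 1 p, F i := by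
  simpa using sum_Ico_reflect F 1 p.le_succ

theorem sum_sum_mul_diagonal_sub (g : ℕ → R) (F : ℕ → ℕ → R) (p : ℕ) :
    ∑ j ∈ Ico 1 p, ∑ i ∈ Ico 1 j, g (j - i) * (F (i + 1) (j + 1) - F i j)
      = ∑ d ∈ Ico 1 p, g d * (F (p - d) p - F 1 (d + 1)) := by
  obtain rfl | hp := p.eq_zero_or_pos
  · simp
  induction p, hp using Nat.le_induction with
  | base => simp
  | succ p hp ih =>
    have last_row : ∑ i ∈ Ico 1 p, g (p - i) * (F (i + 1) (p + 1) - F i p)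
        = ∑ d ∈ Ico 1 p, g d * (F (p + 1 - d) (p + 1) - F (p - d) p) := by
      rw [← sum_Ico_one_reflect]
      refine sum_congr rfl fun d hd => ?_
      have hdp := (mem_Ico.1 hd).2.le
      rw [Nat.sub_sub_self hdp, Nat.succ_sub hdp]
    rw [sum_Ico_succ_top hp, sum_Ico_succ_top hp, ih, last_row, ← sum_add_distrib,
      Nat.add_sub_cancel_left, sub_self, mul_zero, add_zero]
    exact sum_congr rfl fun d _ => by ring

/-- The generating function in `y` of the multiple harmonic sums over `[1, p)` with exponents
`k, 2, …, 2, l`. -/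
def twosBetween (f : ℕ → R) (y : R) (k l p : ℕ) : R :=
  ∑ j ∈ Ico 1 p, ∑ i ∈ Ico 1 j, f i ^ k * twosProd f y (i + 1) j * f j ^ l

variable {f} {p : ℕ}

theorem sum_mul_reflect (hneg : ∀ i ≤ p, f (p - i) = -f i) (g : ℕ → R) :
    ∑ d ∈ Ico 1 p, f d * g (p - d) = -∑ d ∈ Ico 1 p, f d * g d := by
  rw [← sum_Ico_one_reflect (fun d => f d * g (p - d)), ← sum_neg_distrib]
  refine sum_congr rfl fun d hd => ?_
  have hdp := (mem_Ico.1 hd).2.le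
  rw [hneg d hdp, Nat.sub_sub_self hdp, neg_mul]

theorem twosProd_reflect (hneg : ∀ i ≤ p, f (p - i) = -f i) (hn : n ≤ p + 1) :
    twosProd f y (p + 1 - n) (p + 1 - m) = twosProd f y m n := by
  rw [twosProd, ← prod_Ico_reflect _ _ hn]
  refine prod_congr rfl fun i hi => ?_
  rw [hneg i (by grind), neg_sq]

theorem cubeSum_reflect (hneg : ∀ i ≤ p, f (p - i) = -f i) (hn : n ≤ p + 1) :
    cubeSum f (p + 1 - n) (p + 1 - m) = -cubeSum f m n := by
  rw [cubeSum, cubeSum, ← sum_Ico_reflect _ _ hn, ← sum_neg_distrib]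
  refine sum_congr rfl fun i hi => ?_
  rw [hneg i (by grind), Odd.neg_pow (by decide)]

theorem mul_twosProd_mul_cubeSum_sub {c : R} {i j : ℕ} (hij : i < j)
    (hc : c * (f i - f j) = f i * f j) :
    c * (twosProd f y (i + 1) (j + 1) * cubeSum f (i + 1) (j + 1)
        - twosProd f y i j * cubeSum f i j)
      = -(f j * (twosProd f y (i + 1) j * (f i ^ 2 * y * cubeSum f i (j + 1) + f i ^ 3))
        + f i * (twosProd f y (i + 1) j * (f j ^ 2 * y * cubeSum f i (j + 1) + f j ^ 3))
        + f i ^ 2 * twosProd f y (i + 1) j * f j ^ 2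
        + y * (f i ^ 3 * twosProd f y (i + 1) j * f j ^ 3)) := by
  rw [twosProd_succ_right f y hij, twosProd_eq_mul_succ_left f y hij,
    cubeSum_succ_right f hij, cubeSum_succ_right f hij.le, cubeSum_eq_add_succ_left f hij]
  generalize twosProd f y (i + 1) j = H, cubeSum f (i + 1) j = T, f i = u, f j = v at *
  linear_combination (-H * (y * (u + v) * (u ^ 3 + T + v ^ 3) + u ^ 2 + u * v + v ^ 2
    + y * u ^ 2 * v ^ 2)) * hc

theorem twosBetween_two_two_add (hneg : ∀ i ≤ p, f (p - i) = -f i)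
    (hconn : ∀ i j, 0 < i → i < j → j < p → f (j - i) * (f i - f j) = f i * f j) :
    twosBetween f y 2 2 p + y * twosBetween f y 3 3 p
      = y * (∑ d ∈ Ico 1 p, f d ^ 3 * (twosProd f y 1 d * cubeSum f 1 (d + 1))
          + ∑ d ∈ Ico 1 p, f d ^ 3 * (twosProd f y (d + 1) p * cubeSum f d p))
        + 2 * ∑ d ∈ Ico 1 p, f d ^ 4 := by
  set F : ℕ → ℕ → R := fun i j => twosProd f y i j * cubeSum f i j with hF
  have rows : ∑ j ∈ Ico 1 p, ∑ i ∈ Ico 1 j,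
        f j * (twosProd f y (i + 1) j * (f i ^ 2 * y * cubeSum f i (j + 1) + f i ^ 3))
      = ∑ j ∈ Ico 1 p, f j * (twosProd f y 1 j * cubeSum f 1 (j + 1) - f j ^ 3) :=
    sum_congr rfl fun j hj => by
      rw [← mul_sum, sum_twosProd_mul_left f y (mem_Ico.1 hj).1]
  have columns : ∑ j ∈ Ico 1 p, ∑ i ∈ Ico 1 j,
        f i * (twosProd f y (i + 1) j * (f j ^ 2 * y * cubeSum f i (j + 1) + f j ^ 3))
      = ∑ i ∈ Ico 1 p, f i * (twosProd f y (i + 1) p * cubeSum f i p - f i ^ 3) := by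
    rw [← sum_Ico_Ico_comm']
    exact sum_congr rfl fun i hi => by
      rw [← mul_sum, sum_twosProd_mul_right f y (mem_Ico.1 hi).2]
  have boundary : ∑ d ∈ Ico 1 p, f d * (F (p - d) p - F 1 (d + 1))
      = -∑ d ∈ Ico 1 p, f d * (F d p + F 1 (d + 1)) := by
    simp only [mul_sub, mul_add, sum_sub_distrib, sum_add_distrib,
      sum_mul_reflect hneg (fun d => F d p)]
    ring
  have expanded : twosBetween f y 2 2 p + y * twosBetween f y 3 3 p
      + ∑ j ∈ Ico 1 p, f j * (twosProd f y 1 j * cubeSum f 1 (j + 1) - f j ^ 3)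
      + ∑ i ∈ Ico 1 p, f i * (twosProd f y (i + 1) p * cubeSum f i p - f i ^ 3)
      = -∑ j ∈ Ico 1 p, ∑ i ∈ Ico 1 j, f (j - i) * (F (i + 1) (j + 1) - F i j) := by
    rw [← rows, ← columns]
    simp only [twosBetween, mul_sum, ← sum_add_distrib, ← sum_neg_distrib]
    refine sum_congr rfl fun j hj => sum_congr rfl fun i hi => ?_
    obtain ⟨⟨-, hjp⟩, hi0, hij⟩ := And.intro (mem_Ico.1 hj) (mem_Ico.1 hi)
    rw [mul_twosProd_mul_cubeSum_sub y hij (hconn i j hi0 hij hjp)]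
    ring
  rw [sum_sum_mul_diagonal_sub, boundary, neg_neg] at expanded
  have split_boundary : ∑ d ∈ Ico 1 p, f d * (F d p + F 1 (d + 1))
      = y * (∑ d ∈ Ico 1 p, f d ^ 3 * (twosProd f y 1 d * cubeSum f 1 (d + 1))
          + ∑ d ∈ Ico 1 p, f d ^ 3 * (twosProd f y (d + 1) p * cubeSum f d p))
        + 2 * ∑ d ∈ Ico 1 p, f d ^ 4
        + ∑ j ∈ Ico 1 p, f j * (twosProd f y 1 j * cubeSum f 1 (j + 1) - f j ^ 3)
        + ∑ i ∈ Ico 1 p, f i * (twosProd f y (i + 1) p * cubeSum f i p - f i ^ 3) := by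
    simp only [mul_add, mul_sum, ← sum_add_distrib]
    refine sum_congr rfl fun d hd => ?_
    obtain ⟨h1d, hdp⟩ := mem_Ico.1 hd
    simp only [hF, twosProd_succ_right f y h1d, twosProd_eq_mul_succ_left f y hdp]
    ring
  linear_combination expanded + split_boundary

theorem sum_cube_mul_twosProd_reflect (hneg : ∀ i ≤ p, f (p - i) = -f i) :
    ∑ d ∈ Ico 1 p, f d ^ 3 * (twosProd f y 1 d * cubeSum f 1 (d + 1))
      = ∑ d ∈ Ico 1 p, f d ^ 3 * (twosProd f y (d + 1) p * cubeSum f d p) := by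
  rw [← sum_Ico_one_reflect]
  refine sum_congr rfl fun d hd => ?_
  obtain ⟨hd1, hdp⟩ := mem_Ico.1 hd
  have hT := cubeSum_reflect (m := 1) (n := p - d + 1) hneg (by omega)
  have hH := twosProd_reflect y (m := 1) (n := p - d) hneg (by omega)
  rw [show p + 1 - (p - d + 1) = d by omega, Nat.add_sub_cancel] at hT
  rw [show p + 1 - (p - d) = d + 1 by omega, Nat.add_sub_cancel] at hH
  rw [hneg d hdp.le, ← hH, hT]
  ring

theorem two_mul_cubeSum_add_cubeSum (hneg : ∀ i ≤ p, f (p - i) = -f i) {d : ℕ} (h1d : 1 ≤ d)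
    (hdp : d ≤ p) : 2 * (cubeSum f 1 d + cubeSum f d p) = 0 := by
  have hT := cubeSum_reflect (m := 1) (n := p) hneg p.le_succ
  rw [Nat.add_sub_cancel_left, Nat.add_sub_cancel] at hT
  rw [cubeSum_add_cubeSum f h1d hdp]
  linear_combination hT

theorem twosBetween_hoffman (hneg : ∀ i ≤ p, f (p - i) = -f i)
    (hconn : ∀ i j, 0 < i → i < j → j < p → f (j - i) * (f i - f j) = f i * f j) :
    twosBetween f y 2 2 p + y * twosBetween f y 3 3 p
        + 2 * y * ∑ j ∈ Ico 1 p, cubeSum f 1 j * f j ^ 3 * twosProd f y (j + 1) p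
      = 2 * ∑ d ∈ Ico 1 p, f d ^ 4 := by
  have tail_eq : 2 * ∑ d ∈ Ico 1 p, f d ^ 3 * (twosProd f y (d + 1) p * cubeSum f d p)
      = -(2 * ∑ j ∈ Ico 1 p, cubeSum f 1 j * f j ^ 3 * twosProd f y (j + 1) p) := by
    simp only [mul_sum, ← sum_neg_distrib]
    refine sum_congr rfl fun d hd => ?_
    obtain ⟨h1d, hdp⟩ := mem_Ico.1 hd
    linear_combination (f d ^ 3 * twosProd f y (d + 1) p)
      * two_mul_cubeSum_add_cubeSum hneg h1d hdp.le
  rw [twosBetween_two_two_add y hneg hconn, sum_cube_mul_twosProd_reflect y hneg]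
  linear_combination y * tail_eq

end TwosProd

section Coefficients

open Polynomial

variable {R : Type*} [CommRing R] (f : ℕ → R)

theorem coeff_twosProd (m n b : ℕ) :
    (twosProd (fun i => C (f i)) X m n).coeff b
      = multipleHarmonicSum f (List.replicate b 2) m n := by
  obtain hnm | hmn := le_total n m
  · cases b <;> simp [twosProd, multipleHarmonicSum, List.replicate_succ, hnm, coeff_one]
  induction n, hmn using Nat.le_induction generalizing b with
  | base => cases b <;> simp [multipleHarmonicSum, List.replicate_succ, coeff_one]
  | succ n hmn ih =>
    rw [twosProd_succ_right _ _ hmn, mul_add, mul_one, ← mul_assoc, ← C_pow, coeff_add, ih]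
    cases b with
    | zero => simp [multipleHarmonicSum]
    | succ b =>
      rw [coeff_mul_X, coeff_mul_C, ih, List.replicate_succ']
      simp only [multipleHarmonicSum_append_singleton, sum_Ico_succ_top hmn]

theorem coeff_twosBetween (k l p b : ℕ) :
    (twosBetween (fun i => C (f i)) X k l p).coeff b
      = multipleHarmonicSum f (k :: List.replicate b 2 ++ [l]) 1 p := by
  rw [multipleHarmonicSum_append_singleton]
  simp only [twosBetween, multipleHarmonicSum, finsetSum_coeff, ← C_pow, coeff_mul_C,
    coeff_C_mul, coeff_twosProd, sum_mul]

theorem coeff_sum_cubeSum_mul_twosProd (p b : ℕ) :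
    (∑ j ∈ Ico 1 p, cubeSum (fun i => C (f i)) 1 j * C (f j) ^ 3
        * twosProd (fun i => C (f i)) X (j + 1) p).coeff b
      = multipleHarmonicSum f (3 :: 3 :: List.replicate b 2) 1 p := by
  simp only [multipleHarmonicSum, cubeSum, sum_mul, mul_sum]
  rw [← sum_Ico_Ico_comm']
  simp only [finsetSum_coeff, ← C_pow, ← C_mul, coeff_C_mul, coeff_twosProd, mul_assoc]

theorem multipleHarmonicSum_hoffman {p : ℕ} (hneg : ∀ i ≤ p, f (p - i) = -f i)
    (hconn : ∀ i j, 0 < i → i < j → j < p → f (j - i) * (f i - f j) = f i * f j) (b : ℕ) :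
    multipleHarmonicSum f (List.replicate (b + 3) 2) 1 p
      + multipleHarmonicSum f (3 :: List.replicate b 2 ++ [3]) 1 p
      + 2 * multipleHarmonicSum f (3 :: 3 :: List.replicate b 2) 1 p = 0 := by
  have identity := twosBetween_hoffman (f := fun i => C (f i)) X (p := p)
    (fun i hi => by rw [hneg i hi, C_neg])
    (fun i j hi hij hj => by simp only [← C_sub, ← C_mul, hconn i j hi hij hj])
  have hcoeff := congrArg (coeff · (b + 1)) identity
  have replicate_eq : 2 :: List.replicate (b + 1) 2 ++ [2] = List.replicate (b + 3) 2 := by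
    rw [List.cons_append, ← List.replicate_succ', ← List.replicate_succ]
  have rhs_coeff : (2 * ∑ d ∈ Ico 1 p, C (f d) ^ 4 : R[X]).coeff (b + 1) = 0 := by
    simp only [← C_pow, ← map_sum, two_mul, ← C_add, coeff_C_succ]
  rw [mul_comm 2 X, mul_assoc] at hcoeff
  simp only [coeff_add, coeff_X_mul, rhs_coeff, coeff_twosBetween, replicate_eq] at hcoeff
  rw [two_mul, coeff_add, coeff_sum_cubeSum_mul_twosProd, ← two_mul] at hcoeff
  exact hcoeff

end Coefficients

theorem zetaP_eq_multipleHarmonicSum (p : ℕ) [Fact p.Prime] (ks : List ℕ) :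
    zetaP p ks = multipleHarmonicSum (fun i => (i : ZMod p)⁻¹) ks 1 p := by
  simp only [← sum_ite_eq_multipleHarmonicSum, inv_pow]
  rfl

section Prime

open Polynomial

variable {p : ℕ}

theorem natCast_ne_zero_of_pos_of_lt {i : ℕ} (hi : 0 < i) (hip : i < p) : (i : ZMod p) ≠ 0 :=
  fun h => Nat.not_dvd_of_pos_of_lt hi hip ((ZMod.natCast_eq_zero_iff i p).1 h)

variable [Fact p.Prime]

theorem inv_natCast_sub {i : ℕ} (hi : i ≤ p) : ((p - i : ℕ) : ZMod p)⁻¹ = -(i : ZMod p)⁻¹ := by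
  rw [Nat.cast_sub hi, CharP.cast_eq_zero, zero_sub, inv_neg]

theorem inv_natCast_sub_mul_inv_sub_inv {i j : ℕ} (hi : 0 < i) (hij : i < j) (hj : j < p) :
    ((j - i : ℕ) : ZMod p)⁻¹ * ((i : ZMod p)⁻¹ - (j : ZMod p)⁻¹)
      = (i : ZMod p)⁻¹ * (j : ZMod p)⁻¹ := by
  have hsub : ((j - i : ℕ) : ZMod p) ≠ 0 := natCast_ne_zero_of_pos_of_lt (by omega) (by omega)
  rw [inv_sub_inv (natCast_ne_zero_of_pos_of_lt hi (hij.trans hj))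
    (natCast_ne_zero_of_pos_of_lt (hi.trans hij) hj), ← Nat.cast_sub hij.le, ← mul_div_assoc,
    inv_mul_cancel₀ hsub, one_div, mul_inv]

variable (p) in
theorem zetaP_hoffman (b : ℕ) :
    zetaP p (List.replicate (b + 3) 2) + zetaP p ([3] ++ List.replicate b 2 ++ [3])
      + 2 * zetaP p ([3, 3] ++ List.replicate b 2) = 0 := by
  simp only [zetaP_eq_multipleHarmonicSum]
  exact multipleHarmonicSum_hoffman _ (fun i => inv_natCast_sub)
    (fun i j => inv_natCast_sub_mul_inv_sub_inv) b

theorem prod_one_add_inv_mul_X {c : ZMod p} (hc : c ≠ 0) :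
    ∏ i ∈ Ico 1 p, (1 + C (c * (i : ZMod p)⁻¹) * X) = 1 - X ^ (p - 1) := by
  have hp : 1 < p := (Fact.out : p.Prime).one_lt
  refine eq_of_natDegree_lt_card_of_eval_eq _ _ Function.injective_id (fun x => ?_) ?_
  · obtain rfl | hx := eq_or_ne x 0
    · simp [eval_prod, Nat.sub_ne_zero_of_lt hp]
    have root_mem : (-(c * x)).val ∈ Ico 1 p :=
      mem_Ico.2 ⟨ZMod.val_pos.2 (neg_ne_zero.2 (mul_ne_zero hc hx)), ZMod.val_lt _⟩
    rw [id, eval_prod, prod_eq_zero root_mem]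
    · simp [ZMod.pow_card_sub_one_eq_one hx]
    · rw [ZMod.natCast_zmod_val]
      simp only [eval_add, eval_one, eval_mul, eval_C, eval_X]
      field_simp
      ring
  · have natDegree_factor_le (i : ℕ) : (1 + C (c * (i : ZMod p)⁻¹) * X).natDegree ≤ 1 := by
      compute_degree
    have natDegree_prod : (∏ i ∈ Ico 1 p, (1 + C (c * (i : ZMod p)⁻¹) * X)).natDegree ≤ p - 1 :=
      (natDegree_prod_le _ _).trans <|
        (sum_le_card_nsmul _ _ 1 fun i _ => natDegree_factor_le i).trans (by simp)
    have natDegree_one_sub : (1 - X ^ (p - 1) : (ZMod p)[X]).natDegree ≤ p - 1 := by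
      compute_degree
    rw [ZMod.card]
    omega

variable (p) in
theorem expand_two_twosProd_comp_neg_X :
    expand (ZMod p) 2 ((twosProd (fun i => C (i : ZMod p)⁻¹) X 1 p).comp (C (-1) * X))
      = (1 - X ^ (p - 1)) ^ 2 := by
  rw [sq]
  nth_rw 1 [← prod_one_add_inv_mul_X one_ne_zero]
  rw [← prod_one_add_inv_mul_X (neg_ne_zero.2 one_ne_zero), ← prod_mul_distrib, twosProd,
    Polynomial.prod_comp, map_prod]
  refine prod_congr rfl fun i _ => ?_
  simp only [map_neg, map_one, neg_mul, one_mul, add_comp, one_comp, mul_comp, pow_comp, C_comp,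
    X_comp, mul_neg, map_add, map_mul, map_pow, expand_C, expand_X]
  ring

theorem zetaP_replicate_two {n : ℕ} (h0 : n ≠ 0) (h1 : 2 * n ≠ p - 1) (h2 : n ≠ p - 1) :
    zetaP p (List.replicate n 2) = 0 := by
  have signed_coeff := congrArg (coeff · (2 * n)) (expand_two_twosProd_comp_neg_X p)
  have rhs : ((1 - X ^ (p - 1)) ^ 2 : (ZMod p)[X])
      = 1 - X ^ (p - 1) - X ^ (p - 1) + X ^ (2 * (p - 1)) := by ring
  simp only [rhs, coeff_expand_mul' two_pos, comp_C_mul_X_coeff, coeff_twosProd,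
    ← zetaP_eq_multipleHarmonicSum] at signed_coeff
  simpa [coeff_one, coeff_X_pow, h0, h1, h2] using signed_coeff

end Prime

theorem zetaP_hoffman_finite_general (p c : ℕ) (hp : p.Prime) (hc : 0 < c)
    (hpc : p ≠ 2 * c + 5) (hpc' : p ≠ c + 3) :
    zetaP p ([3] ++ List.replicate (c - 1) 2 ++ [3])
      + 2 * zetaP p ([3, 3] ++ List.replicate (c - 1) 2) = 0 := by
  have : Fact p.Prime := ⟨hp⟩
  have identity := zetaP_hoffman p (c - 1)
  rwa [show c - 1 + 3 = c + 2 by omega,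
    zetaP_replicate_two (by omega) (by omega) (by omega), zero_add] at identity

/-- The finite multiple zeta value analogue of Hoffman's identity:
`ζ_p(3,{2}^{c−1},3) + 2ζ_p(3,3,{2}^{c−1}) ≡ 0 (mod p)` (for primes `p` larger than the
weight `2c+4` plus one, so that `ζ_𝒜({2}^{c+2}) = 0` applies). -/
theorem zetaP_hoffman_finite (p c : ℕ) (hp : p.Prime) (hc : 0 < c)
    (hpc : 2 * c + 5 < p) :
    zetaP p ([3] ++ List.replicate (c - 1) 2 ++ [3])
      + 2 * zetaP p ([3, 3] ++ List.replicate (c - 1) 2) = 0 :=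
  zetaP_hoffman_finite_general p c hp hc (by omega) (by omega)
end

section
/- For every positive integer N and positive integer c, the finite-sum identity holds: Σ_{0<n_1<···<n_{c+2}<N} 1/(n_1^3 n_2^2···n_c^2 n_{c+1} n_{c+2}^2) + Σ_{0<n_1<···<n_c<n_{c+1}≤n_{c+2}<N} 1/(n_1^3 n_2^2···n_c^2 (N−n_{c+1}) n_{c+2}^2) = Σ_{0<n_1<···<n_{c+2}<N} 1/(n_1^2···n_{c+2}^2) + 2 Σ_{0<n_1<···<n_{c+1}<N} 1/(n_1^3 n_2^3 n_3^2···n_{c+1}^2). -/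
/-- The truncated multiple zeta sum `∑_{0<n₁<⋯<n_r<N} 1/(n₁^{k₁}⋯n_r^{k_r})` over `ℚ`. -/
def truncMZV (N : ℕ) (ks : List ℕ) : ℚ :=
  ∑ n : Fin ks.length → Fin N,
    if (∀ i j : Fin ks.length, i < j → (n i : ℕ) < (n j : ℕ)) ∧ (∀ i, 0 < (n i : ℕ)) then
      ∏ i, (1 : ℚ) / ((n i : ℕ) : ℚ) ^ ks.get i
    else 0

/-- The second sum on the left-hand side:
`∑_{0<n₁<⋯<n_c<n_{c+1}≤n_{c+2}<N} 1/(n₁³ n₂²⋯n_c² (N−n_{c+1}) n_{c+2}²)`. -/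
def truncFlat (N c : ℕ) : ℚ :=
  ∑ n : Fin (c + 2) → Fin N,
    if (∀ i j : Fin (c + 2), (i : ℕ) < (j : ℕ) → (j : ℕ) ≤ c → (n i : ℕ) < (n j : ℕ))
        ∧ (∀ i j : Fin (c + 2), (i : ℕ) < (j : ℕ) → (n i : ℕ) ≤ (n j : ℕ))
        ∧ (∀ i, 0 < (n i : ℕ)) then
      ∏ i : Fin (c + 2),
        if (i : ℕ) = 0 then (1 : ℚ) / ((n i : ℕ) : ℚ) ^ 3
        else if (i : ℕ) = c then (1 : ℚ) / ((N : ℚ) - ((n i : ℕ) : ℚ))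
        else (1 : ℚ) / ((n i : ℕ) : ℚ) ^ 2
    else 0

/-!
Write `I_k` for the operator `f ↦ (N ↦ ∑_{0<m<N} f m / m ^ k)`, so that the truncated multiple zeta
sum with exponents `k₁, …, k_r` is `I_{k_r} ⋯ I_{k₁} 1`. Let `M` be multiplication by
`∑_{0<m<N} 1 / m ^ 2` and `C` the operator `f ↦ (N ↦ ∑_{0<m<N} f m / (N - m))`. The stuffle product
gives `[M, I_k] = I_2 I_k + I_{k+2}`, and partial fractions give `[C, I_k] = ∑ I_i I_j` over
`i, j ≥ 1` with `i + j = k + 1`. By the Jacobi identity `E = [M, C] + I_2 I_1` satisfies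
`[E, I_2] = 0` and `[E, I_3] = I_2 ^ 3 + I_3 ^ 2`, while `E 1 = I_3 1`; hence
`E I_2 ^ (c - 1) I_3 1 = I_2 ^ (c + 2) 1 + 2 I_2 ^ (c - 1) I_3 I_3 1`. This is the level-`N`
identity, because the sum involving `N - n_{c+1}` is `[M, C] I_2 ^ (c - 1) I_3 1`.
-/

open Finset

section Tuples

variable {r : ℕ}

theorem sum_eq_sum_sum_snoc {α M : Type*} [AddCommMonoid M] {s : Finset (Fin (r + 1) → α)}
    {t : Finset α} {u : α → Finset (Fin r → α)}
    (hs : ∀ n, n ∈ s ↔ n (Fin.last r) ∈ t ∧ Fin.init n ∈ u (n (Fin.last r)))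
    (F : (Fin (r + 1) → α) → M) :
    ∑ n ∈ s, F n = ∑ m ∈ t, ∑ x ∈ u m, F (Fin.snoc x m) := by
  rw [sum_sigma']
  refine sum_bij' (fun n _ ↦ ⟨n (Fin.last r), Fin.init n⟩)
    (fun x _ ↦ Fin.snoc (α := fun _ ↦ α) x.2 x.1) ?_ ?_ ?_ ?_ ?_ <;> simp [hs]

theorem sum_ite_val_comp_mem {M : Type*} [AddCommMonoid M] {N : ℕ} {s : Finset (Fin r → ℕ)}
    (hs : ∀ n ∈ s, ∀ i, n i < N) (F : (Fin r → ℕ) → M) :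
    (∑ n : Fin r → Fin N, if Fin.val ∘ n ∈ s then F (Fin.val ∘ n) else 0) = ∑ n ∈ s, F n := by
  rw [← sum_filter]
  refine sum_bij (fun n _ ↦ Fin.val ∘ n) (by simp) ?_ ?_ (fun _ _ ↦ rfl)
  · exact fun n _ m _ h ↦ Fin.val_injective.comp_left h
  · exact fun n hn ↦ ⟨fun i ↦ ⟨n i, hs n hn i⟩, mem_filter.mpr ⟨mem_univ _, hn⟩, rfl⟩

theorem strictMono_iff_init_last {α : Type*} [Preorder α] (n : Fin (r + 1) → α) :
    StrictMono n ↔ StrictMono (Fin.init n) ∧ ∀ i, Fin.init n i < n (Fin.last r) := by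
  conv_lhs => rw [← Fin.snoc_init_self n, ← Fin.insertNth_last', Fin.strictMono_insertNth_iff]
  simp [Fin.castSucc_lt_last]

theorem strictMono_init_and_le_last_iff {α : Type*} [Preorder α] (n : Fin (r + 1) → α) :
    (StrictMono (Fin.init n) ∧ ∀ i, Fin.init n i ≤ n (Fin.last r)) ↔
      (∀ i j : Fin (r + 1), (i : ℕ) < j → (j : ℕ) < r → n i < n j) ∧
        ∀ i j : Fin (r + 1), (i : ℕ) < j → n i ≤ n j := by
  simp only [Fin.forall_fin_succ', StrictMono, Fin.init, Fin.lt_def, Fin.val_castSucc,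
    Fin.val_last]
  grind

/-- The tuples `0 < n₁ < ⋯ < n_r < N`. -/
def increasingTuples (r N : ℕ) : Finset (Fin r → ℕ) :=
  {n ∈ Fintype.piFinset fun _ ↦ Ico 1 N | StrictMono n}

/-- The tuples `0 < n₁ < ⋯ < n_r ≤ n_{r+1} < N`, in which only the last inequality is weak. -/
def weakLastTuples (r N : ℕ) : Finset (Fin (r + 1) → ℕ) :=
  {n ∈ Fintype.piFinset fun _ ↦ Ico 1 N |
    StrictMono (Fin.init n) ∧ ∀ i, Fin.init n i ≤ n (Fin.last r)}

theorem mem_increasingTuples {N : ℕ} {n : Fin r → ℕ} :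
    n ∈ increasingTuples r N ↔ (∀ i, n i ∈ Ico 1 N) ∧ StrictMono n := by
  simp only [increasingTuples, mem_filter, Fintype.mem_piFinset]

theorem mem_increasingTuples_succ {N : ℕ} (n : Fin (r + 1) → ℕ) :
    n ∈ increasingTuples (r + 1) N ↔
      n (Fin.last r) ∈ Ico 1 N ∧ Fin.init n ∈ increasingTuples r (n (Fin.last r)) := by
  simp only [mem_increasingTuples, strictMono_iff_init_last, Fin.forall_fin_succ', mem_Ico,
    Fin.init]
  grind

theorem mem_weakLastTuples {N : ℕ} (n : Fin (r + 1) → ℕ) :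
    n ∈ weakLastTuples r N ↔
      n (Fin.last r) ∈ Ico 1 N ∧ Fin.init n ∈ increasingTuples r (n (Fin.last r) + 1) := by
  rw [weakLastTuples, mem_filter, Fintype.mem_piFinset, mem_increasingTuples]
  simp only [Fin.forall_fin_succ', mem_Ico, Fin.init]
  grind

end Tuples

section Operators

variable {R : Type*} [CommSemiring R]

/-- The partial sum operator `f ↦ (N ↦ ∑_{0<m<N} f m)`. -/
def partialSum : Module.End R (ℕ → R) where
  toFun f N := ∑ m ∈ Ico 1 N, f m
  map_add' f g := by ext N; simp [sum_add_distrib]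
  map_smul' a f := by ext N; simp [mul_sum]

theorem partialSum_apply (f : ℕ → R) (N : ℕ) :
    partialSum f N = ∑ m ∈ Ico 1 N, f m := rfl

/-- The convolution operator `f ↦ (N ↦ ∑_{0<m<N} g (N - m) * f m)` with kernel `g`. -/
def convolve (g : ℕ → R) : Module.End R (ℕ → R) where
  toFun f N := ∑ m ∈ Ico 1 N, g (N - m) * f m
  map_add' f f' := by ext N; simp [mul_add, sum_add_distrib]
  map_smul' a f := by ext N; simp [mul_sum, mul_left_comm]

theorem convolve_apply (g f : ℕ → R) (N : ℕ) :
    convolve g f N = ∑ m ∈ Ico 1 N, g (N - m) * f m := rfl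

theorem convolve_one : convolve (1 : ℕ → R) = partialSum := by
  ext
  simp [convolve_apply, partialSum_apply]

theorem convolve_comm (f g : ℕ → R) : convolve f g = convolve g f := by
  ext N
  rw [convolve_apply, convolve_apply]
  refine sum_bij' (fun m _ ↦ N - m) (fun m _ ↦ N - m) ?_ ?_ ?_ ?_ ?_ <;> intro m hm <;>
    rw [mem_Ico] at *
  any_goals omega
  rw [Nat.sub_sub_self hm.2.le, mul_comm]

theorem commute_convolve (f g : ℕ → R) : Commute (convolve f) (convolve g) := by
  refine LinearMap.ext fun h ↦ funext fun N ↦ ?_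
  simp only [Module.End.mul_apply, convolve_apply, mul_sum]
  rw [sum_sigma', sum_sigma']
  refine sum_bij' (fun x _ ↦ ⟨N - x.1 + x.2, x.2⟩) (fun x _ ↦ ⟨N - x.1 + x.2, x.2⟩)
    ?_ ?_ ?_ ?_ ?_ <;> rintro ⟨m, k⟩ hmk <;> simp only [mem_sigma, mem_Ico] at hmk ⊢
  any_goals grind
  rw [show N - (N - m + k) = m - k by omega, Nat.add_sub_cancel, mul_left_comm]

theorem partialSum_mul_partialSum (f g : ℕ → R) :
    partialSum f * partialSum g =
      partialSum (f * partialSum g) + partialSum (partialSum f * g) + partialSum (f * g) := by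
  ext N
  simp only [partialSum_apply, Pi.mul_apply, Pi.add_apply]
  induction N with
  | zero => simp
  | succ n ih =>
    rcases n.eq_zero_or_pos with rfl | hn
    · simp
    · simp only [sum_Ico_succ_top (Nat.one_le_iff_ne_zero.mpr hn.ne'), add_mul, mul_add, ih]
      ring

end Operators

section NestedSums

variable {R : Type*} [CommSemiring R] {r : ℕ}

/-- The nested sum `∑_{0<n₁<⋯<n_r<N} w₁(n₁)⋯w_r(n_r)`, as a function of `N`. -/
def nestedSum (w : Fin r → ℕ → R) (N : ℕ) : R :=
  ∑ n ∈ increasingTuples r N, ∏ i, w i (n i)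

theorem nestedSum_zero (w : Fin 0 → ℕ → R) : nestedSum w = 1 := by
  ext N
  simp [nestedSum, increasingTuples, Subsingleton.strictMono]

theorem nestedSum_succ (w : Fin (r + 1) → ℕ → R) :
    nestedSum w = partialSum (w (Fin.last r) * nestedSum (Fin.init w)) := by
  ext N
  rw [nestedSum, sum_eq_sum_sum_snoc mem_increasingTuples_succ, partialSum_apply]
  simp [nestedSum, Fin.prod_univ_castSucc, mul_sum, mul_comm, Fin.init]

theorem sum_weakLastTuples (w : Fin (r + 1) → ℕ → R) (N : ℕ) :
    ∑ n ∈ weakLastTuples r N, ∏ i, w i (n i) =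
      ∑ m ∈ Ico 1 N, w (Fin.last r) m * nestedSum (Fin.init w) (m + 1) := by
  rw [sum_eq_sum_sum_snoc (u := fun m ↦ increasingTuples r (m + 1)) mem_weakLastTuples]
  simp [nestedSum, Fin.prod_univ_castSucc, mul_sum, mul_comm, Fin.init]

end NestedSums

section HarmonicOperators

theorem lie_mul {A : Type*} [Ring A] (a b c : A) : ⁅a, b * c⁆ = ⁅a, b⁆ * c + b * ⁅a, c⁆ := by
  simp only [Ring.lie_def]
  noncomm_ring

/-- The sequence `n ↦ 1 / n ^ k`, with the junk value `1 / 0 = 0` at `n = 0` for positive `k`. -/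
def invPow (k n : ℕ) : ℚ := ((n : ℚ) ^ k)⁻¹

/-- The operator `I_k : f ↦ (N ↦ ∑_{0<m<N} f m / m ^ k)`, which appends the exponent `k` to a
truncated multiple zeta sum. -/
def sumDivPow (k : ℕ) : Module.End ℚ (ℕ → ℚ) := partialSum * LinearMap.mulLeft ℚ (invPow k)

/-- The operator `M_a` of multiplication by the truncated zeta value `∑_{0<m<N} 1 / m ^ a`. -/
def mulZeta (a : ℕ) : Module.End ℚ (ℕ → ℚ) := LinearMap.mulLeft ℚ (sumDivPow a 1)

/-- The operator `C : f ↦ (N ↦ ∑_{0<m<N} f m / (N - m))`. -/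
def convInv : Module.End ℚ (ℕ → ℚ) := convolve (invPow 1)

theorem invPow_zero : invPow 0 = 1 := by
  ext n
  simp [invPow]

theorem invPow_add (a k : ℕ) : invPow (a + k) = invPow a * invPow k := by
  ext n
  simp only [invPow, pow_add, mul_inv, Pi.mul_apply]

theorem sumDivPow_apply (k : ℕ) (f : ℕ → ℚ) : sumDivPow k f = partialSum (invPow k * f) := rfl

theorem sumDivPow_zero : sumDivPow 0 = partialSum := by
  refine LinearMap.ext fun f ↦ ?_
  rw [sumDivPow_apply, invPow_zero, one_mul]

theorem sumDivPow_add (a k : ℕ) :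
    sumDivPow (a + k) = sumDivPow a * LinearMap.mulLeft ℚ (invPow k) := by
  refine LinearMap.ext fun f ↦ ?_
  rw [Module.End.mul_apply, sumDivPow_apply, sumDivPow_apply, invPow_add, mul_assoc,
    LinearMap.mulLeft_apply]

theorem convInv_apply (f : ℕ → ℚ) (N : ℕ) :
    convInv f N = ∑ m ∈ Ico 1 N, ((N : ℚ) - m)⁻¹ * f m := by
  rw [convInv, convolve_apply]
  refine sum_congr rfl fun m hm ↦ ?_
  rw [invPow, pow_one, Nat.cast_sub (mem_Ico.mp hm).2.le]

theorem mulZeta_apply_one (a : ℕ) : mulZeta a 1 = sumDivPow a 1 := by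
  rw [mulZeta, LinearMap.mulLeft_apply, mul_one]

theorem convInv_apply_one : convInv 1 = sumDivPow 1 1 := by
  rw [convInv, convolve_comm, convolve_one, sumDivPow_apply, mul_one]

theorem lie_mulZeta_sumDivPow (a k : ℕ) :
    ⁅mulZeta a, sumDivPow k⁆ = sumDivPow a * sumDivPow k + sumDivPow (a + k) := by
  refine LinearMap.ext fun f ↦ ?_
  have stuffle := partialSum_mul_partialSum (invPow a) (invPow k * f)
  simp only [Ring.lie_def, LinearMap.sub_apply, LinearMap.add_apply, Module.End.mul_apply, mulZeta,
    LinearMap.mulLeft_apply, sumDivPow_apply, mul_one, invPow_add, stuffle, mul_assoc,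
    mul_left_comm (partialSum _)]
  abel

/-- The partial fraction expansion `1 / (m (N - m)) = (1 / m + 1 / (N - m)) / N`. -/
theorem lie_convInv_mulLeft :
    ⁅convInv, LinearMap.mulLeft ℚ (invPow 1)⁆ =
      LinearMap.mulLeft ℚ (invPow 1) * sumDivPow 1 := by
  refine LinearMap.ext fun f ↦ funext fun N ↦ ?_
  simp only [Ring.lie_def, LinearMap.sub_apply, Module.End.mul_apply, LinearMap.mulLeft_apply,
    Pi.sub_apply, Pi.mul_apply, convInv_apply, sumDivPow_apply, partialSum_apply, mul_sum,
    ← sum_sub_distrib, invPow, pow_one]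
  refine sum_congr rfl fun m hm ↦ ?_
  obtain ⟨hm_pos, hmN⟩ := mem_Ico.mp hm
  have hm_ne : (m : ℚ) ≠ 0 := by positivity
  have hN_ne : (N : ℚ) ≠ 0 := by norm_cast; omega
  have hsub_ne : (N : ℚ) - m ≠ 0 := sub_ne_zero.mpr (by exact_mod_cast hmN.ne')
  field_simp

theorem lie_convInv_sumDivPow (k : ℕ) :
    ⁅convInv, sumDivPow k⁆ = ∑ i ∈ range k, sumDivPow (i + 1) * sumDivPow (k - i) := by
  induction k with
  | zero =>
    rw [range_zero, sum_empty, sumDivPow_zero, ← convolve_one, Ring.lie_def, sub_eq_zero]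
    exact commute_convolve _ _
  | succ k ih =>
    rw [sumDivPow_add k, lie_mul, ih, lie_convInv_mulLeft, sum_range_succ, sum_mul, ← mul_assoc,
      ← sumDivPow_add, Nat.add_sub_cancel_left]
    congr 1
    refine sum_congr rfl fun i hi ↦ ?_
    rw [Nat.sub_add_comm (mem_range.mp hi).le, sumDivPow_add (k - i), mul_assoc]

end HarmonicOperators

section TruncatedSums

theorem truncMZV_eq_nestedSum {r : ℕ} {ks : List ℕ} (hr : ks.length = r) :
    (truncMZV · ks) = nestedSum fun i : Fin r ↦ invPow ks[i] := by
  subst hr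
  ext N
  rw [nestedSum, ← sum_ite_val_comp_mem (N := N)
    fun n hn i ↦ (mem_Ico.mp ((mem_increasingTuples.mp hn).1 i)).2]
  refine sum_congr rfl fun n _ ↦ if_congr ?_ (by simp [invPow]) rfl
  simp [mem_increasingTuples, StrictMono, Nat.one_le_iff_ne_zero, Nat.pos_iff_ne_zero, and_comm]

theorem truncMZV_nil : (truncMZV · []) = 1 := by
  rw [truncMZV_eq_nestedSum rfl, nestedSum_zero]

theorem truncMZV_append_singleton (ks : List ℕ) (k : ℕ) :
    (truncMZV · (ks ++ [k])) = sumDivPow k (truncMZV · ks) := by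
  rw [truncMZV_eq_nestedSum (r := ks.length + 1) (by simp), truncMZV_eq_nestedSum rfl,
    nestedSum_succ, sumDivPow_apply]
  simp [Fin.init_def]

theorem truncMZV_eq_prod (ks : List ℕ) :
    (truncMZV · ks) = (ks.reverse.map sumDivPow).prod 1 := by
  induction ks using List.reverseRecOn with
  | nil => exact truncMZV_nil
  | append_singleton ks k ih => simp [truncMZV_append_singleton, ih]

/-- The factor at position `i`, as a function of the summation variable, of the summands of
`truncFlat N c`. Position `0` takes precedence, so this is the intended weight only for `0 < c`. -/
def flatWeight (N c : ℕ) (i : Fin (c + 2)) (m : ℕ) : ℚ :=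
  if (i : ℕ) = 0 then 1 / (m : ℚ) ^ 3
  else if (i : ℕ) = c then 1 / ((N : ℚ) - m)
  else 1 / (m : ℚ) ^ 2

theorem truncFlat_eq_sum_weakLastTuples (N c : ℕ) :
    truncFlat N c = ∑ n ∈ weakLastTuples (c + 1) N, ∏ i, flatWeight N c i (n i) := by
  have lt_of_mem : ∀ n ∈ weakLastTuples (c + 1) N, ∀ i, n i < N := fun n hn i ↦
    (mem_Ico.mp (Fintype.mem_piFinset.mp (mem_filter.mp hn).1 i)).2
  rw [← sum_ite_val_comp_mem lt_of_mem]
  refine sum_congr rfl fun n _ ↦ if_congr ?_ rfl rfl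
  rw [weakLastTuples, mem_filter, strictMono_init_and_le_last_iff]
  simp only [Fintype.mem_piFinset, mem_Ico]
  simp [Nat.one_le_iff_ne_zero, Nat.pos_iff_ne_zero, and_assoc, and_comm]

theorem lie_mulZeta_convInv_apply (a : ℕ) (f : ℕ → ℚ) (N : ℕ) :
    ⁅mulZeta a, convInv⁆ f N =
      ∑ l ∈ Ico 1 N, invPow a l * ∑ k ∈ Ico 1 (l + 1), ((N : ℚ) - k)⁻¹ * f k := by
  simp only [Ring.lie_def, LinearMap.sub_apply, Module.End.mul_apply, mulZeta,
    LinearMap.mulLeft_apply, Pi.sub_apply, Pi.mul_apply, convInv_apply, sumDivPow_apply, mul_one,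
    partialSum_apply]
  simp_rw [mul_sum]
  rw [sum_comm' (t' := Ico 1 N) (s' := fun k ↦ Ico k N) (by intro l k; simp only [mem_Ico]; omega),
    ← sum_sub_distrib]
  refine sum_congr rfl fun k hk ↦ ?_
  obtain ⟨hk_pos, hkN⟩ := mem_Ico.mp hk
  rw [← sum_mul, ← sum_Ico_consecutive _ hk_pos hkN.le]
  ring

theorem truncFlat_succ (N d : ℕ) :
    truncFlat N (d + 1) =
      ⁅mulZeta 2, convInv⁆ (truncMZV · ([3] ++ List.replicate d 2)) N := by
  have init_init_flatWeight : Fin.init (Fin.init (flatWeight N (d + 1))) =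
      fun i : Fin (d + 1) ↦ invPow ([3] ++ List.replicate d 2)[i] := by
    ext i m
    refine Fin.cases ?_ (fun i ↦ ?_) i <;> simp [Fin.init, flatWeight, invPow, i.prop.ne]
  rw [lie_mulZeta_convInv_apply, truncFlat_eq_sum_weakLastTuples, sum_weakLastTuples,
    nestedSum_succ, init_init_flatWeight, ← truncMZV_eq_nestedSum (by simp)]
  simp [partialSum_apply, flatWeight, invPow, Fin.init]

end TruncatedSums

section HoffmanOperator

attribute [local instance] LieRing.ofAssociativeRing

/-- The operator `E = [M_2, C] + I_2 I_1`, whose value at `∑_{0<n₁<⋯<n_c<N} 1/(n₁³ n₂²⋯n_c²)` is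
the left-hand side of the level-`N` Hoffman identity. -/
def hoffmanOp : Module.End ℚ (ℕ → ℚ) := ⁅mulZeta 2, convInv⁆ + sumDivPow 2 * sumDivPow 1

theorem lie_hoffmanOp (k : ℕ) :
    ⁅hoffmanOp, sumDivPow k⁆ =
      ⁅mulZeta 2, ⁅convInv, sumDivPow k⁆⁆ - ⁅convInv, ⁅mulZeta 2, sumDivPow k⁆⁆ +
        ⁅sumDivPow 2 * sumDivPow 1, sumDivPow k⁆ := by
  rw [hoffmanOp, add_lie, lie_lie]

theorem commute_hoffmanOp_sumDivPow_two : Commute hoffmanOp (sumDivPow 2) := by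
  rw [commute_iff_lie_eq, lie_hoffmanOp]
  simp only [lie_mulZeta_sumDivPow, lie_convInv_sumDivPow, sum_range_succ, range_zero, sum_empty,
    zero_add, lie_add, lie_mul, Nat.reduceAdd, Nat.reduceSub, Ring.lie_def (_ * _)]
  noncomm_ring

theorem lie_hoffmanOp_sumDivPow_three :
    ⁅hoffmanOp, sumDivPow 3⁆ = sumDivPow 2 ^ 3 + sumDivPow 3 ^ 2 := by
  rw [lie_hoffmanOp]
  simp only [lie_mulZeta_sumDivPow, lie_convInv_sumDivPow, sum_range_succ, range_zero, sum_empty,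
    zero_add, lie_add, lie_mul, Nat.reduceAdd, Nat.reduceSub, Ring.lie_def (_ * _)]
  noncomm_ring

theorem hoffmanOp_apply_one : hoffmanOp 1 = sumDivPow 3 1 := by
  have mulZeta_eq : mulZeta 2 (sumDivPow 1 1) =
      sumDivPow 1 (sumDivPow 2 1) + (sumDivPow 2 (sumDivPow 1 1) + sumDivPow 3 1) := by
    simpa [Ring.lie_def, sub_eq_iff_eq_add', mulZeta_apply_one] using
      LinearMap.congr_fun (lie_mulZeta_sumDivPow 2 1) 1
  have convInv_eq : convInv (sumDivPow 2 1) =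
      sumDivPow 2 (sumDivPow 1 1) +
        (sumDivPow 1 (sumDivPow 2 1) + sumDivPow 2 (sumDivPow 1 1)) := by
    simpa [Ring.lie_def, sub_eq_iff_eq_add', convInv_apply_one, sum_range_succ] using
      LinearMap.congr_fun (lie_convInv_sumDivPow 2) 1
  simp only [hoffmanOp, Ring.lie_def, LinearMap.add_apply, LinearMap.sub_apply,
    Module.End.mul_apply, mulZeta_apply_one, convInv_apply_one, mulZeta_eq, convInv_eq]
  abel

theorem hoffmanOp_truncMZV (d : ℕ) :
    hoffmanOp (truncMZV · ([3] ++ List.replicate d 2)) =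
      (truncMZV · (List.replicate (d + 3) 2)) +
        2 • (truncMZV · ([3, 3] ++ List.replicate d 2)) := by
  have base : hoffmanOp (sumDivPow 3 1) =
      sumDivPow 3 (sumDivPow 3 1) + ((sumDivPow 2 ^ 3) 1 + sumDivPow 3 (sumDivPow 3 1)) := by
    simpa [Ring.lie_def, sub_eq_iff_eq_add', hoffmanOp_apply_one, sq (sumDivPow 3)] using
      LinearMap.congr_fun lie_hoffmanOp_sumDivPow_three 1
  calc hoffmanOp (truncMZV · ([3] ++ List.replicate d 2))
      = (hoffmanOp * sumDivPow 2 ^ d) (sumDivPow 3 1) := by simp [truncMZV_eq_prod]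
    _ = (sumDivPow 2 ^ d) (hoffmanOp (sumDivPow 3 1)) := by
      rw [(commute_hoffmanOp_sumDivPow_two.pow_right d).eq, Module.End.mul_apply]
    _ = (sumDivPow 2 ^ (d + 3)) 1 + 2 • (sumDivPow 2 ^ d) (sumDivPow 3 (sumDivPow 3 1)) := by
      simp only [base, pow_add, map_add, Module.End.mul_apply]
      abel
    _ = _ := by simp [truncMZV_eq_prod]

end HoffmanOperator

/-- The level-`N` (multiple zeta diamond value) form of Hoffman's identity:
for all positive `N` and `c`,
`∑_{0<n₁<⋯<n_{c+2}<N} 1/(n₁³ n₂²⋯n_c² n_{c+1} n_{c+2}²)`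
`+ ∑_{0<n₁<⋯<n_c<n_{c+1}≤n_{c+2}<N} 1/(n₁³ n₂²⋯n_c² (N−n_{c+1}) n_{c+2}²)`
`= ∑_{0<n₁<⋯<n_{c+2}<N} 1/(n₁²⋯n_{c+2}²) + 2 ∑_{0<n₁<⋯<n_{c+1}<N} 1/(n₁³ n₂³ n₃²⋯n_{c+1}²)`. -/
theorem diamond_hoffman_levelN (N c : ℕ) (hN : 0 < N) (hc : 0 < c) :
    truncMZV N ([3] ++ List.replicate (c - 1) 2 ++ [1, 2]) + truncFlat N c
      = truncMZV N (List.replicate (c + 2) 2)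
        + 2 * truncMZV N ([3, 3] ++ List.replicate (c - 1) 2) := by
  obtain ⟨d, rfl⟩ := Nat.exists_eq_succ_of_ne_zero hc.ne'
  have append_eq : (truncMZV · ([3] ++ List.replicate d 2 ++ [1, 2])) =
      (sumDivPow 2 * sumDivPow 1) (truncMZV · ([3] ++ List.replicate d 2)) := by
    simp [truncMZV_eq_prod]
  calc truncMZV N ([3] ++ List.replicate d 2 ++ [1, 2]) + truncFlat N (d + 1)
      = hoffmanOp (truncMZV · ([3] ++ List.replicate d 2)) N := by
        rw [hoffmanOp, truncFlat_succ, add_comm, LinearMap.add_apply, Pi.add_apply, ← append_eq]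
    _ = truncMZV N (List.replicate (d + 3) 2) +
          2 * truncMZV N ([3, 3] ++ List.replicate d 2) := by
        rw [hoffmanOp_truncMZV]
        simp
end
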